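/- arXiv:cs/9912013 — 5 statements merged into one kernel-verified Lean document; each statement's English description precedes it below -/
import Mathlib

section
/- For every real constant c with c > (2/π)·arcsin(1/3) and every n₀, there exists a finite set S of n ≥ n₀ points in ℝ² such that for any three subsets S₁, S₂, S₃ of S forming a non-transversal family (no line cuts all three), at least one of the subsets has fewer than c·n points. (Equivalently, P(2) ≥ π/(2·arcsin(1/3)) ≈ 4.622.) -/
noncomputable section

/-- The line given as the zero set of the nonconstant affine functional `f`
cuts a point set `S` in ℝ² if both open halfplanes bounded by it contain a point of `S`. -/
def Cuts (f : (Fin 2 → ℝ) →ᵃ[ℝ] ℝ) (S : Finset (Fin 2 → ℝ)) : Prop :=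
  (∃ x ∈ S, 0 < f x) ∧ (∃ x ∈ S, f x < 0)

section ShortTour

open InnerProductGeometry Real

lemma sq_diff_mul_le {p p' m m' T e f : ℝ} (hp : 0 ≤ p) (hp' : 0 ≤ p') (hm : 0 ≤ m)
    (hm' : 0 ≤ m') (h : p ^ 2 + m ^ 2 = 4) (h' : p' ^ 2 + m' ^ 2 = 4)
    (hT : (p - p') ^ 2 ≤ T) (he : e ≤ (p + p') ^ 2) (hf : (m + m') ^ 2 ≤ f)
    (hX : 0 < (p - p') ^ 2 - (m - m') ^ 2) :
    0 < f ∧ (p - p') ^ 2 - (m - m') ^ 2 ≤ T * (1 - e / f) := by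
  have hM : 0 < (m + m') ^ 2 := by
    rcases (add_nonneg hm hm').eq_or_lt with h0 | h0
    · have h1 : m = 0 := by linarith
      have h2 : m' = 0 := by linarith
      subst h1 h2
      have : p = p' := by nlinarith
      subst this
      simp at hX
    · positivity
  have hf0 : 0 < f := hM.trans_le hf
  refine ⟨hf0, ?_⟩
  have key : ((p - p') ^ 2 - (m - m') ^ 2) * (m + m') ^ 2 =
      (p - p') ^ 2 * ((m + m') ^ 2 - (p + p') ^ 2) := by
    have : (p - p') * (p + p') = - ((m - m') * (m + m')) := by linarith
    have := congrArg (· ^ 2) this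
    linarith
  have hpos : 0 < (m + m') ^ 2 - (p + p') ^ 2 := by
    have h1 : 0 < (p - p') ^ 2 * ((m + m') ^ 2 - (p + p') ^ 2) := key ▸ mul_pos hX hM
    exact pos_of_mul_pos_right h1 (sq_nonneg _)
  have hT0 : 0 ≤ T := (sq_nonneg _).trans hT
  calc (p - p') ^ 2 - (m - m') ^ 2
      = (p - p') ^ 2 * (1 - (p + p') ^ 2 / (m + m') ^ 2) := by
        rw [one_sub_div hM.ne', ← mul_div_assoc, ← key, mul_div_cancel_right₀ _ hM.ne']
    _ ≤ T * (1 - (p + p') ^ 2 / (m + m') ^ 2) := by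
        apply mul_le_mul_of_nonneg_right hT
        rw [sub_nonneg, div_le_one hM]
        linarith
    _ ≤ T * (1 - e / f) := by gcongr

lemma nesbitt {x y z : ℝ} (hx : 0 ≤ x) (hy : 0 ≤ y) (hz : 0 ≤ z) (hxy : 0 < x + y)
    (hyz : 0 < y + z) (hzx : 0 < z + x) :
    3 / 2 ≤ x / (y + z) + y / (z + x) + z / (x + y) := by
  rw [div_add_div _ _ hyz.ne' hzx.ne', div_add_div _ _ (by positivity) hxy.ne',
    div_le_div_iff₀ (by norm_num) (by positivity)]
  nlinarith [mul_nonneg (add_nonneg hx hy) (sq_nonneg (x - y)),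
    mul_nonneg (add_nonneg hy hz) (sq_nonneg (y - z)),
    mul_nonneg (add_nonneg hz hx) (sq_nonneg (z - x))]

/-- A Ptolemy-type inequality for four unit vectors; equality holds when they sum to zero. -/
lemma sum_norm_sub_mul_norm_sub_le {E : Type*} [NormedAddCommGroup E] [InnerProductSpace ℝ E]
    {a b c d : E} (ha : ‖a‖ = 1) (hb : ‖b‖ = 1) (hc : ‖c‖ = 1) (hd : ‖d‖ = 1) :
    ‖a - b‖ * ‖c - d‖ + ‖a - c‖ * ‖b - d‖ + ‖a - d‖ * ‖b - c‖ ≤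
      4 + (‖a + b‖ * ‖c + d‖ + ‖a + c‖ * ‖b + d‖ + ‖a + d‖ * ‖b + c‖) := by
  have para : ∀ {u v : E}, ‖u‖ = 1 → ‖v‖ = 1 → ‖u + v‖ ^ 2 + ‖u - v‖ ^ 2 = 4 := by
    intro u v hu hv
    have := parallelogram_law_with_norm ℝ u v
    rw [hu, hv] at this
    linarith
  have tri : ∀ u v : E, (‖u‖ - ‖v‖) ^ 2 ≤ ‖u + v‖ ^ 2 := by
    intro u v
    have := abs_norm_sub_norm_le u (-v)
    rw [norm_neg, sub_neg_eq_add] at this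
    exact sq_le_sq' (by linarith [neg_abs_le (‖u‖ - ‖v‖)]) (by linarith [le_abs_self (‖u‖ - ‖v‖)])
  have tri' : ∀ u v : E, ‖u - v‖ ^ 2 ≤ (‖u‖ + ‖v‖) ^ 2 := by
    intro u v
    gcongr
    exact norm_sub_le u v
  have conv : ∀ u v : E, (‖u‖ + ‖v‖) ^ 2 ≤ ‖u + v‖ ^ 2 + ‖u - v‖ ^ 2 := by
    intro u v
    have := parallelogram_law_with_norm ℝ u v
    nlinarith [sq_nonneg (‖u‖ - ‖v‖)]
  have hS : ‖a + b‖ ^ 2 + ‖c + d‖ ^ 2 + ‖a + c‖ ^ 2 + ‖b + d‖ ^ 2 + ‖a + d‖ ^ 2 + ‖b + c‖ ^ 2 =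
      ‖a + b + c + d‖ ^ 2 + 8 := by
    simp only [norm_add_sq_real, inner_add_left, ha, hb, hc, hd]
    ring
  have e1 : a + c + (b + d) = a + b + c + d := by abel
  have e2 : a + d + (b + c) = a + b + c + d := by abel
  have e0 : a + b + (c + d) = a + b + c + d := by abel
  have t1 := tri (a + b) (c + d)
  have t2 := tri (a + c) (b + d)
  have t3 := tri (a + d) (b + c)
  rw [e0] at t1
  rw [e1] at t2
  rw [e2] at t3
  have c1 := conv (a - b) (c - d)
  have c2 := conv (a - c) (b - d)
  have c3 := conv (a - d) (b - c)
  rw [show a - b + (c - d) = (a + c) - (b + d) by abel,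
    show a - b - (c - d) = (a + d) - (b + c) by abel] at c1
  rw [show a - c + (b - d) = (a + b) - (c + d) by abel,
    show a - c - (b - d) = (a + d) - (b + c) by abel] at c2
  rw [show a - d + (b - c) = (a + b) - (c + d) by abel,
    show a - d - (b - c) = (a + c) - (b + d) by abel] at c3
  have k1 := sq_diff_mul_le (norm_nonneg _) (norm_nonneg _) (norm_nonneg _) (norm_nonneg _)
    (para ha hb) (para hc hd) t1 (tri' _ _) c1
  have k2 := sq_diff_mul_le (norm_nonneg _) (norm_nonneg _) (norm_nonneg _) (norm_nonneg _)
    (para ha hc) (para hb hd) t2 (tri' _ _) c2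
  have k3 := sq_diff_mul_le (norm_nonneg _) (norm_nonneg _) (norm_nonneg _) (norm_nonneg _)
    (para ha hd) (para hb hc) t3 (tri' _ _) c3
  have q1 := para ha hb
  have q2 := para hc hd
  have q3 := para ha hc
  have q4 := para hb hd
  have q5 := para ha hd
  have q6 := para hb hc
  have hT0 : 0 ≤ ‖a + b + c + d‖ ^ 2 := sq_nonneg _
  have n1 : 0 ≤ ‖a + b - (c + d)‖ ^ 2 := sq_nonneg _
  have n2 : 0 ≤ ‖a + c - (b + d)‖ ^ 2 := sq_nonneg _
  have n3 : 0 ≤ ‖a + d - (b + c)‖ ^ 2 := sq_nonneg _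
  generalize ‖a + b + c + d‖ ^ 2 = T at *
  generalize ‖a + b - (c + d)‖ ^ 2 = x at *
  generalize ‖a + c - (b + d)‖ ^ 2 = y at *
  generalize ‖a + d - (b + c)‖ ^ 2 = z at *
  suffices h : ((‖a + b‖ - ‖c + d‖) ^ 2 - (‖a - b‖ - ‖c - d‖) ^ 2) +
      ((‖a + c‖ - ‖b + d‖) ^ 2 - (‖a - c‖ - ‖b - d‖) ^ 2) +
      ((‖a + d‖ - ‖b + c‖) ^ 2 - (‖a - d‖ - ‖b - c‖) ^ 2) ≤ 2 * T by linarith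
  have u1 := sq_nonneg (‖a - b‖ - ‖c - d‖)
  have u2 := sq_nonneg (‖a - c‖ - ‖b - d‖)
  have u3 := sq_nonneg (‖a - d‖ - ‖b - c‖)
  rcases le_or_gt ((‖a + b‖ - ‖c + d‖) ^ 2 - (‖a - b‖ - ‖c - d‖) ^ 2) 0 with h1 | h1
  · linarith
  rcases le_or_gt ((‖a + c‖ - ‖b + d‖) ^ 2 - (‖a - c‖ - ‖b - d‖) ^ 2) 0 with h2 | h2
  · linarith
  rcases le_or_gt ((‖a + d‖ - ‖b + c‖) ^ 2 - (‖a - d‖ - ‖b - c‖) ^ 2) 0 with h3 | h3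
  · linarith
  obtain ⟨f1, g1⟩ := k1 h1
  obtain ⟨f2, g2⟩ := k2 h2
  obtain ⟨f3, g3⟩ := k3 h3
  have nes := nesbitt n1 n2 n3 f3 f1 (by linarith)
  rw [add_comm z x] at nes
  nlinarith [mul_le_mul_of_nonneg_left nes hT0]

lemma cos_half_angle {E : Type*} [NormedAddCommGroup E] [InnerProductSpace ℝ E]
    {a b : E} (ha : ‖a‖ = 1) (hb : ‖b‖ = 1) : ‖a + b‖ = 2 * cos (angle a b / 2) := by
  have h0 : 0 ≤ cos (angle a b / 2) :=
    cos_nonneg_of_mem_Icc ⟨by linarith [angle_nonneg a b, pi_pos], by linarith [angle_le_pi a b]⟩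
  rw [← sq_eq_sq₀ (norm_nonneg _) (by positivity), norm_add_sq_real, ha, hb, mul_pow, cos_sq,
    mul_div_cancel₀ _ (two_ne_zero' ℝ), cos_angle, ha, hb]
  ring

lemma sin_half_angle {E : Type*} [NormedAddCommGroup E] [InnerProductSpace ℝ E]
    {a b : E} (ha : ‖a‖ = 1) (hb : ‖b‖ = 1) : ‖a - b‖ = 2 * sin (angle a b / 2) := by
  have h0 : 0 ≤ sin (angle a b / 2) :=
    sin_nonneg_of_mem_Icc ⟨by linarith [angle_nonneg a b], by linarith [angle_le_pi a b, pi_pos]⟩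
  rw [← sq_eq_sq₀ (norm_nonneg _) (by positivity), norm_sub_sq_real, ha, hb, mul_pow, sin_sq,
    cos_sq, mul_div_cancel₀ _ (two_ne_zero' ℝ), cos_angle, ha, hb]
  ring

lemma one_add_sum_cos_nonneg {E : Type*} [NormedAddCommGroup E] [InnerProductSpace ℝ E]
    {a b c d : E} (ha : ‖a‖ = 1) (hb : ‖b‖ = 1) (hc : ‖c‖ = 1) (hd : ‖d‖ = 1) :
    0 ≤ 1 + cos ((angle a b + angle c d) / 2) + cos ((angle a c + angle b d) / 2) +
      cos ((angle a d + angle b c) / 2) := by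
  have h := sum_norm_sub_mul_norm_sub_le ha hb hc hd
  rw [cos_half_angle ha hb, cos_half_angle hc hd, cos_half_angle ha hc, cos_half_angle hb hd,
    cos_half_angle ha hd, cos_half_angle hb hc, sin_half_angle ha hb, sin_half_angle hc hd,
    sin_half_angle ha hc, sin_half_angle hb hd, sin_half_angle ha hd, sin_half_angle hb hc] at h
  simp only [add_div, cos_add]
  linarith

lemma add_le_of_sorted {α β γ : ℝ} (hαβ : α ≤ β) (hβγ : β ≤ γ) (hγ : γ ≤ π)
    (h : 0 ≤ 1 + cos α + cos β + cos γ) : α + β ≤ 2 * arccos (-1 / 3) := by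
  by_contra! hlt
  set τ := arccos (-1 / 3) with hτ
  have hcos : cos τ = -1 / 3 := cos_arccos (by norm_num) (by norm_num)
  have hsin0 : 0 ≤ sin τ := sin_nonneg_of_nonneg_of_le_pi (arccos_nonneg _) (arccos_le_pi _)
  have hsin : sin τ ^ 2 = 8 / 9 := by
    rw [sin_sq, hcos]; norm_num
  have hτπ : π / 2 ≤ τ := by
    rw [hτ, neg_div, arccos_neg]
    have := arccos_le_pi_div_two.2 (show (0 : ℝ) ≤ 1 / 3 by norm_num)
    linarith
  have h1 : cos γ ≤ cos β := cos_le_cos_of_nonneg_of_le_pi (by linarith) hγ hβγ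
  have h2 : cos α < cos (2 * τ - β) :=
    cos_lt_cos_of_nonneg_of_le_pi (by linarith) (by linarith) (by linarith)
  obtain ⟨t, rfl⟩ : ∃ t, β = τ + t := ⟨β - τ, by ring⟩
  rw [show 2 * τ - (τ + t) = τ - t by ring, cos_sub, hcos] at h2
  rw [cos_add, hcos] at h h1
  have ht0 : 0 < t := by linarith
  have hs : 0 ≤ sin t := sin_nonneg_of_nonneg_of_le_pi ht0.le (by linarith)
  have hc : 1 / 3 ≤ cos t := by
    have := cos_le_cos_of_nonneg_of_le_pi ht0.le (y := π - τ) (by linarith) (by linarith)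
    rw [cos_pi_sub, hcos] at this
    linarith
  have hc1 := cos_le_one t
  have h4 : cos t + sin τ * sin t < 1 := by linarith
  have h5 : (sin τ * sin t) ^ 2 < (1 - cos t) ^ 2 := by
    have : 0 ≤ sin τ * sin t := mul_nonneg hsin0 hs
    gcongr
    linarith
  rw [mul_pow, hsin, sin_sq] at h5
  nlinarith

/-- Four points on a sphere have a closed tour no longer than that of a regular tetrahedron. -/
lemma exists_short_tour {E : Type*} [NormedAddCommGroup E] [InnerProductSpace ℝ E]
    {a b c d : E} (ha : ‖a‖ = 1) (hb : ‖b‖ = 1) (hc : ‖c‖ = 1) (hd : ‖d‖ = 1) :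
    angle a c + angle c b + angle b d + angle d a ≤ 4 * arccos (-1 / 3) ∨
    angle a b + angle b c + angle c d + angle d a ≤ 4 * arccos (-1 / 3) ∨
    angle a b + angle b d + angle d c + angle c a ≤ 4 * arccos (-1 / 3) := by
  have h := one_add_sum_cos_nonneg ha hb hc hd
  rw [angle_comm c b, angle_comm d a, angle_comm d c, angle_comm c a]
  have key : ∀ {α β γ : ℝ}, α ≤ π → β ≤ π → γ ≤ π →
      0 ≤ 1 + cos α + cos β + cos γ → β + γ ≤ 2 * arccos (-1 / 3) ∨
      α + γ ≤ 2 * arccos (-1 / 3) ∨ α + β ≤ 2 * arccos (-1 / 3) := by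
    intro α β γ hα' hβ' hγ' h
    rcases le_total α β with h1 | h1 <;> rcases le_total β γ with h2 | h2 <;>
      rcases le_total α γ with h3 | h3
    · have := add_le_of_sorted h1 h2 hγ' h; grind
    · have := add_le_of_sorted h1 h2 hγ' h; grind
    · have := add_le_of_sorted h3 h2 hβ' (by linarith); grind
    · have := add_le_of_sorted h3 h1 hβ' (by linarith); grind
    · have := add_le_of_sorted h1 h3 hγ' (by linarith); grind
    · have := add_le_of_sorted h2 h3 hα' (by linarith); grind
    · have := add_le_of_sorted h2 h1 hα' (by linarith); grind
    · have := add_le_of_sorted h2 h1 hα' (by linarith); grind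
  have m := fun u v : E => angle_le_pi u v
  rcases key (by linarith [m a b, m c d]) (by linarith [m a c, m b d])
    (by linarith [m a d, m b c]) h with h | h | h
  · left; linarith
  · right; left; linarith
  · right; right; linarith

end ShortTour

section RotationInvariant

open InnerProductGeometry Real MeasureTheory
open scoped RealInnerProductSpace

lemma eq_div_mul_of_additive {G : ℝ → ℝ} {L : ℝ} (hL : 0 < L) (h0 : ∀ t, 0 ≤ G t)
    (hadd : ∀ s t, 0 ≤ s → 0 ≤ t → s + t ≤ L → G (s + t) = G s + G t) {t : ℝ}
    (ht : 0 ≤ t) (htL : t ≤ L) : G t = t / L * G L := by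
  have hmono : ∀ s t, 0 ≤ s → s ≤ t → t ≤ L → G s ≤ G t := by
    intro s t hs hst ht
    have := hadd s (t - s) hs (by linarith) (by linarith)
    rw [add_sub_cancel] at this
    linarith [h0 (t - s)]
  have hzero : G 0 = 0 := by
    have := hadd 0 0 le_rfl le_rfl (by linarith)
    rw [add_zero] at this
    linarith
  have hmul : ∀ (k : ℕ) (x : ℝ), 0 ≤ x → k * x ≤ L → G (k * x) = k * G x := by
    intro k x hx
    induction k with
    | zero => simp [hzero]
    | succ k ih =>
      intro h
      push_cast at h ⊢
      rw [add_mul, one_mul] at h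
      rw [add_mul, one_mul, hadd _ _ (by positivity) hx h, ih (by linarith)]
      ring
  have hfrac : ∀ n k : ℕ, 0 < n → k ≤ n → G (k * (L / n)) = k / n * G L := by
    intro n k hn hk
    have hn' : (0 : ℝ) < n := by exact_mod_cast hn
    have hk' : (k : ℝ) ≤ n := by exact_mod_cast hk
    have h1 := hmul n (L / n) (by positivity) (mul_div_cancel₀ _ hn'.ne').le
    rw [mul_div_cancel₀ _ hn'.ne'] at h1
    rw [hmul k (L / n) (by positivity), h1]
    · field_simp
    · calc k * (L / n) ≤ n * (L / n) := by gcongr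
        _ = L := mul_div_cancel₀ _ hn'.ne'
  have hbound : ∀ n : ℕ, 0 < n → |G t - t / L * G L| ≤ G L / n := by
    intro n hn
    have hn' : (0 : ℝ) < n := by exact_mod_cast hn
    have hx : 0 ≤ n * (t / L) := by positivity
    have hk1 := Nat.floor_le hx
    have hk2 := Nat.lt_floor_add_one (n * (t / L))
    set k := ⌊n * (t / L)⌋₊
    have htL' : t / L ≤ 1 := (div_le_one hL).2 htL
    have hkn : k ≤ n := by
      have : (k : ℝ) ≤ n := hk1.trans (by nlinarith)
      exact_mod_cast this
    have hlow : (k : ℝ) / n ≤ t / L := by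
      rw [div_le_iff₀ hn']; linarith
    have hlow' : k * (L / n) ≤ t := by
      have := mul_le_mul_of_nonneg_right hlow hL.le
      rw [div_mul_cancel₀ _ hL.ne'] at this
      calc k * (L / n) = k / n * L := by ring
        _ ≤ t := this
    have hup : t / L ≤ ((k + 1 : ℕ) : ℝ) / n := by
      rw [le_div_iff₀ hn']; push_cast; linarith
    have g1 : k / n * G L ≤ G t := by
      rw [← hfrac n k hn hkn]
      exact hmono _ _ (by positivity) hlow' htL
    have g2 : G t ≤ ((k + 1 : ℕ) : ℝ) / n * G L := by
      rcases hkn.eq_or_lt with h | h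
      · have : 1 ≤ ((k + 1 : ℕ) : ℝ) / n := by
          rw [le_div_iff₀ hn', h]; push_cast; linarith
        nlinarith [hmono t L ht htL le_rfl, h0 L]
      · rw [← hfrac n (k + 1) hn h]
        have hup' : t ≤ (k + 1 : ℕ) * (L / n) := by
          have := mul_le_mul_of_nonneg_right hup hL.le
          rw [div_mul_cancel₀ _ hL.ne'] at this
          calc t ≤ _ := this
            _ = _ := by ring
        refine hmono _ _ ht hup' ?_
        have : ((k + 1 : ℕ) : ℝ) ≤ n := by exact_mod_cast h
        calc (k + 1 : ℕ) * (L / n) ≤ n * (L / n) := by gcongr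
          _ = L := mul_div_cancel₀ _ hn'.ne'
    have e : ((k + 1 : ℕ) : ℝ) / n * G L = k / n * G L + G L / n := by push_cast; ring
    rw [abs_le]
    constructor
    · have := mul_le_mul_of_nonneg_right hup (h0 L)
      linarith
    · have := mul_le_mul_of_nonneg_right hlow (h0 L)
      linarith
  have hlim : Filter.Tendsto (fun n : ℕ => G L / n) Filter.atTop (nhds 0) :=
    tendsto_const_div_atTop_nhds_zero_nat _
  have := ge_of_tendsto hlim (Filter.eventually_atTop.2 ⟨1, fun n hn => hbound n hn⟩)
  have := abs_nonpos_iff.1 this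
  linarith

lemma measureReal_eq_one_of_ae {X : Type*} [MeasurableSpace X] {μ : Measure X}
    [IsProbabilityMeasure μ] {s : Set X} (h : ∀ᵐ x ∂μ, x ∈ s) : μ.real s = 1 := by
  rw [measureReal_congr (s := s) (t := Set.univ) (Filter.eventuallyEq_univ.2 h), probReal_univ]

variable {E : Type*} [NormedAddCommGroup E] [InnerProductSpace ℝ E]

/-- A measure invariant under linear isometries, with null hyperplanes. -/
structure IsRotationInvariant [MeasurableSpace E] (μ : Measure E) : Prop where
  preserving : ∀ R : E ≃ₗᵢ[ℝ] E, MeasurePreserving R μ μ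
  hyperplane_null : ∀ u : E, u ≠ 0 → μ {x | ⟪u, x⟫ = 0} = 0

lemma reflection_apply_of_unit {z : E} (hz : ‖z‖ = 1) (x : E) :
    (ℝ ∙ z)ᗮ.reflection x = x - (2 * ⟪z, x⟫) • z := by
  rw [Submodule.reflection_orthogonal_apply, Submodule.reflection_singleton_apply, hz]
  simp [mul_smul, two_smul]

/-- The point at angle `s` on the circle through `u` towards `w`. -/
def arcPoint (u w : E) (s : ℝ) : E := cos s • u + sin s • w

lemma norm_arcPoint {u w : E} (hu : ‖u‖ = 1) (hw : ‖w‖ = 1) (huw : ⟪u, w⟫ = 0) (s : ℝ) :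
    ‖arcPoint u w s‖ = 1 := by
  rw [← sq_eq_sq₀ (norm_nonneg _) zero_le_one, arcPoint, norm_add_sq_real, norm_smul, norm_smul,
    hu, hw, inner_smul_left, inner_smul_right, huw]
  simp

lemma exists_isometry_arcPoint {u w : E} (hu : ‖u‖ = 1) (hw : ‖w‖ = 1) (huw : ⟪u, w⟫ = 0)
    (s : ℝ) : ∃ R : E ≃ₗᵢ[ℝ] E, ∀ r, R (arcPoint u w r) = arcPoint u w (s - r) := by
  refine ⟨(ℝ ∙ (arcPoint u w (s / 2 + π / 2)))ᗮ.reflection, fun r => ?_⟩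
  rw [reflection_apply_of_unit (norm_arcPoint hu hw huw _)]
  have huu : ⟪u, u⟫ = 1 := by rw [real_inner_self_eq_norm_sq, hu, one_pow]
  have hww : ⟪w, w⟫ = 1 := by rw [real_inner_self_eq_norm_sq, hw, one_pow]
  have hwu : ⟪w, u⟫ = 0 := by rw [real_inner_comm, huw]
  have e : ⟪arcPoint u w (s / 2 + π / 2), arcPoint u w r⟫ = sin (r - s / 2) := by
    simp only [arcPoint, inner_add_left, inner_add_right, real_inner_smul_left,
      real_inner_smul_right, huu, hww, hwu, huw, cos_add_pi_div_two, sin_add_pi_div_two, sin_sub]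
    ring
  rw [e]
  have hr : r = s / 2 + (r - s / 2) := by ring
  have hsr : s - r = s / 2 - (r - s / 2) := by ring
  rw [hsr]
  nth_rewrite 1 [hr]
  generalize r - s / 2 = q
  generalize s / 2 = p
  simp only [arcPoint, cos_add_pi_div_two, sin_add_pi_div_two]
  simp only [cos_add, sin_add, cos_sub, sin_sub]
  match_scalars
  · linarith
  · linarith

section
variable [MeasurableSpace E] {μ : Measure E}

lemma IsRotationInvariant.ae_inner_ne_zero (hμ : IsRotationInvariant μ) {u : E} (hu : u ≠ 0) :
    ∀ᵐ x ∂μ, ⟪u, x⟫ ≠ 0 := by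
  rw [ae_iff]
  simpa using hμ.hyperplane_null u hu

variable [BorelSpace E]

lemma measurableSet_opposite (u v : E) : MeasurableSet {x : E | ⟪u, x⟫ * ⟪v, x⟫ < 0} :=
  (isOpen_lt (by fun_prop) continuous_const).measurableSet

lemma IsRotationInvariant.opposite_map (hμ : IsRotationInvariant μ) (R : E ≃ₗᵢ[ℝ] E) (u v : E) :
    μ.real {x | ⟪R u, x⟫ * ⟪R v, x⟫ < 0} = μ.real {x | ⟪u, x⟫ * ⟪v, x⟫ < 0} := by
  rw [← (hμ.preserving R).measureReal_preimage (measurableSet_opposite _ _).nullMeasurableSet]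
  simp only [Set.preimage_ofPred_eq, LinearIsometryEquiv.inner_map_map]

/-- A random point lies on opposite sides of the hyperplanes orthogonal to `u` and `v` with
probability proportional to the angle between them. -/
lemma IsRotationInvariant.opposite_eq_angle [IsProbabilityMeasure μ] (hμ : IsRotationInvariant μ)
    {u v : E} (hu : ‖u‖ = 1) (hv : ‖v‖ = 1) :
    μ.real {x | ⟪u, x⟫ * ⟪v, x⟫ < 0} = angle u v / π := by
  have hcos : cos (angle u v) = ⟪u, v⟫ := by rw [cos_angle, hu, hv]; simp
  by_cases hs : sin (angle u v) = 0
  · rcases sin_eq_zero_iff_angle_eq_zero_or_angle_eq_pi.1 hs with h | h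
    · have huv : u = v := by
        rw [h, cos_zero] at hcos
        exact (inner_eq_one_iff_of_norm_eq_one hu hv).1 hcos.symm
      subst huv
      rw [h, zero_div]
      have : {x : E | ⟪u, x⟫ * ⟪u, x⟫ < 0} = ∅ := by
        ext x; simp [mul_self_nonneg]
      rw [this, measureReal_empty]
    · have huv : v = -u := by
        rw [h, cos_pi] at hcos
        have : ⟪u, -v⟫ = 1 := by rw [inner_neg_right]; linarith
        rw [(inner_eq_one_iff_of_norm_eq_one hu (by rw [norm_neg, hv])).1 this, neg_neg]
      subst huv
      rw [h, div_self pi_ne_zero]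
      refine measureReal_eq_one_of_ae ?_
      filter_upwards [hμ.ae_inner_ne_zero (u := u) (by rintro rfl; simp at hu)] with x hx
      simp only [inner_neg_left, mul_neg, Left.neg_neg_iff]
      exact mul_self_pos.2 hx
  set θ := angle u v
  set w : E := (sin θ)⁻¹ • (v - cos θ • u) with hwdef
  have huu : ⟪u, u⟫ = 1 := by rw [real_inner_self_eq_norm_sq, hu, one_pow]
  have huw : ⟪u, w⟫ = 0 := by
    rw [hwdef, real_inner_smul_right, inner_sub_right, real_inner_smul_right, huu, hcos]
    simp
  have hw : ‖w‖ = 1 := by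
    rw [← sq_eq_sq₀ (norm_nonneg _) zero_le_one, hwdef, norm_smul, mul_pow, norm_sub_sq_real,
      norm_smul, hu, hv, real_inner_smul_right, real_inner_comm, ← hcos, norm_inv, norm_eq_abs,
      norm_eq_abs, inv_pow, mul_one, sq_abs, sq_abs]
    field_simp
    linarith [sin_sq_add_cos_sq θ]
  have hvarc : arcPoint u w θ = v := by
    rw [arcPoint, hwdef, smul_smul, mul_inv_cancel₀ hs, one_smul]
    abel
  have h0arc : arcPoint u w 0 = u := by simp [arcPoint]
  set G : ℝ → ℝ := fun t => μ.real {x | ⟪arcPoint u w 0, x⟫ * ⟪arcPoint u w t, x⟫ < 0} with hG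
  have hne : ∀ t, arcPoint u w t ≠ 0 := by
    intro t h
    have := norm_arcPoint hu hw huw t
    simp [h] at this
  have hadd : ∀ s t, 0 ≤ s → 0 ≤ t → s + t ≤ π → G (s + t) = G s + G t := by
    intro s t hs ht hst
    obtain ⟨R, hR⟩ := exists_isometry_arcPoint hu hw huw (s + t)
    have e1 : G t = μ.real {x | ⟪arcPoint u w s, x⟫ * ⟪arcPoint u w (s + t), x⟫ < 0} := by
      rw [← hμ.opposite_map R, hR, hR]
      simp only [hG, sub_self, add_sub_cancel_left, mul_comm]
    have hid : ∀ x, sin (s + t) * ⟪arcPoint u w s, x⟫ =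
        sin t * ⟪arcPoint u w 0, x⟫ + sin s * ⟪arcPoint u w (s + t), x⟫ := by
      intro x
      simp only [arcPoint, inner_add_left, real_inner_smul_left, cos_zero, sin_zero, sin_add,
        cos_add]
      linear_combination (sin t * ⟪u, x⟫) * sin_sq_add_cos_sq s
    have hexcl : ∀ x, ⟪arcPoint u w 0, x⟫ * ⟪arcPoint u w s, x⟫ < 0 →
        ⟪arcPoint u w s, x⟫ * ⟪arcPoint u w (s + t), x⟫ < 0 → False := by
      intro x h1 h2
      have hb : 0 < ⟪arcPoint u w s, x⟫ ^ 2 := by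
        have : ⟪arcPoint u w s, x⟫ ≠ 0 := by rintro h; simp [h] at h1
        positivity
      rcases hst.eq_or_lt with h | h
      · have e : ⟪arcPoint u w (s + t), x⟫ = - ⟪arcPoint u w 0, x⟫ := by
          simp [h, arcPoint]
        rw [e] at h2
        linarith
      · have h3 := congrArg (⟪arcPoint u w s, x⟫ * ·) (hid x)
        have s1 : 0 ≤ sin t := sin_nonneg_of_nonneg_of_le_pi ht (by linarith)
        have s2 : 0 ≤ sin s := sin_nonneg_of_nonneg_of_le_pi hs (by linarith)
        rcases (add_nonneg hs ht).eq_or_lt with h4 | h4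
        · have : s = 0 := by linarith
          subst this
          linarith [mul_self_nonneg ⟪arcPoint u w 0, x⟫]
        · have s3 : 0 < sin (s + t) := sin_pos_of_pos_of_lt_pi h4 h
          nlinarith [mul_pos s3 hb, mul_nonneg s1 (neg_nonneg.2 h1.le),
            mul_nonneg s2 (neg_nonneg.2 h2.le)]
    rw [e1, hG]
    simp only
    rw [← measureReal_union _ (measurableSet_opposite _ _)]
    · apply measureReal_congr
      refine Filter.eventuallyEq_set.2 ?_
      filter_upwards [hμ.ae_inner_ne_zero (hne s), hμ.ae_inner_ne_zero (hne 0),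
        hμ.ae_inner_ne_zero (hne (s + t))] with x hx hx0 hxt
      simp only [Set.mem_ofPred_eq, Set.mem_union]
      have := hexcl x
      simp only [mul_neg_iff] at this ⊢
      grind
    · rw [Set.disjoint_left]
      exact fun x h1 h2 => hexcl x h1 h2
  have hGpi : G π = 1 := by
    simp only [hG]
    refine measureReal_eq_one_of_ae ?_
    filter_upwards [hμ.ae_inner_ne_zero (hne 0)] with x hx
    have : arcPoint u w π = - arcPoint u w 0 := by simp [arcPoint]
    simp only [this, inner_neg_left, mul_neg, Left.neg_neg_iff]
    exact mul_self_pos.2 hx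
  have := eq_div_mul_of_additive (G := G) pi_pos (fun t => measureReal_nonneg) hadd (t := θ)
    (angle_nonneg u v) (angle_le_pi u v)
  rw [hGpi, mul_one] at this
  rw [← this, hG]
  simp only [h0arc, hvarc]

end

end RotationInvariant

section SignCone

open InnerProductGeometry Real MeasureTheory
open scoped RealInnerProductSpace
variable {E : Type*} [NormedAddCommGroup E] [InnerProductSpace ℝ E]

lemma inner_normalize_mul_neg_iff {u v : E} (hu : u ≠ 0) (hv : v ≠ 0) (x : E) :
    ⟪‖u‖⁻¹ • u, x⟫ * ⟪‖v‖⁻¹ • v, x⟫ < 0 ↔ ⟪u, x⟫ * ⟪v, x⟫ < 0 := by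
  have h : 0 < ‖u‖⁻¹ * ‖v‖⁻¹ := by positivity
  rw [real_inner_smul_left, real_inner_smul_left, mul_mul_mul_comm]
  exact ⟨fun h' => by by_contra! h''; exact absurd h' (not_lt.2 (mul_nonneg h.le h'')),
    fun h' => mul_neg_of_pos_of_neg h h'⟩

lemma angle_normalize {u v : E} (hu : u ≠ 0) (hv : v ≠ 0) :
    angle (‖u‖⁻¹ • u) (‖v‖⁻¹ • v) = angle u v := by
  rw [angle_smul_left_of_pos _ _ (by positivity), angle_smul_right_of_pos _ _ (by positivity)]

lemma norm_normalize {u : E} (hu : u ≠ 0) : ‖‖u‖⁻¹ • u‖ = 1 := by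
  rw [norm_smul, norm_inv, norm_norm, inv_mul_cancel₀ (norm_ne_zero_iff.2 hu)]

/-- The points on the positive side of `a` and `b`, and the negative side of `c` and `d`. -/
def signCone (a b c d : E) : Set E :=
  {x | 0 < ⟪a, x⟫ ∧ 0 < ⟪b, x⟫ ∧ ⟪c, x⟫ < 0 ∧ ⟪d, x⟫ < 0}

lemma signCone_swap_left (a b c d : E) : signCone a b c d = signCone b a c d := by
  ext x; simp only [signCone, Set.mem_ofPred_eq]; tauto

lemma signCone_swap_right (a b c d : E) : signCone a b c d = signCone a b d c := by
  ext x; simp only [signCone, Set.mem_ofPred_eq]; tauto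

lemma signCone_eq_empty {a b c d : E} {α β γ δ : ℝ} (hα : 0 ≤ α) (hβ : 0 ≤ β) (hγ : γ ≤ 0)
    (hδ : δ ≤ 0) (hne : ¬ (α = 0 ∧ β = 0 ∧ γ = 0 ∧ δ = 0))
    (hdep : α • a + β • b + γ • c + δ • d = 0) : signCone a b c d = ∅ := by
  refine Set.eq_empty_of_forall_notMem fun x ⟨h1, h2, h3, h4⟩ => hne ?_
  have hx : α * ⟪a, x⟫ + β * ⟪b, x⟫ + γ * ⟪c, x⟫ + δ * ⟪d, x⟫ = 0 := by
    have := congrArg (fun v => ⟪v, x⟫) hdep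
    simpa only [inner_add_left, real_inner_smul_left, inner_zero_left] using this
  have k1 := mul_nonneg hα h1.le
  have k2 := mul_nonneg hβ h2.le
  have k3 := mul_nonneg_of_nonpos_of_nonpos hγ h3.le
  have k4 := mul_nonneg_of_nonpos_of_nonpos hδ h4.le
  refine ⟨?_, ?_, ?_, ?_⟩
  · exact (mul_eq_zero.1 (show α * ⟪a, x⟫ = 0 by linarith)).resolve_right h1.ne'
  · exact (mul_eq_zero.1 (show β * ⟪b, x⟫ = 0 by linarith)).resolve_right h2.ne'
  · exact (mul_eq_zero.1 (show γ * ⟪c, x⟫ = 0 by linarith)).resolve_right h3.ne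
  · exact (mul_eq_zero.1 (show δ * ⟪d, x⟫ = 0 by linarith)).resolve_right h4.ne

lemma exists_dependence [FiniteDimensional ℝ E] (hE : Module.finrank ℝ E = 3) (a b c d : E) :
    ∃ α β γ δ : ℝ, ¬ (α = 0 ∧ β = 0 ∧ γ = 0 ∧ δ = 0) ∧
      α • a + β • b + γ • c + δ • d = 0 := by
  have h : ¬ LinearIndependent ℝ ![a, b, c, d] := fun h => by
    have := h.fintype_card_le_finrank
    simp [hE] at this
  obtain ⟨g, hg, i, hi⟩ := Fintype.not_linearIndependent_iff.1 h
  refine ⟨g 0, g 1, g 2, g 3, ?_, by simpa [Fin.sum_univ_four] using hg⟩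
  rintro ⟨h0, h1, h2, h3⟩
  fin_cases i <;> simp_all

section
variable [MeasurableSpace E] [BorelSpace E] {μ : Measure E}

lemma measurableSet_signCone (a b c d : E) : MeasurableSet (signCone a b c d) := by
  have pos : ∀ u : E, IsOpen {x : E | 0 < ⟪u, x⟫} := fun u =>
    isOpen_lt continuous_const (by fun_prop)
  have neg : ∀ u : E, IsOpen {x : E | ⟪u, x⟫ < 0} := fun u =>
    isOpen_lt (by fun_prop) continuous_const
  exact ((pos a).inter ((pos b).inter ((neg c).inter (neg d)))).measurableSet

lemma IsRotationInvariant.signCone_neg (hμ : IsRotationInvariant μ) (a b c d : E) :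
    μ.real (signCone a b c d) = μ.real (signCone c d a b) := by
  rw [← (hμ.preserving (LinearIsometryEquiv.neg ℝ)).measureReal_preimage
    (measurableSet_signCone a b c d).nullMeasurableSet]
  congr 1
  ext x
  simp only [signCone, Set.preimage_ofPred_eq, Set.mem_ofPred_eq, LinearIsometryEquiv.coe_neg,
    inner_neg_right, Left.neg_pos_iff, Left.neg_neg_iff]
  tauto

lemma IsRotationInvariant.opposite_eq_angle_of_ne_zero [IsProbabilityMeasure μ]
    (hμ : IsRotationInvariant μ) {u v : E} (hu : u ≠ 0) (hv : v ≠ 0) :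
    μ.real {x | ⟪u, x⟫ * ⟪v, x⟫ < 0} = angle u v / π := by
  rw [← angle_normalize hu hv,
    ← hμ.opposite_eq_angle (norm_normalize hu) (norm_normalize hv)]
  simp only [inner_normalize_mul_neg_iff hu hv]

/-- If the normals are nonnegatively dependent, every point has two sign changes along the tour
`a, c, b, d`, and four on the sign cone. -/
lemma IsRotationInvariant.two_mul_signCone_le [IsProbabilityMeasure μ]
    (hμ : IsRotationInvariant μ) {a b c d : E} (ha : a ≠ 0) (hb : b ≠ 0) (hc : c ≠ 0) (hd : d ≠ 0)
    {α β γ δ : ℝ} (hα : 0 ≤ α) (hβ : 0 ≤ β) (hγ : 0 ≤ γ) (hδ : 0 ≤ δ)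
    (hpos : 0 < α + β + γ + δ) (hdep : α • a + β • b + γ • c + δ • d = 0) :
    2 * μ.real (signCone a b c d) ≤
      (angle a c + angle c b + angle b d + angle d a) / (2 * π) - 1 := by
  have hind : ∀ {s : Set E}, MeasurableSet s → Integrable (s.indicator (1 : E → ℝ)) μ :=
    fun hs => (integrable_const 1).indicator hs
  have m := measurableSet_opposite (E := E)
  have key : ∫ x, (2 + 2 * (signCone a b c d).indicator (1 : E → ℝ) x +
      2 * (signCone c d a b).indicator (1 : E → ℝ) x) ∂μ ≤
      ∫ x, ({x | ⟪a, x⟫ * ⟪c, x⟫ < 0}.indicator (1 : E → ℝ) x +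
        {x | ⟪c, x⟫ * ⟪b, x⟫ < 0}.indicator (1 : E → ℝ) x +
        {x | ⟪b, x⟫ * ⟪d, x⟫ < 0}.indicator (1 : E → ℝ) x +
        {x | ⟪d, x⟫ * ⟪a, x⟫ < 0}.indicator (1 : E → ℝ) x) ∂μ := by
    apply integral_mono_ae
    · exact ((integrable_const _).add ((hind (measurableSet_signCone _ _ _ _)).const_mul 2)).add
        ((hind (measurableSet_signCone _ _ _ _)).const_mul 2)
    · exact (((hind (m _ _)).add (hind (m _ _))).add (hind (m _ _))).add (hind (m _ _))
    · filter_upwards [hμ.ae_inner_ne_zero ha, hμ.ae_inner_ne_zero hb, hμ.ae_inner_ne_zero hc,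
        hμ.ae_inner_ne_zero hd] with x xa xb xc xd
      have hne : ∀ y, ¬ (0 < ⟪a, y⟫ ∧ 0 < ⟪b, y⟫ ∧ 0 < ⟪c, y⟫ ∧ 0 < ⟪d, y⟫) := by
        rintro y ⟨h1, h2, h3, h4⟩
        have hy : y ∈ signCone a b (-c) (-d) :=
          ⟨h1, h2, by simpa [inner_neg_left], by simpa [inner_neg_left]⟩
        rw [signCone_eq_empty (γ := -γ) (δ := -δ) hα hβ (by linarith) (by linarith)
          (by rintro ⟨h1, h2, h3, h4⟩; linarith) (by simpa using hdep)] at hy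
        exact hy
      have hpos := hne x
      have hneg := hne (-x)
      simp only [inner_neg_right, Left.neg_pos_iff] at hneg
      simp only [Set.indicator_apply, signCone, Set.mem_ofPred_eq, Pi.one_apply, mul_neg_iff]
      generalize ⟪a, x⟫ = A at *
      generalize ⟪b, x⟫ = B at *
      generalize ⟪c, x⟫ = C at *
      generalize ⟪d, x⟫ = D at *
      rcases xa.lt_or_gt with h1 | h1 <;> rcases xb.lt_or_gt with h2 | h2 <;>
        rcases xc.lt_or_gt with h3 | h3 <;> rcases xd.lt_or_gt with h4 | h4 <;>
        first
        | (simp only [h1, h2, h3, h4, h1.not_gt, h2.not_gt, h3.not_gt, h4.not_gt]; norm_num; done)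
        | (exact absurd (And.intro h1 (And.intro h2 (And.intro h3 h4))) ‹_›)
  have i1 := (hind (measurableSet_signCone a b c d)).const_mul 2
  have i2 := (hind (measurableSet_signCone c d a b)).const_mul 2
  have j1 := hind (m a c)
  have j2 := hind (m c b)
  have j3 := hind (m b d)
  have j4 := hind (m d a)
  rw [integral_add (by fun_prop) i2, integral_add (integrable_const _) i1,
    integral_add (by fun_prop) j4, integral_add (by fun_prop) j3, integral_add j1 j2,
    integral_const_mul, integral_const_mul,
    integral_indicator_one (measurableSet_signCone _ _ _ _),
    integral_indicator_one (measurableSet_signCone _ _ _ _),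
    integral_indicator_one (m _ _), integral_indicator_one (m _ _),
    integral_indicator_one (m _ _), integral_indicator_one (m _ _),
    integral_const, probReal_univ, one_smul, hμ.opposite_eq_angle_of_ne_zero ha hc,
    hμ.opposite_eq_angle_of_ne_zero hc hb, hμ.opposite_eq_angle_of_ne_zero hb hd,
    hμ.opposite_eq_angle_of_ne_zero hd ha, ← hμ.signCone_neg a b c d] at key
  have e : (angle a c + angle c b + angle b d + angle d a) / (2 * π) =
    (angle a c / π + angle c b / π + angle b d / π + angle d a / π) / 2 := by
    field_simp
  rw [e]
  linarith

lemma tour_bound_eq : 4 * arccos (-1 / 3) / (2 * π) - 1 = 2 / π * arcsin (1 / 3) := by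
  rw [neg_div, arccos_neg, arccos_eq_pi_div_two_sub_arcsin]
  field_simp
  ring

lemma IsRotationInvariant.exists_small_signCone_of_nonneg [IsProbabilityMeasure μ]
    (hμ : IsRotationInvariant μ) {a b c d : E} (ha : a ≠ 0) (hb : b ≠ 0) (hc : c ≠ 0) (hd : d ≠ 0)
    {α β γ δ : ℝ} (hα : 0 ≤ α) (hβ : 0 ≤ β) (hγ : 0 ≤ γ) (hδ : 0 ≤ δ)
    (hpos : 0 < α + β + γ + δ) (hdep : α • a + β • b + γ • c + δ • d = 0) :
    2 * μ.real (signCone a b c d) ≤ 2 / π * arcsin (1 / 3) ∨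
    2 * μ.real (signCone a c b d) ≤ 2 / π * arcsin (1 / 3) ∨
    2 * μ.real (signCone a d b c) ≤ 2 / π * arcsin (1 / 3) := by
  have h1 := hμ.two_mul_signCone_le ha hb hc hd hα hβ hγ hδ hpos hdep
  have h2 := hμ.two_mul_signCone_le ha hc hb hd hα hγ hβ hδ (by linarith)
    (by rw [← hdep]; abel)
  have h3 := hμ.two_mul_signCone_le ha hd hb hc hα hδ hβ hγ (by linarith)
    (by rw [← hdep]; abel)
  rw [← tour_bound_eq]
  have h := exists_short_tour (norm_normalize ha) (norm_normalize hb) (norm_normalize hc)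
    (norm_normalize hd)
  simp only [angle_normalize, ha, hb, hc, hd, ne_eq, not_false_eq_true] at h
  have hp : 0 < 2 * π := by positivity
  rcases h with h | h | h
  · left
    have := div_le_div_of_nonneg_right h hp.le
    linarith
  · right; left
    have := div_le_div_of_nonneg_right h hp.le
    linarith
  · right; right
    have := div_le_div_of_nonneg_right h hp.le
    linarith [angle_comm d b, angle_comm b d]

lemma IsRotationInvariant.exists_small_signCone_of_odd [IsProbabilityMeasure μ]
    (hμ : IsRotationInvariant μ) {a b c d : E} (hb : b ≠ 0) (hc : c ≠ 0) (hd : d ≠ 0)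
    {α β γ δ : ℝ} (hα : 0 ≤ α) (hβ : 0 ≤ β) (hγ : 0 ≤ γ) (hδ : δ ≤ 0)
    (hne : ¬ (α = 0 ∧ β = 0 ∧ γ = 0 ∧ δ = 0)) (hdep : α • a + β • b + γ • c + δ • d = 0) :
    2 * μ.real (signCone a b c d) ≤ 2 / π * arcsin (1 / 3) ∨
    2 * μ.real (signCone a c b d) ≤ 2 / π * arcsin (1 / 3) ∨
    2 * μ.real (signCone a d b c) ≤ 2 / π * arcsin (1 / 3) := by
  have hτ : 0 ≤ 2 / π * arcsin (1 / 3) := by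
    have := arcsin_nonneg.2 (show (0 : ℝ) ≤ 1 / 3 by norm_num)
    positivity
  by_cases hbc : β = 0 ∧ γ = 0
  · left
    obtain ⟨rfl, rfl⟩ := hbc
    rw [signCone_eq_empty hα le_rfl le_rfl hδ hne hdep]
    simpa using hτ
  have hsum : 0 < β + γ := by
    rcases (add_nonneg hβ hγ).eq_or_lt with h | h
    · exact absurd ⟨by linarith, by linarith⟩ hbc
    · exact h
  have hdep' : (α • a + δ • d) + β • b + γ • c = 0 := by rw [← hdep]; abel
  by_cases ha' : α • a + δ • d = 0
  · right; right
    have h0 : β • b + γ • c + (0 : ℝ) • a + (0 : ℝ) • d = 0 := by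
      rw [ha', zero_add] at hdep'
      simpa using hdep'
    rw [hμ.signCone_neg, signCone_eq_empty hβ hγ le_rfl le_rfl (fun h => hbc ⟨h.1, h.2.1⟩) h0]
    simpa using hτ
  rcases eq_or_lt_of_le hα with hα0 | hα0
  · right; right
    subst hα0
    have h0 : β • b + γ • c + (0 : ℝ) • a + δ • d = 0 := by rw [← hdep]; abel
    rw [hμ.signCone_neg, signCone_eq_empty hβ hγ le_rfl hδ (fun h => hbc ⟨h.1, h.2.1⟩) h0]
    simpa using hτ
  have hx : ∀ x, ⟪α • a + δ • d, x⟫ = α * ⟪a, x⟫ + δ * ⟪d, x⟫ := fun x => by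
    rw [inner_add_left, real_inner_smul_left, real_inner_smul_left]
  have hx' : ∀ x, ⟪α • a + δ • d, x⟫ + β * ⟪b, x⟫ + γ * ⟪c, x⟫ = 0 := fun x => by
    have := congrArg (fun v => ⟪v, x⟫) hdep'
    simpa only [inner_add_left, real_inner_smul_left, inner_zero_left] using this
  have main := hμ.exists_small_signCone_of_nonneg ha' hb hc hd zero_le_one hβ hγ le_rfl
    (by linarith) (by rw [← hdep']; simp)
  have mono : ∀ {s t : Set E}, s ⊆ t → 2 * μ.real t ≤ 2 / π * arcsin (1 / 3) →
      2 * μ.real s ≤ 2 / π * arcsin (1 / 3) := fun hst h => by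
    have := measureReal_mono (μ := μ) hst
    linarith
  refine main.imp (mono ?_) (Or.imp (mono ?_) (mono ?_))
  · rintro x ⟨h1, h2, h3, h4⟩
    refine ⟨?_, h2, h3, h4⟩
    rw [hx]
    have := mul_nonneg_of_nonpos_of_nonpos hδ h4.le
    have := mul_pos hα0 h1
    linarith
  · rintro x ⟨h1, h2, h3, h4⟩
    refine ⟨?_, h2, h3, h4⟩
    rw [hx]
    have := mul_nonneg_of_nonpos_of_nonpos hδ h4.le
    have := mul_pos hα0 h1
    linarith
  · rintro x ⟨h1, h2, h3, h4⟩
    refine ⟨?_, h2, h3, h4⟩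
    have := hx' x
    have k1 := mul_nonpos_of_nonneg_of_nonpos hβ h3.le
    have k2 := mul_nonpos_of_nonneg_of_nonpos hγ h4.le
    by_contra! h
    refine hbc ⟨?_, ?_⟩
    · exact (mul_eq_zero.1 (show β * ⟪b, x⟫ = 0 by linarith)).resolve_right h3.ne
    · exact (mul_eq_zero.1 (show γ * ⟪c, x⟫ = 0 by linarith)).resolve_right h4.ne

/-- Four planes through the origin in three-space admit a small sign cone of type `(2, 2)`. -/
lemma IsRotationInvariant.exists_small_signCone [FiniteDimensional ℝ E]
    (hE : Module.finrank ℝ E = 3) [IsProbabilityMeasure μ]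
    (hμ : IsRotationInvariant μ) {a b c d : E} (ha : a ≠ 0) (hb : b ≠ 0) (hc : c ≠ 0)
    (hd : d ≠ 0) :
    2 * μ.real (signCone a b c d) ≤ 2 / π * arcsin (1 / 3) ∨
    2 * μ.real (signCone a c b d) ≤ 2 / π * arcsin (1 / 3) ∨
    2 * μ.real (signCone a d b c) ≤ 2 / π * arcsin (1 / 3) := by
  obtain ⟨α, β, γ, δ, hne, hdep⟩ := exists_dependence hE a b c d
  wlog hδ : δ ≤ 0 generalizing α β γ δ
  · refine this (-α) (-β) (-γ) (-δ) (by simpa using hne) ?_ (by linarith)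
    rw [← neg_eq_zero, ← hdep]
    module
  have hτ : 0 ≤ 2 / π * arcsin (1 / 3) := by
    have := arcsin_nonneg.2 (show (0 : ℝ) ≤ 1 / 3 by norm_num)
    positivity
  have e1 := hμ.signCone_neg a b c d
  have e2 := hμ.signCone_neg a c b d
  have e3 := hμ.signCone_neg a d b c
  have hneg : ∀ {x y z w : ℝ} {a b c d : E}, x • a + y • b + z • c + w • d = 0 →
      (-x) • a + (-y) • b + (-z) • c + (-w) • d = 0 := fun h => by
    rw [← neg_eq_zero, ← h]; module
  rcases le_total 0 α with hα | hα <;> rcases le_total 0 β with hβ | hβ <;>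
    rcases le_total 0 γ with hγ | hγ
  · exact hμ.exists_small_signCone_of_odd hb hc hd hα hβ hγ hδ hne hdep
  · left
    rw [signCone_eq_empty hα hβ hγ hδ hne hdep]
    simpa using hτ
  · right; left
    rw [signCone_eq_empty hα hγ hβ hδ (by tauto) (by rw [← hdep]; abel)]
    simpa using hτ
  · have := hμ.exists_small_signCone_of_odd (α := -δ) (β := -β) (γ := -γ) (δ := -α) hb hc ha
      (by linarith) (by linarith) (by linarith) (by linarith) (by simp only [neg_eq_zero]; tauto)
      (hneg (by rw [← hdep]; abel))
    rw [signCone_swap_left d b, signCone_swap_right b d, ← e2, signCone_swap_left d c,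
      signCone_swap_right c d, ← e1, signCone_swap_left d a] at this
    tauto
  · right; right
    rw [e3, signCone_eq_empty hβ hγ hα hδ (by tauto) (by rw [← hdep]; abel)]
    simpa using hτ
  · have := hμ.exists_small_signCone_of_odd (α := -α) (β := -δ) (γ := -γ) (δ := -β) hd hc hb
      (by linarith) (by linarith) (by linarith) (by linarith) (by simp only [neg_eq_zero]; tauto)
      (hneg (by rw [← hdep]; abel))
    rw [signCone_swap_right a d c b, signCone_swap_right a c d b, signCone_swap_right a b d c]
      at this
    tauto
  · have := hμ.exists_small_signCone_of_odd (α := -α) (β := -β) (γ := -δ) (δ := -γ) hb hd hc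
      (by linarith) (by linarith) (by linarith) (by linarith) (by simp only [neg_eq_zero]; tauto)
      (hneg (by rw [← hdep]; abel))
    rw [signCone_swap_right a b d c] at this
    tauto
  · have := hμ.exists_small_signCone_of_nonneg (α := -α) (β := -β) (γ := -γ) (δ := -δ) ha hb hc hd
      (by linarith) (by linarith) (by linarith) (by linarith)
      (by
        by_contra! h
        exact hne ⟨by linarith, by linarith, by linarith, by linarith⟩) (hneg hdep)
    exact this
end

end SignCone

section BallMeasure

open InnerProductGeometry Real MeasureTheory Filter Topology
open scoped RealInnerProductSpace

/-- Euclidean three-space. -/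
abbrev Space := EuclideanSpace ℝ (Fin 3)

/-- The uniform probability measure on the unit ball of three-space. -/
def ballMeasure : Measure Space :=
  ProbabilityTheory.cond volume (Metric.ball 0 1)

instance : IsProbabilityMeasure ballMeasure :=
  ProbabilityTheory.cond_isProbabilityMeasure_of_finite
    (Metric.measure_ball_pos volume 0 one_pos).ne' measure_ball_lt_top.ne

lemma ballMeasure_ae_norm_le : ∀ᵐ x ∂ballMeasure, ‖x‖ ≤ 1 := by
  filter_upwards [ProbabilityTheory.ae_cond_mem (μ := (volume : Measure Space))
    (Metric.isOpen_ball (x := 0) (ε := 1)).measurableSet] with x hx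
  exact (mem_ball_zero_iff.1 hx).le

lemma isRotationInvariant_ballMeasure : IsRotationInvariant ballMeasure where
  preserving R := by
    refine ⟨R.continuous.measurable, ?_⟩
    ext s hs
    have hb : R ⁻¹' Metric.ball 0 1 = Metric.ball 0 1 := by
      ext x; simp
    rw [Measure.map_apply R.continuous.measurable hs, ballMeasure,
      ProbabilityTheory.cond_apply Metric.isOpen_ball.measurableSet,
      ProbabilityTheory.cond_apply Metric.isOpen_ball.measurableSet]
    nth_rewrite 2 [← hb]
    rw [← Set.preimage_inter, R.measurePreserving.measure_preimage
      (Metric.isOpen_ball.measurableSet.inter hs).nullMeasurableSet]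
  hyperplane_null u hu := by
    apply ProbabilityTheory.cond_absolutelyContinuous
    have h := Measure.addHaar_submodule (volume : Measure Space) (ℝ ∙ u)ᗮ (by
      intro h
      have : u ∈ (ℝ ∙ u)ᗮ := h ▸ Submodule.mem_top
      rw [Submodule.mem_orthogonal_singleton_iff_inner_right] at this
      exact hu (inner_self_eq_zero.1 this))
    convert h using 2
    ext x
    simp [Submodule.mem_orthogonal_singleton_iff_inner_right]

section
variable {E : Type*} [NormedAddCommGroup E] [InnerProductSpace ℝ E] [MeasurableSpace E]
  [BorelSpace E] {μ : Measure E}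

lemma measurableSet_band (u : E) (δ : ℝ) : MeasurableSet {x : E | |⟪u, x⟫| ≤ δ} :=
  (isClosed_le (by fun_prop) continuous_const).measurableSet

/-- Thin bands around great hyperplanes have uniformly small measure. -/
lemma IsRotationInvariant.exists_band_le [IsProbabilityMeasure μ]
    (hμ : IsRotationInvariant μ) {e : E} (he : ‖e‖ = 1) {ε : ℝ} (hε : 0 < ε) :
    ∃ δ > 0, ∀ u : E, ‖u‖ = 1 → μ.real {x | |⟪u, x⟫| ≤ δ} ≤ ε := by
  have hlim : Tendsto (fun n : ℕ => μ {x | |⟪e, x⟫| ≤ 1 / ((n : ℝ) + 1)}) atTop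
      (𝓝 (μ (⋂ n : ℕ, {x | |⟪e, x⟫| ≤ 1 / ((n : ℝ) + 1)}))) := by
    apply tendsto_measure_iInter_atTop
    · exact fun n => (measurableSet_band _ _).nullMeasurableSet
    · intro m n hmn x hx
      simp only [Set.mem_ofPred_eq] at hx ⊢
      have : 1 / ((n : ℝ) + 1) ≤ 1 / ((m : ℝ) + 1) := by gcongr
      exact hx.trans this
    · exact ⟨0, measure_ne_top _ _⟩
  have hzero : μ (⋂ n : ℕ, {x | |⟪e, x⟫| ≤ 1 / ((n : ℝ) + 1)}) = 0 := by
    refine measure_mono_null ?_ (hμ.hyperplane_null e (by rintro rfl; simp at he))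
    intro x hx
    rw [Set.mem_iInter] at hx
    have : |⟪e, x⟫| ≤ 0 :=
      ge_of_tendsto' tendsto_one_div_add_atTop_nhds_zero_nat hx
    exact abs_nonpos_iff.1 this
  rw [hzero] at hlim
  obtain ⟨n, hn⟩ := (hlim.eventually_lt_const (ENNReal.ofReal_pos.2 hε)).exists
  refine ⟨1 / ((n : ℝ) + 1), by positivity, fun u hu => ?_⟩
  have hR : Submodule.reflection (ℝ ∙ (e - u))ᗮ e = u := Submodule.reflection_sub (by rw [he, hu])
  have hpre : Submodule.reflection (ℝ ∙ (e - u))ᗮ ⁻¹' {x | |⟪u, x⟫| ≤ 1 / ((n : ℝ) + 1)} =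
      {x | |⟪e, x⟫| ≤ 1 / ((n : ℝ) + 1)} := by
    ext x
    have : ⟪u, Submodule.reflection (ℝ ∙ (e - u))ᗮ x⟫ = ⟪e, x⟫ := by
      rw [← LinearIsometryEquiv.inner_map_map (Submodule.reflection (ℝ ∙ (e - u))ᗮ) e x, hR]
    simp only [Set.preimage_ofPred_eq, Set.mem_ofPred_eq, this]
  rw [← (hμ.preserving (Submodule.reflection (ℝ ∙ (e - u))ᗮ)).measureReal_preimage
    (measurableSet_band u _).nullMeasurableSet, hpre]
  exact ENNReal.toReal_le_of_le_ofReal hε.le hn.le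

end

end BallMeasure

section PlaneMeasure

open InnerProductGeometry Real MeasureTheory Filter Topology
open scoped RealInnerProductSpace

/-- The Euclidean plane as a coordinate space. -/
abbrev Plane := Fin 2 → ℝ

/-- Central projection from the origin onto the plane at height one. -/
def centralProj (x : Space) : Plane := ![x 0 / x 2, x 1 / x 2]

/-- The copy of the point `q` in the plane at height one. -/
def planeLift (q : Plane) : Space := !₂[q 0, q 1, 1]

/-- The central projection of the point `q` at height one to the unit sphere. -/
def sphereLift (q : Plane) : Space := ‖planeLift q‖⁻¹ • planeLift q

/-- The vector whose pairing with `planeLift q` is `f q`. -/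
def coeffVector (f : Plane →ᵃ[ℝ] ℝ) : Space :=
  !₂[f.linear ![1, 0], f.linear ![0, 1], f 0]

/-- The unit vector in the direction of `coeffVector f`. -/
def unitCoeff (f : Plane →ᵃ[ℝ] ℝ) : Space := ‖coeffVector f‖⁻¹ • coeffVector f

/-- The unit vector orthogonal to the plane at height one. -/
def pole : Space := !₂[0, 0, 1]

/-- The push-forward of the uniform measure on the ball under central projection. -/
def planeMeasure : Measure Plane := ballMeasure.map centralProj

lemma inner_space (x y : Space) : ⟪x, y⟫ = x 0 * y 0 + x 1 * y 1 + x 2 * y 2 := by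
  rw [PiLp.inner_apply, Fin.sum_univ_three]
  simp [mul_comm]

lemma linear_plane_apply (f : Plane →ₗ[ℝ] ℝ) (q : Plane) :
    f q = f ![1, 0] * q 0 + f ![0, 1] * q 1 := by
  have : q = q 0 • ![1, 0] + q 1 • ![0, 1] := by
    ext i; fin_cases i <;> simp
  conv_lhs => rw [this, map_add, map_smul, map_smul]
  simp [mul_comm]

lemma inner_coeffVector_planeLift (f : Plane →ᵃ[ℝ] ℝ) (q : Plane) :
    ⟪coeffVector f, planeLift q⟫ = f q := by
  have h : f q = f.linear q + f 0 := congrFun f.decomp q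
  rw [inner_space, h, linear_plane_apply f.linear q]
  simp [coeffVector, planeLift]

lemma coeffVector_ne_zero {f : Plane →ᵃ[ℝ] ℝ} (hf : f.linear ≠ 0) : coeffVector f ≠ 0 := by
  intro h
  apply hf
  apply LinearMap.ext
  intro q
  have h0 := congrArg (fun v : Space => v 0) h
  have h1 := congrArg (fun v : Space => v 1) h
  simp only [coeffVector, PiLp.zero_apply] at h0 h1
  simp only [Matrix.cons_val_zero, Matrix.cons_val_one] at h0 h1
  simp [linear_plane_apply f.linear q, h0, h1]

lemma norm_unitCoeff {f : Plane →ᵃ[ℝ] ℝ} (hf : f.linear ≠ 0) : ‖unitCoeff f‖ = 1 :=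
  norm_normalize (coeffVector_ne_zero hf)

lemma norm_pole : ‖pole‖ = 1 := by
  rw [EuclideanSpace.norm_eq, Fin.sum_univ_three]
  simp [pole]

lemma inner_pole (x : Space) : ⟪pole, x⟫ = x 2 := by
  simp [inner_space, pole]

lemma planeLift_ne_zero (q : Plane) : planeLift q ≠ 0 := by
  intro h
  simpa [planeLift] using congrArg (fun v : Space => v 2) h

lemma planeLift_centralProj {x : Space} (hx : x 2 ≠ 0) :
    planeLift (centralProj x) = (x 2)⁻¹ • x := by
  ext i
  fin_cases i <;> simp [planeLift, centralProj, hx, div_eq_inv_mul]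

lemma apply_centralProj (f : Plane →ᵃ[ℝ] ℝ) {x : Space} (hx : x 2 ≠ 0) :
    f (centralProj x) = (x 2)⁻¹ * ⟪coeffVector f, x⟫ := by
  rw [← inner_coeffVector_planeLift, planeLift_centralProj hx, inner_smul_right]

lemma abs_inner_le_sphereLift_centralProj {x : Space} (hx : x 2 ≠ 0) (hx1 : ‖x‖ ≤ 1)
    (u : Space) : |⟪u, x⟫| ≤ |⟪u, sphereLift (centralProj x)⟫| := by
  have hx0 : x ≠ 0 := by rintro rfl; simp at hx
  have hn : 0 < ‖x‖ := norm_pos_iff.2 hx0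
  have hi : 1 ≤ ‖x‖⁻¹ := (one_le_inv₀ hn).2 hx1
  rw [sphereLift, planeLift_centralProj hx, norm_smul, norm_inv,
    Real.norm_eq_abs, inner_smul_right, inner_smul_right, abs_mul, abs_mul, abs_inv, abs_inv]
  simp only [abs_mul, abs_inv, abs_norm, abs_abs]
  have h2 : 0 < |x 2| := abs_pos.2 hx
  field_simp
  nlinarith [abs_nonneg ⟪u, x⟫]

lemma measurable_centralProj : Measurable centralProj := by
  rw [measurable_pi_iff]
  intro i
  fin_cases i <;> simp only [centralProj] <;> simp <;> fun_prop

lemma continuous_planeLift : Continuous planeLift := by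
  unfold planeLift
  fun_prop

lemma measurable_sphereLift : Measurable sphereLift := by
  have : Continuous sphereLift := by
    unfold sphereLift
    have h := continuous_planeLift
    fun_prop (disch := simpa using planeLift_ne_zero)
  exact this.measurable

instance : IsProbabilityMeasure planeMeasure :=
  Measure.isProbabilityMeasure_map measurable_centralProj.aemeasurable

lemma ballMeasure_ae_height_ne_zero : ∀ᵐ x ∂ballMeasure, x 2 ≠ 0 := by
  have h : pole ≠ 0 := by
    intro h; simpa [h] using norm_pole
  simpa only [inner_pole] using isRotationInvariant_ballMeasure.ae_inner_ne_zero h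

instance : NullSingletonClass planeMeasure where
  measure_singleton q := by
    rw [planeMeasure, Measure.map_apply measurable_centralProj (measurableSet_singleton q)]
    have hne : (!₂[1, 0, -q 0] : Space) ≠ 0 := by
      intro h
      simpa using congrArg (fun v : Space => v 0) h
    refine measure_mono_null_ae ?_ (isRotationInvariant_ballMeasure.hyperplane_null _ hne)
    filter_upwards [ballMeasure_ae_height_ne_zero] with x hx hxq
    have h0 : x 0 / x 2 = q 0 := congrFun (show centralProj x = q from hxq) 0
    have : ⟪(!₂[1, 0, -q 0] : Space), x⟫ = 0 := by
      rw [inner_space, ← h0]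
      simp [hx]
    exact this

lemma planeMeasure_real_le {s : Set Plane} (hs : MeasurableSet s) {t : Set Space}
    (h : ∀ x : Space, x 2 ≠ 0 → ‖x‖ ≤ 1 → centralProj x ∈ s → x ∈ t) :
    planeMeasure.real s ≤ ballMeasure.real t := by
  rw [planeMeasure, map_measureReal_apply measurable_centralProj hs]
  refine ENNReal.toReal_mono (measure_ne_top _ _) (measure_mono_ae ?_)
  filter_upwards [ballMeasure_ae_height_ne_zero, ballMeasure_ae_norm_le] with x h1 h2 hx
  exact h x h1 h2 hx

lemma planeMeasure_wedge_le (f g h : Plane →ᵃ[ℝ] ℝ) :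
    planeMeasure.real {q | 0 < f q ∧ g q < 0 ∧ h q < 0} ≤
      2 * ballMeasure.real (signCone pole (coeffVector f) (coeffVector g) (coeffVector h)) := by
  have hm : MeasurableSet {q : Plane | 0 < f q ∧ g q < 0 ∧ h q < 0} := by
    have c : ∀ f : Plane →ᵃ[ℝ] ℝ, Continuous f := fun f => f.continuous_of_finiteDimensional
    exact ((isOpen_lt continuous_const (c f)).inter ((isOpen_lt (c g) continuous_const).inter
      (isOpen_lt (c h) continuous_const))).measurableSet
  refine (planeMeasure_real_le hm (t := signCone pole (coeffVector f) (coeffVector g)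
    (coeffVector h) ∪ signCone (coeffVector g) (coeffVector h) pole (coeffVector f)) ?_).trans ?_
  · intro x hx _ hq
    simp only [Set.mem_ofPred_eq, apply_centralProj _ hx] at hq
    simp only [Set.mem_union, signCone, Set.mem_ofPred_eq, inner_pole]
    obtain ⟨h1, h2, h3⟩ := hq
    rcases hx.lt_or_gt with h0 | h0
    · have hi := inv_lt_zero.2 h0
      right
      exact ⟨by nlinarith, by nlinarith, h0, by nlinarith⟩
    · have hi := inv_pos.2 h0
      left
      exact ⟨h0, by nlinarith, by nlinarith, by nlinarith⟩
  · refine (measureReal_union_le _ _).trans ?_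
    rw [← isRotationInvariant_ballMeasure.signCone_neg, two_mul]

lemma measurableSet_sphereLift_band (u : Space) (δ : ℝ) :
    MeasurableSet {q | |⟪u, sphereLift q⟫| ≤ δ} :=
  measurable_sphereLift (measurableSet_band u δ)

lemma planeMeasure_band_le (u : Space) (δ : ℝ) :
    planeMeasure.real {q | |⟪u, sphereLift q⟫| ≤ δ} ≤ ballMeasure.real {x | |⟪u, x⟫| ≤ δ} :=
  planeMeasure_real_le (measurableSet_sphereLift_band u δ) fun _ hx hx1 hq =>
    (abs_inner_le_sphereLift_centralProj hx hx1 u).trans hq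

/-- The cell containing `q` of the partition of the plane induced, through the sphere, by a cubical
grid of mesh `1 / k`. -/
def gridCell (k : ℕ) (q : Plane) : Fin 3 → ℤ := fun i => ⌊k * sphereLift q i⌋

lemma measurable_gridCell (k : ℕ) : Measurable (gridCell k) := by
  refine measurable_pi_iff.2 fun i => Int.measurable_floor.comp (Measurable.const_mul ?_ _)
  have h : Continuous fun x : Space => x i := by fun_prop
  exact h.measurable.comp measurable_sphereLift

lemma norm_sphereLift (q : Plane) : ‖sphereLift q‖ = 1 := norm_normalize (planeLift_ne_zero q)

lemma gridCell_mem (k : ℕ) (q : Plane) :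
    gridCell k q ∈ Fintype.piFinset fun _ : Fin 3 => Finset.Icc (-k : ℤ) k := by
  rw [Fintype.mem_piFinset]
  intro i
  have h : |sphereLift q i| ≤ 1 := by
    simpa [norm_sphereLift q] using PiLp.norm_apply_le (sphereLift q) i
  obtain ⟨h1, h2⟩ := abs_le.1 h
  have hk : (0 : ℝ) ≤ k := k.cast_nonneg
  rw [Finset.mem_Icc, gridCell, Int.le_floor, Int.floor_le_iff]
  push_cast
  constructor <;> nlinarith

lemma abs_inner_sub_le_of_gridCell_eq {k : ℕ} (hk : 0 < k) {q r : Plane}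
    (h : gridCell k q = gridCell k r) {u : Space} (hu : ‖u‖ = 1) :
    |⟪u, sphereLift q⟫ - ⟪u, sphereLift r⟫| ≤ 3 / k := by
  have hk' : (0 : ℝ) < k := Nat.cast_pos.2 hk
  have hi : ∀ i, |u i * (sphereLift q i - sphereLift r i)| ≤ 1 / k := by
    intro i
    have h1 : |u i| ≤ 1 := by simpa [hu] using PiLp.norm_apply_le u i
    have h2 := Int.abs_sub_lt_one_of_floor_eq_floor (congrFun h i)
    rw [← mul_sub, abs_mul, abs_of_pos hk'] at h2
    rw [abs_mul, le_div_iff₀ hk']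
    nlinarith [abs_nonneg (u i), abs_nonneg (sphereLift q i - sphereLift r i)]
  have e : ⟪u, sphereLift q⟫ - ⟪u, sphereLift r⟫ =
      u 0 * (sphereLift q 0 - sphereLift r 0) + u 1 * (sphereLift q 1 - sphereLift r 1) +
        u 2 * (sphereLift q 2 - sphereLift r 2) := by
    rw [inner_space, inner_space]; ring
  rw [e]
  refine (abs_add_three _ _ _).trans ?_
  have : (3 : ℝ) / k = 1 / k + 1 / k + 1 / k := by ring
  linarith [hi 0, hi 1, hi 2]

lemma apply_eq_mul_inner_sphereLift {f : Plane →ᵃ[ℝ] ℝ} (hf : f.linear ≠ 0) (q : Plane) :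
    f q = (‖coeffVector f‖ * ‖planeLift q‖) *
      ⟪unitCoeff f, sphereLift q⟫ := by
  have h1 := norm_ne_zero_iff.2 (coeffVector_ne_zero hf)
  have h2 := norm_ne_zero_iff.2 (planeLift_ne_zero q)
  rw [← inner_coeffVector_planeLift, sphereLift, unitCoeff, real_inner_smul_left,
    real_inner_smul_right]
  field_simp

lemma scale_pos {f : Plane →ᵃ[ℝ] ℝ} (hf : f.linear ≠ 0) (q : Plane) :
    0 < ‖coeffVector f‖ * ‖planeLift q‖ :=
  mul_pos (norm_pos_iff.2 (coeffVector_ne_zero hf)) (norm_pos_iff.2 (planeLift_ne_zero q))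

/-- A cell that meets the closed halfplane `0 ≤ f` lies in the open halfplane, up to a band. -/
lemma pos_or_band_of_gridCell_eq {k : ℕ} (hk : 0 < k) {δ : ℝ} (hδ : 3 / k ≤ δ) {q r : Plane}
    (h : gridCell k q = gridCell k r) {f : Plane →ᵃ[ℝ] ℝ} (hf : f.linear ≠ 0) (hr : 0 ≤ f r) :
    0 < f q ∨ |⟪unitCoeff f, sphereLift q⟫| ≤ δ := by
  have hd := abs_le.1 (abs_inner_sub_le_of_gridCell_eq hk h
    (norm_unitCoeff hf))
  rw [apply_eq_mul_inner_sphereLift hf, mul_nonneg_iff_of_pos_left (scale_pos hf r)] at hr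
  rw [apply_eq_mul_inner_sphereLift hf, mul_pos_iff_of_pos_left (scale_pos hf q)]
  rcases lt_or_ge 0 ⟪unitCoeff f, sphereLift q⟫ with h0 | h0
  · exact Or.inl h0
  · right
    rw [abs_le]
    constructor <;> linarith

lemma neg_or_band_of_gridCell_eq {k : ℕ} (hk : 0 < k) {δ : ℝ} (hδ : 3 / k ≤ δ) {q r : Plane}
    (h : gridCell k q = gridCell k r) {f : Plane →ᵃ[ℝ] ℝ} (hf : f.linear ≠ 0) (hr : f r ≤ 0) :
    f q < 0 ∨ |⟪unitCoeff f, sphereLift q⟫| ≤ δ := by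
  have hd := abs_le.1 (abs_inner_sub_le_of_gridCell_eq hk h
    (norm_unitCoeff hf))
  rw [apply_eq_mul_inner_sphereLift hf] at hr ⊢
  have hr' := nonpos_of_mul_nonpos_right hr (scale_pos hf r)
  rcases lt_or_ge ⟪unitCoeff f, sphereLift q⟫ 0 with h0 | h0
  · exact Or.inl (mul_neg_of_pos_of_neg (scale_pos hf q) h0)
  · right
    rw [abs_le]
    constructor <;> linarith

/-- For a fine enough grid, the cells meeting a closed wedge barely exceed the open wedge, and the
cells meeting a line have small measure. -/
lemma exists_grid {ε : ℝ} (hε : 0 < ε) :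
    ∃ k : ℕ, (∀ f g h : Plane →ᵃ[ℝ] ℝ, f.linear ≠ 0 → g.linear ≠ 0 → h.linear ≠ 0 →
      planeMeasure.real (gridCell k ⁻¹' (gridCell k '' {q | 0 ≤ f q ∧ g q ≤ 0 ∧ h q ≤ 0})) ≤
        2 * ballMeasure.real (signCone pole (coeffVector f) (coeffVector g) (coeffVector h)) +
          3 * ε) ∧
      ∀ f : Plane →ᵃ[ℝ] ℝ, f.linear ≠ 0 →
        planeMeasure.real (gridCell k ⁻¹' (gridCell k '' {q | f q = 0})) ≤ ε := by
  obtain ⟨δ, hδ, hband⟩ := isRotationInvariant_ballMeasure.exists_band_le norm_pole hε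
  obtain ⟨k, hk⟩ := exists_nat_gt (3 / δ)
  have hk0 : (0 : ℝ) < k := lt_trans (by positivity) hk
  have hkδ : 3 / k ≤ δ := by
    rw [div_lt_iff₀ hδ] at hk
    rw [div_le_iff₀ hk0]
    linarith
  have hkn : 0 < k := Nat.cast_pos.1 hk0
  have hb : ∀ f : Plane →ᵃ[ℝ] ℝ, f.linear ≠ 0 →
      planeMeasure.real {q | |⟪unitCoeff f, sphereLift q⟫| ≤ δ} ≤ ε :=
    fun f hf => (planeMeasure_band_le _ _).trans
      (hband _ (norm_unitCoeff hf))
  refine ⟨k, fun f g h hf hg hh => ?_, fun f hf => ?_⟩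
  · have hsub : gridCell k ⁻¹' (gridCell k '' {q | 0 ≤ f q ∧ g q ≤ 0 ∧ h q ≤ 0}) ⊆
        {q | 0 < f q ∧ g q < 0 ∧ h q < 0} ∪
        {q | |⟪unitCoeff f, sphereLift q⟫| ≤ δ} ∪
        {q | |⟪unitCoeff g, sphereLift q⟫| ≤ δ} ∪
        {q | |⟪unitCoeff h, sphereLift q⟫| ≤ δ} := by
      rintro q ⟨r, ⟨h1, h2, h3⟩, hr⟩
      have e1 := pos_or_band_of_gridCell_eq hkn hkδ hr.symm hf h1
      have e2 := neg_or_band_of_gridCell_eq hkn hkδ hr.symm hg h2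
      have e3 := neg_or_band_of_gridCell_eq hkn hkδ hr.symm hh h3
      simp only [Set.mem_union, Set.mem_ofPred_eq]
      tauto
    refine (measureReal_mono hsub).trans ?_
    have u1 := measureReal_union_le (μ := planeMeasure) ({q | 0 < f q ∧ g q < 0 ∧ h q < 0} ∪
        {q | |⟪unitCoeff f, sphereLift q⟫| ≤ δ} ∪
        {q | |⟪unitCoeff g, sphereLift q⟫| ≤ δ})
        {q | |⟪unitCoeff h, sphereLift q⟫| ≤ δ}
    have u2 := measureReal_union_le (μ := planeMeasure) ({q | 0 < f q ∧ g q < 0 ∧ h q < 0} ∪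
        {q | |⟪unitCoeff f, sphereLift q⟫| ≤ δ})
        {q | |⟪unitCoeff g, sphereLift q⟫| ≤ δ}
    have u3 := measureReal_union_le (μ := planeMeasure) {q | 0 < f q ∧ g q < 0 ∧ h q < 0}
        {q | |⟪unitCoeff f, sphereLift q⟫| ≤ δ}
    linarith [hb f hf, hb g hg, hb h hh, planeMeasure_wedge_le f g h]
  · refine (measureReal_mono ?_).trans (hb f hf)
    rintro q ⟨r, hr0, hr⟩
    simp only [Set.mem_ofPred_eq] at hr0
    have e1 := pos_or_band_of_gridCell_eq hkn hkδ hr.symm hf hr0.ge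
    have e2 := neg_or_band_of_gridCell_eq hkn hkδ hr.symm hf hr0.le
    rcases e1 with e1 | e1
    · rcases e2 with e2 | e2
      · exact absurd e1 e2.not_gt
      · exact e2
    · exact e1

end PlaneMeasure

section Discretization

open MeasureTheory

/-- A measure without atoms is approximated, cell by cell from below, by a finite point set. -/
lemma exists_finset_card_le_measure {X ι : Type*} [MeasurableSpace X] [MeasurableSpace ι]
    [MeasurableSingletonClass ι] [DecidableEq ι] (m : Measure X) [IsProbabilityMeasure m]
    [NullSingletonClass m] {g : X → ι} (hg : Measurable g) {J : Finset ι} (hJ : ∀ x, g x ∈ J)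
    (N : ℕ) :
    ∃ S : Finset X, (N : ℝ) - J.card ≤ S.card ∧
      ∀ T ⊆ S, (T.card : ℝ) ≤ N * m.real (g ⁻¹' (g '' (T : Set X))) := by
  classical
  have hchoose : ∀ j, ∃ F : Finset X, (↑F ⊆ g ⁻¹' {j}) ∧ F.card = ⌊N * m.real (g ⁻¹' {j})⌋₊ := by
    intro j
    by_cases hj : m (g ⁻¹' {j}) = 0
    · exact ⟨∅, by simp, by simp [measureReal_def, hj]⟩
    · have hinf : (g ⁻¹' {j}).Infinite := fun hfin => hj (hfin.measure_zero m)
      exact hinf.exists_subset_card_eq _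
  choose F hF hcard using hchoose
  have hdisj : (J : Set ι).PairwiseDisjoint F := by
    intro i _ j _ hij
    rw [Function.onFun, Finset.disjoint_left]
    intro x hi hj
    exact hij ((hF i hi).symm.trans (hF j hj))
  have hms : ∀ j, MeasurableSet (g ⁻¹' {j}) := fun j => hg (measurableSet_singleton j)
  have hmeas : ∀ I : Finset ι, ∑ j ∈ I, m.real (g ⁻¹' {j}) = m.real (g ⁻¹' (I : Set ι)) := by
    intro I
    rw [← measureReal_biUnion_finset]
    · congr 1
      ext x
      simp
    · intro i _ j _ hij
      exact Disjoint.preimage g (by simpa using hij)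
    · exact fun j _ => hms j
  refine ⟨J.biUnion F, ?_, ?_⟩
  · rw [Finset.card_biUnion hdisj]
    have hu : m.real (g ⁻¹' (J : Set ι)) = 1 := by
      rw [show g ⁻¹' (J : Set ι) = Set.univ from Set.eq_univ_of_forall hJ, probReal_univ]
    have : ∑ j ∈ J, (N * m.real (g ⁻¹' {j}) - 1) ≤ ∑ j ∈ J, ((F j).card : ℝ) := by
      refine Finset.sum_le_sum fun j _ => ?_
      rw [hcard]
      exact (Nat.sub_one_lt_floor _).le
    rw [Finset.sum_sub_distrib, ← Finset.mul_sum, hmeas, hu] at this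
    push_cast
    simpa using this
  · intro T hT
    have hsub : T ⊆ (T.image g).biUnion F := by
      intro x hx
      obtain ⟨j, _, hj⟩ := Finset.mem_biUnion.1 (hT hx)
      have e : g x = j := hF j hj
      exact Finset.mem_biUnion.2 ⟨j, Finset.mem_image.2 ⟨x, hx, e⟩, hj⟩
    have h1 : (T.card : ℝ) ≤ ∑ j ∈ T.image g, ((F j).card : ℝ) := by
      exact_mod_cast (Finset.card_le_card hsub).trans Finset.card_biUnion_le
    refine h1.trans ?_
    rw [← Finset.coe_image, ← hmeas, Finset.mul_sum]
    refine Finset.sum_le_sum fun j _ => ?_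
    rw [hcard]
    exact Nat.floor_le (by positivity)

end Discretization

section Separation

open Filter Topology

section
variable {V : Type*} [NormedAddCommGroup V] [NormedSpace ℝ V]

/-- The affine functional `x ↦ l x - u`. -/
def affineSub (l : V →ₗ[ℝ] ℝ) (u : ℝ) : V →ᵃ[ℝ] ℝ :=
  l.toAffineMap - AffineMap.const ℝ V u

@[simp]
lemma affineSub_apply (l : V →ₗ[ℝ] ℝ) (u : ℝ) (x : V) : affineSub l u x = l x - u := rfl

lemma affineSub_linear (l : V →ₗ[ℝ] ℝ) (u : ℝ) : (affineSub l u).linear = l := by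
  ext x
  simp [affineSub]

lemma exists_pos_of_mem_interior_convexHull {f : V →ᵃ[ℝ] ℝ} (hf : f.linear ≠ 0) {s : Set V}
    {p : V} (hp : p ∈ interior (convexHull ℝ s)) (h0 : f p = 0) : ∃ x ∈ s, 0 < f x := by
  by_contra! hs
  have hsub : convexHull ℝ s ⊆ f ⁻¹' Set.Iic 0 :=
    convexHull_min hs ((convex_Iic 0).affine_preimage f)
  obtain ⟨v, hv⟩ : ∃ v, 0 < f.linear v := by
    obtain ⟨v, hv⟩ : ∃ v, f.linear v ≠ 0 := by
      by_contra! h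
      exact hf (LinearMap.ext h)
    rcases hv.lt_or_gt with h | h
    · exact ⟨-v, by simpa using h⟩
    · exact ⟨v, h⟩
  have hlim : Tendsto (fun t : ℝ => p + t • v) (𝓝[>] 0) (𝓝 p) := by
    have : Continuous fun t : ℝ => p + t • v := by fun_prop
    simpa using (this.tendsto 0).mono_left nhdsWithin_le_nhds
  obtain ⟨t, ht, ht0⟩ :=
    ((hlim.eventually (mem_interior_iff_mem_nhds.1 hp)).and self_mem_nhdsWithin).exists
  have h1 : f (p + t • v) ≤ 0 := hsub ht
  have h2 : f (p + t • v) = t * f.linear v := by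
    have := f.map_vadd p (t • v)
    simpa [h0, add_comm] using this
  exact absurd h1 (by rw [h2]; exact (mul_pos ht0 hv).not_ge)

lemma exists_neg_of_mem_interior_convexHull {f : V →ᵃ[ℝ] ℝ} (hf : f.linear ≠ 0) {s : Set V}
    {p : V} (hp : p ∈ interior (convexHull ℝ s)) (h0 : f p = 0) : ∃ x ∈ s, f x < 0 := by
  obtain ⟨x, hx, h⟩ := exists_pos_of_mem_interior_convexHull (f := -f) (by simpa using hf) hp
    (by simpa using h0)
  exact ⟨x, hx, by simpa using h⟩

lemma exists_affine_eq_zero_of_affineSpan_ne_top [Nontrivial V] {s : Set V}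
    (hs : affineSpan ℝ s ≠ ⊤) : ∃ f : V →ᵃ[ℝ] ℝ, f.linear ≠ 0 ∧ ∀ x ∈ s, f x = 0 := by
  rcases s.eq_empty_or_nonempty with rfl | ⟨p, hp⟩
  · obtain ⟨l, hl⟩ := exists_ne (0 : Module.Dual ℝ V)
    exact ⟨affineSub l 0, by rwa [affineSub_linear], by simp⟩
  · have hd : (affineSpan ℝ s).direction < ⊤ := by
      rw [lt_top_iff_ne_top]
      intro h
      exact hs ((AffineSubspace.direction_eq_top_iff_of_nonempty
        ⟨p, subset_affineSpan ℝ s hp⟩).1 h)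
    obtain ⟨l, hl, hk⟩ := Submodule.exists_le_ker_of_lt_top _ hd
    refine ⟨affineSub l (l p), by rwa [affineSub_linear], fun x hx => ?_⟩
    have := hk (AffineSubspace.vsub_mem_direction (subset_affineSpan ℝ s hx)
      (subset_affineSpan ℝ s hp))
    simpa using this

lemma exists_affine_separating {s t r : Set V} (hs : (interior (convexHull ℝ s)).Nonempty)
    (ht : (interior (convexHull ℝ t)).Nonempty) (hr : (interior (convexHull ℝ r)).Nonempty)
    (hdisj : Disjoint (interior (convexHull ℝ s))
      (convexHull ℝ (interior (convexHull ℝ t) ∪ interior (convexHull ℝ r)))) :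
    ∃ f : V →ᵃ[ℝ] ℝ, f.linear ≠ 0 ∧ (∀ x ∈ s, 0 ≤ f x) ∧ (∀ x ∈ t, f x ≤ 0) ∧
      ∀ x ∈ r, f x ≤ 0 := by
  obtain ⟨l, u, h1, h2⟩ := geometric_hahn_banach_open (convex_convexHull ℝ s).interior
    isOpen_interior (convex_convexHull ℝ _) hdisj
  have hcl : ∀ {w : Set V}, (interior (convexHull ℝ w)).Nonempty →
      w ⊆ closure (interior (convexHull ℝ w)) := fun {w} hw => by
    rw [(convex_convexHull ℝ w).closure_interior_eq_closure_of_nonempty_interior hw]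
    exact (subset_convexHull ℝ w).trans subset_closure
  have hle : ∀ {w : Set V}, (interior (convexHull ℝ w)).Nonempty →
      (∀ x ∈ interior (convexHull ℝ w), u ≤ l x) → ∀ x ∈ w, u ≤ l x := fun {w} hw h x hx =>
    closure_minimal (t := {x | u ≤ l x}) h (isClosed_le continuous_const l.continuous)
      (hcl hw hx)
  have h2t : ∀ x ∈ interior (convexHull ℝ t), u ≤ l x := fun x hx =>
    h2 x (subset_convexHull ℝ _ (Or.inl hx))
  have h2r : ∀ x ∈ interior (convexHull ℝ r), u ≤ l x := fun x hx =>
    h2 x (subset_convexHull ℝ _ (Or.inr hx))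
  refine ⟨affineSub (-(l : V →ₗ[ℝ] ℝ)) (-u), ?_, fun x hx => ?_, fun x hx => ?_, fun x hx => ?_⟩
  · rw [affineSub_linear, neg_ne_zero]
    intro h
    obtain ⟨x, hx⟩ := hs
    obtain ⟨y, hy⟩ := ht
    have e : ∀ z, l z = 0 := fun z => LinearMap.congr_fun h z
    have := h1 x hx
    have := h2t y hy
    linarith [e x, e y]
  · have : l x ≤ u := closure_minimal (t := {x | l x ≤ u}) (fun y hy => (h1 y hy).le)
      (isClosed_le l.continuous continuous_const) (hcl hs hx)
    simpa using this
  · simpa using hle ht h2t x hx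
  · simpa using hle hr h2r x hx

end

lemma exists_affine_eq_zero_pair (q r : Plane) :
    ∃ f : Plane →ᵃ[ℝ] ℝ, f.linear ≠ 0 ∧ f q = 0 ∧ f r = 0 := by
  have hne : affineSpan ℝ ({q, r} : Set Plane) ≠ ⊤ := by
    intro h
    have h1 := collinear_pair ℝ q r
    rw [collinear_iff_finrank_le_one, ← direction_affineSpan, h, AffineSubspace.direction_top,
      finrank_top] at h1
    simp at h1
  obtain ⟨f, hf, h⟩ := exists_affine_eq_zero_of_affineSpan_ne_top hne
  exact ⟨f, hf, h q (by simp), h r (by simp)⟩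

/-- In a non-transversal triple of point sets with nondegenerate hulls, each set can be separated
from the other two. -/
lemma exists_affine_separating_of_not_cuts {S T R : Finset Plane}
    (hS : (interior (convexHull ℝ (S : Set Plane))).Nonempty)
    (hT : (interior (convexHull ℝ (T : Set Plane))).Nonempty)
    (hR : (interior (convexHull ℝ (R : Set Plane))).Nonempty)
    (h : ¬ ∃ f : Plane →ᵃ[ℝ] ℝ, f.linear ≠ 0 ∧ Cuts f S ∧ Cuts f T ∧ Cuts f R) :
    ∃ f : Plane →ᵃ[ℝ] ℝ, f.linear ≠ 0 ∧ (∀ x ∈ S, 0 ≤ f x) ∧ (∀ x ∈ T, f x ≤ 0) ∧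
      ∀ x ∈ R, f x ≤ 0 := by
  refine exists_affine_separating hS hT hR ?_
  rw [Set.disjoint_left]
  intro p hp hp'
  rw [convexHull_union hT hR, (convex_convexHull ℝ _).interior.convexHull_eq,
    (convex_convexHull ℝ _).interior.convexHull_eq, mem_convexJoin] at hp'
  obtain ⟨q, hq, r, hr, hpqr⟩ := hp'
  obtain ⟨f, hf, hfq, hfr⟩ := exists_affine_eq_zero_pair q r
  have hfp : f p = 0 := by
    have : f p ∈ segment ℝ (f q) (f r) := by
      rw [← image_segment]
      exact ⟨p, hpqr, rfl⟩
    simpa [hfq, hfr] using this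
  exact h ⟨f, hf, ⟨exists_pos_of_mem_interior_convexHull hf hp hfp,
    exists_neg_of_mem_interior_convexHull hf hp hfp⟩,
    ⟨exists_pos_of_mem_interior_convexHull hf hq hfq,
    exists_neg_of_mem_interior_convexHull hf hq hfq⟩,
    ⟨exists_pos_of_mem_interior_convexHull hf hr hfr,
    exists_neg_of_mem_interior_convexHull hf hr hfr⟩⟩

end Separation

/-- Lower bound `P(2) ≥ π / (2 arcsin (1/3))`: for any `c > (2/π) arcsin (1/3)` and any `n₀`
there is a set of `n ≥ n₀` points in ℝ² such that in any non-transversal family of three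
subsets, some subset has fewer than `c·n` points. -/
theorem nontransversal_triple_lower_bound (c : ℝ)
    (hc : (2 / Real.pi) * Real.arcsin (1 / 3) < c) (n₀ : ℕ) :
    ∃ S : Finset (Fin 2 → ℝ), n₀ ≤ S.card ∧
      ∀ S₁ S₂ S₃ : Finset (Fin 2 → ℝ), S₁ ⊆ S → S₂ ⊆ S → S₃ ⊆ S →
        (¬ ∃ f : (Fin 2 → ℝ) →ᵃ[ℝ] ℝ, f.linear ≠ 0 ∧
            Cuts f S₁ ∧ Cuts f S₂ ∧ Cuts f S₃) →
        ((S₁.card : ℝ) < c * S.card ∨ (S₂.card : ℝ) < c * S.card ∨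
          (S₃.card : ℝ) < c * S.card) := by
  set τ := 2 / Real.pi * Real.arcsin (1 / 3) with hτ
  have hτ0 : 0 ≤ τ := by
    have := Real.arcsin_nonneg.2 (show (0 : ℝ) ≤ 1 / 3 by norm_num)
    positivity
  obtain ⟨ε, hε, hεc⟩ : ∃ ε > 0, τ + 3 * ε < c := ⟨(c - τ) / 6, by linarith, by linarith⟩
  have hc0 : 0 < c := by linarith
  obtain ⟨k, hwedge, hline⟩ := exists_grid hε
  set J := Fintype.piFinset fun _ : Fin 3 => Finset.Icc (-k : ℤ) k
  obtain ⟨N₁, hN₁⟩ := exists_nat_gt (c * J.card / (c - (τ + 3 * ε)))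
  set N := N₁ + n₀ + J.card
  obtain ⟨S, hcard, hS⟩ := exists_finset_card_le_measure planeMeasure (measurable_gridCell k)
    (gridCell_mem k) N
  have hgap : N * (τ + 3 * ε) < c * S.card := by
    rw [div_lt_iff₀ (by linarith)] at hN₁
    have hN : (N₁ : ℝ) ≤ N := by exact_mod_cast (show N₁ ≤ N by omega)
    nlinarith
  have hcount : ∀ T ⊆ S, ∀ Q : Set Plane, (∀ x ∈ T, x ∈ Q) →
      planeMeasure.real (gridCell k ⁻¹' (gridCell k '' Q)) ≤ τ + 3 * ε →
      (T.card : ℝ) < c * S.card := by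
    intro T hT Q hTQ hQ
    refine (hS T hT).trans_lt (lt_of_le_of_lt ?_ hgap)
    gcongr
    exact (MeasureTheory.measureReal_mono (Set.preimage_mono (Set.image_mono hTQ))).trans hQ
  have hthick : ∀ T ⊆ S, c * S.card ≤ T.card →
      (interior (convexHull ℝ (T : Set Plane))).Nonempty := by
    intro T hT hTc
    rw [interior_convexHull_nonempty_iff_affineSpan_eq_top]
    by_contra hspan
    obtain ⟨f, hf, hf0⟩ := exists_affine_eq_zero_of_affineSpan_ne_top hspan
    exact absurd hTc (hcount T hT {q | f q = 0} hf0 ((hline f hf).trans (by linarith))).not_ge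
  refine ⟨S, ?_, ?_⟩
  · have : (n₀ : ℝ) ≤ S.card := by
      refine le_trans ?_ hcard
      push_cast [N]
      linarith [N₁.cast_nonneg (α := ℝ)]
    exact_mod_cast this
  intro A B C hA hB hC hcut
  by_contra! hbig
  obtain ⟨bA, bB, bC⟩ := hbig
  have iA := hthick A hA bA
  have iB := hthick B hB bB
  have iC := hthick C hC bC
  obtain ⟨f, hf, fA, fB, fC⟩ := exists_affine_separating_of_not_cuts iA iB iC hcut
  obtain ⟨g, hg, gB, gA, gC⟩ := exists_affine_separating_of_not_cuts iB iA iC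
    (fun ⟨f, hf, cB, cA, cC⟩ => hcut ⟨f, hf, cA, cB, cC⟩)
  obtain ⟨h, hh, hhC, hhA, hhB⟩ := exists_affine_separating_of_not_cuts iC iA iB
    (fun ⟨f, hf, cC, cA, cB⟩ => hcut ⟨f, hf, cA, cB, cC⟩)
  have hpole : pole ≠ 0 := norm_ne_zero_iff.1 (by simp [norm_pole])
  rcases isRotationInvariant_ballMeasure.exists_small_signCone (by simp) hpole
    (coeffVector_ne_zero hf) (coeffVector_ne_zero hg) (coeffVector_ne_zero hh) with hs | hs | hs
  · exact absurd bA (hcount A hA {q | 0 ≤ f q ∧ g q ≤ 0 ∧ h q ≤ 0}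
      (fun x hx => ⟨fA x hx, gA x hx, hhA x hx⟩)
      ((hwedge f g h hf hg hh).trans (by linarith))).not_ge
  · exact absurd bB (hcount B hB {q | 0 ≤ g q ∧ f q ≤ 0 ∧ h q ≤ 0}
      (fun x hx => ⟨gB x hx, fB x hx, hhB x hx⟩)
      ((hwedge g f h hg hf hh).trans (by linarith))).not_ge
  · exact absurd bC (hcount C hC {q | 0 ≤ h q ∧ f q ≤ 0 ∧ g q ≤ 0}
      (fun x hx => ⟨hhC x hx, fC x hx, gC x hx⟩)
      ((hwedge h f g hh hf hg).trans (by linarith))).not_ge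
end
end

section
/- For every integer d ≥ 2, every finite set X of n points in ℝ^d admits a line (a 1-dimensional affine subspace) whose regression depth with respect to X is at least n/(2d−1). (Equivalently, R(d,1) ≤ 2d−1.) -/
noncomputable section

/-- Regression depth of a flat `F` with respect to a finite point set `X`, where
ℝ^d is regarded as ℝ^k × ℝ^(d−k), the first factor carrying the independent
variables: the minimum, over all nonconstant affine functionals `f` vanishing on
`F` and all vertical affine functionals `g = h ∘ π` (with `h` a nonconstant
affine functional on ℝ^k and `π` the projection onto the first factor), of the
number of points `x ∈ X` with `f x * g x ≤ 0` (the points of `X` in the closed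
double wedge bounded by the hyperplane `{f = 0}` containing `F` and the vertical
hyperplane `{g = 0}`). -/
def regDepth {k m : ℕ} (F : AffineSubspace ℝ ((Fin k → ℝ) × (Fin m → ℝ)))
    (X : Finset ((Fin k → ℝ) × (Fin m → ℝ))) : ℕ :=
  sInf { n : ℕ | ∃ f : ((Fin k → ℝ) × (Fin m → ℝ)) →ᵃ[ℝ] ℝ, f.linear ≠ 0 ∧
    (∀ x ∈ F, f x = 0) ∧
    ∃ h : (Fin k → ℝ) →ᵃ[ℝ] ℝ, h.linear ≠ 0 ∧
      n = {x ∈ (X : Set ((Fin k → ℝ) × (Fin m → ℝ))) | f x * h x.1 ≤ 0}.ncard }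

/-- `F` is a (nonempty) affine flat of dimension `j`. -/
def IsFlatOfDim {k m : ℕ} (j : ℕ)
    (F : AffineSubspace ℝ ((Fin k → ℝ) × (Fin m → ℝ))) : Prop :=
  (F : Set ((Fin k → ℝ) × (Fin m → ℝ))).Nonempty ∧ Module.finrank ℝ F.direction = j

open MeasureTheory Polynomial Metric Filter Topology

lemma exists_polynomial_eval_eq_det_one_add_smul {E : Type*} [NormedAddCommGroup E]
    [NormedSpace ℝ E] [FiniteDimensional ℝ E] (A : E →L[ℝ] E) :
    ∃ P : ℝ[X], P.natDegree ≤ Module.finrank ℝ E ∧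
      ∀ s : ℝ, P.eval s = (1 + s • A).det := by
  let b := Module.finBasis ℝ E
  let M := LinearMap.toMatrix b b (A : E →ₗ[ℝ] E)
  refine ⟨((X : ℝ[X]) • M.map C + (1 : Matrix _ _ ℝ).map C).det, ?_, fun s => ?_⟩
  · simpa using natDegree_det_X_add_C_le M 1
  · have h : (1 + s • A).det = LinearMap.det ((1 + s • A : E →L[ℝ] E) : E →ₗ[ℝ] E) := rfl
    rw [h, ← LinearMap.det_toMatrix b, ← Polynomial.coe_evalRingHom, RingHom.map_det]
    congr 1
    ext i j
    simp [M, Matrix.one_apply, LinearMap.toMatrix_apply, Finsupp.single_apply, add_comm, eq_comm,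
      apply_ite, mul_comm s]

lemma det_one_add_pos {E : Type*} [NormedAddCommGroup E]
    [NormedSpace ℝ E] [FiniteDimensional ℝ E] (A : E →L[ℝ] E) (hA : ‖A‖ < 1) :
    0 < (1 + A).det := by
  have : CompleteSpace E := FiniteDimensional.complete ℝ E
  have hunit : ∀ s ∈ Set.Icc (0 : ℝ) 1, (1 + s • A).det ≠ 0 := by
    intro s hs h0
    have hlt : ‖-(s • A)‖ < 1 := by
      rw [norm_neg, norm_smul, Real.norm_eq_abs, abs_of_nonneg hs.1]
      nlinarith [hs.1, hs.2, norm_nonneg A]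
    have hu := isUnit_one_sub_of_norm_lt_one hlt
    rw [sub_neg_eq_add] at hu
    have h2 := (hu.map (ContinuousLinearMap.toLinearMapRingHom (R₁ := ℝ) (M₁ := E))).map
      (LinearMap.det (M := E) (A := ℝ))
    exact h2.ne_zero h0
  have hc : Continuous fun s : ℝ => (1 + s • A).det := by
    obtain ⟨P, -, hP⟩ := exists_polynomial_eval_eq_det_one_add_smul A
    simpa only [← hP] using P.continuous
  by_contra! hneg
  have h0 : (1 + (0 : ℝ) • A).det = 1 := by simp [ContinuousLinearMap.det]
  obtain ⟨s, hs, hs0⟩ := intermediate_value_Icc' zero_le_one hc.continuousOn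
    (show (0 : ℝ) ∈ Set.Icc _ _ by simp only [h0, one_smul]; exact ⟨hneg, zero_le_one⟩)
  exact hunit s hs hs0

open Classical in
lemma lipschitzWith_ite_norm_le {E F : Type*} [NormedAddCommGroup E] [NormedSpace ℝ E]
    [NormedAddCommGroup F] {R : ℝ} {K : NNReal} {u : E → F}
    (hu : LipschitzOnWith K u (closedBall 0 R)) (h0 : ∀ x, ‖x‖ = R → u x = 0) :
    LipschitzWith K fun x => if ‖x‖ ≤ R then u x else 0 := by
  have key : ∀ x y : E, ‖x‖ ≤ R → R < ‖y‖ → dist (u x) 0 ≤ K * dist x y := by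
    intro x y hx hy
    have hc : Continuous fun s : ℝ => ‖x + s • (y - x)‖ := by fun_prop
    obtain ⟨s, hs, hsR⟩ := intermediate_value_Icc zero_le_one hc.continuousOn
      (show R ∈ Set.Icc _ _ by simpa using ⟨hx, hy.le⟩)
    have := hu.dist_le_mul x (by simpa using hx) (x + s • (y - x)) (by simpa using hsR.le)
    rw [h0 _ hsR] at this
    refine this.trans (mul_le_mul_of_nonneg_left ?_ K.2)
    rw [dist_self_add_right, norm_smul, dist_comm, dist_eq_norm, Real.norm_eq_abs,
      abs_of_nonneg hs.1]
    nlinarith [hs.2, norm_nonneg (y - x)]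
  refine LipschitzWith.of_dist_le_mul fun x y => ?_
  by_cases hx : ‖x‖ ≤ R <;> by_cases hy : ‖y‖ ≤ R
  · simpa [hx, hy] using hu.dist_le_mul x (by simpa using hx) y (by simpa using hy)
  · simpa [hx, hy] using key x y hx (not_le.1 hy)
  · simpa [hx, hy, dist_comm] using key y x hy (not_le.1 hx)
  · simp only [hx, hy, if_false, dist_self]; positivity

section

variable {E : Type*} [NormedAddCommGroup E] [InnerProductSpace ℝ E] [FiniteDimensional ℝ E]

lemma image_ball_add_smul_eq {R : ℝ} {K : NNReal} {u : E → E} (hu : LipschitzWith K u)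
    (h0 : ∀ x, R ≤ ‖x‖ → u x = 0) {s : ℝ} (hs : 0 ≤ s) (hsK : s * K < 1) :
    Function.Injective (fun x => x + s • u x) ∧
      (fun x => x + s • u x) '' ball 0 R = ball 0 R := by
  have : CompleteSpace E := FiniteDimensional.complete ℝ E
  set h : E → E := fun x => x + s • u x with hh
  let c : NNReal := ⟨s, hs⟩ * K
  have hcs : (c : ℝ) = s * K := rfl
  have happ : ApproximatesLinearOn h ((ContinuousLinearEquiv.refl ℝ E : E ≃L[ℝ] E) : E →L[ℝ] E)
      Set.univ c := by
    intro x _ y _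
    have e : h x - h y - ((ContinuousLinearEquiv.refl ℝ E : E ≃L[ℝ] E) : E →L[ℝ] E) (x - y)
        = s • (u x - u y) := by
      simp only [hh, ContinuousLinearEquiv.coe_refl, ContinuousLinearMap.coe_id', id, smul_sub]
      abel
    rw [e, norm_smul, Real.norm_eq_abs, abs_of_nonneg hs]
    have := hu.dist_le_mul x y
    rw [dist_eq_norm, dist_eq_norm] at this
    have h2 := mul_le_mul_of_nonneg_left this hs
    rwa [hcs, mul_assoc]
  have hc : Subsingleton E ∨
      c < ‖((ContinuousLinearEquiv.refl ℝ E).symm : E →L[ℝ] E)‖₊⁻¹ := by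
    rcases subsingleton_or_nontrivial E with hE | hE
    · exact Or.inl hE
    · right
      have : ‖((ContinuousLinearEquiv.refl ℝ E).symm : E →L[ℝ] E)‖₊ = 1 := by
        ext; simp
      rw [this, inv_one, ← NNReal.coe_lt_coe]
      rwa [hcs]
  have hbij : Function.Bijective h := (happ.toHomeomorph h hc).bijective
  refine ⟨hbij.1, ?_⟩
  have hfix : ∀ x, x ∉ ball (0 : E) R → h x = x := fun x hx => by
    simp [hh, h0 x (by simpa using hx)]
  ext y
  constructor
  · rintro ⟨x, hx, rfl⟩
    by_contra hy
    exact hy (by rwa [hbij.1 (hfix _ hy)])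
  · intro hy
    obtain ⟨x, rfl⟩ := hbij.2 y
    refine ⟨x, ?_, rfl⟩
    by_contra hx
    exact hx (by rwa [hfix x hx] at hy)

variable [MeasurableSpace E] [BorelSpace E]

lemma setIntegral_det_one_add_smul_fderiv {R : ℝ} {K : NNReal} {u : E → E}
    (hd : Differentiable ℝ u) (hu : LipschitzOnWith K u (closedBall 0 R))
    (h0 : ∀ x, ‖x‖ = R → u x = 0) {s : ℝ} (hs : 0 ≤ s) (hsK : s * K < 1) :
    ∫ x in ball (0 : E) R, (1 + s • fderiv ℝ u x).det = volume.real (ball (0 : E) R) := by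
  classical
  obtain ⟨hinj, himg⟩ := image_ball_add_smul_eq (lipschitzWith_ite_norm_le hu h0)
    (R := R) (fun x hx => by
      rcases hx.eq_or_lt with h | h
      · simp [h0 x h.symm]
      · simp [not_le.2 h]) hs hsK
  set h : E → E := fun x => x + s • (if ‖x‖ ≤ R then u x else 0) with hh
  have hder : ∀ x ∈ ball (0 : E) R,
      HasFDerivWithinAt h (1 + s • fderiv ℝ u x) (ball 0 R) x := by
    intro x hx
    have h1 : HasFDerivAt (fun x => x + s • u x) (1 + s • fderiv ℝ u x) x :=
      (hasFDerivAt_id x).add ((hd x).hasFDerivAt.const_smul s)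
    refine h1.hasFDerivWithinAt.congr (fun y hy => ?_) ?_
    · have : ‖y‖ ≤ R := by simpa using (mem_ball.1 hy).le
      simp [hh, this]
    · have : ‖x‖ ≤ R := by simpa using (mem_ball.1 hx).le
      simp [hh, this]
  have hcv := integral_image_eq_integral_abs_det_fderiv_smul volume
    measurableSet_ball hder hinj.injOn (fun _ => (1 : ℝ))
  rw [himg] at hcv
  simp only [smul_eq_mul, mul_one, integral_const, measureReal_restrict_apply_univ] at hcv
  rw [hcv]
  refine setIntegral_congr_fun measurableSet_ball fun x hx => ?_
  refine (abs_of_pos (det_one_add_pos _ ?_)).symm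
  rw [norm_smul, Real.norm_eq_abs, abs_of_nonneg hs]
  refine lt_of_le_of_lt (mul_le_mul_of_nonneg_left ?_ hs) hsK
  exact norm_fderiv_le_of_lipschitzOn ℝ
    (Filter.mem_of_superset (isOpen_ball.mem_nhds hx) ball_subset_closedBall) hu

/-- There is no `C¹` retraction of a closed ball onto its boundary sphere. -/
theorem no_contDiff_retraction {R : ℝ} (hR : 0 < R) {r : E → E} (hr : ContDiff ℝ 1 r)
    (hnorm : ∀ x, ‖r x‖ = R) (hid : ∀ x, ‖x‖ = R → r x = x) : False := by
  set u : E → E := fun x => r x - x with hu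
  have huc : ContDiff ℝ 1 u := hr.sub contDiff_id
  obtain ⟨K, hK⟩ := huc.contDiffOn.exists_lipschitzOnWith one_ne_zero
    (convex_closedBall (0 : E) R) (isCompact_closedBall 0 R)
  have h0 : ∀ x, ‖x‖ = R → u x = 0 := fun x hx => by simp [hu, hid x hx]
  set D := Module.finrank ℝ E
  let v : ℕ → ℝ := fun j => (j : ℝ) / ((D + 1) * (K + 1))
  have hKpos : (0 : ℝ) < (D + 1) * (K + 1) := by positivity
  have hv0 : ∀ j, 0 ≤ v j := fun j => by positivity
  have hvK : ∀ j ∈ Finset.range (D + 1), v j * K < 1 := by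
    intro j hj
    have hj' : (j : ℝ) < D + 1 := by exact_mod_cast Finset.mem_range.1 hj
    rw [div_mul_eq_mul_div, div_lt_one hKpos]
    nlinarith [K.2, (Nat.cast_nonneg j : (0 : ℝ) ≤ j)]
  have hinj : Set.InjOn v (Finset.range (D + 1)) := by
    intro i _ j _ hij
    simpa [v, div_left_inj' hKpos.ne'] using hij
  have hpt : ∀ x, (1 + (1 : ℝ) • fderiv ℝ u x).det = ∑ j ∈ Finset.range (D + 1),
      (Lagrange.basis (Finset.range (D + 1)) v j).eval 1 * (1 + v j • fderiv ℝ u x).det := by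
    intro x
    obtain ⟨P, hdeg, hP⟩ := exists_polynomial_eval_eq_det_one_add_smul (fderiv ℝ u x)
    rw [← hP]
    conv_lhs => rw [Lagrange.eq_interpolate (f := P) hinj (by
      rw [Finset.card_range]
      exact lt_of_le_of_lt degree_le_natDegree (by exact_mod_cast Nat.lt_succ_of_le hdeg))]
    simp [Lagrange.interpolate_apply, eval_finsetSum, hP, mul_comm]
  have hsum : ∑ j ∈ Finset.range (D + 1),
      (Lagrange.basis (Finset.range (D + 1)) v j).eval (1 : ℝ) = 1 := by
    rw [← eval_finsetSum, Lagrange.sum_basis hinj ⟨0, by simp⟩, eval_one]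
  have hzero : ∀ x, (1 + (1 : ℝ) • fderiv ℝ u x).det = 0 := by
    intro x
    have hrd : HasFDerivAt r (fderiv ℝ r x) x := (hr.differentiable one_ne_zero x).hasFDerivAt
    have hfd : fderiv ℝ u x = fderiv ℝ r x - 1 := (hrd.sub (hasFDerivAt_id x)).fderiv
    rw [one_smul, hfd, add_sub_cancel]
    by_contra hne
    have hsurj : Function.Surjective (fderiv ℝ r x) := by
      have := (LinearMap.isUnit_iff_isUnit_det (fderiv ℝ r x : E →ₗ[ℝ] E)).2 (Ne.isUnit hne)
      exact ((Module.End.isUnit_iff _).1 this).2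
    have horth : ∀ w, inner ℝ (r x) (fderiv ℝ r x w) = 0 := by
      intro w
      have h1 := (hrd.norm_sq).unique
        ((hasFDerivAt_const (R ^ 2) x).congr_of_eventuallyEq
          (Filter.Eventually.of_forall fun y => by simp [hnorm y]))
      have h2 := congrArg (fun L => L w) h1
      simpa using h2
    obtain ⟨w, hw⟩ := hsurj (r x)
    have := horth w
    rw [hw, real_inner_self_eq_norm_sq, hnorm] at this
    exact hR.ne' (by simpa using this)
  have hcont : ∀ s : ℝ, Continuous fun x => (1 + s • fderiv ℝ u x).det := fun s =>
    ContinuousLinearMap.continuous_det.comp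
      (continuous_const.add ((huc.continuous_fderiv one_ne_zero).const_smul s))
  have hint : ∫ x in ball (0 : E) R, (1 + (1 : ℝ) • fderiv ℝ u x).det
      = volume.real (ball (0 : E) R) := by
    simp_rw [hpt]
    rw [integral_finsetSum]
    · calc _ = ∑ j ∈ Finset.range (D + 1),
          (Lagrange.basis (Finset.range (D + 1)) v j).eval (1 : ℝ)
            * volume.real (ball (0 : E) R) := Finset.sum_congr rfl fun j hj => by
              rw [integral_const_mul, setIntegral_det_one_add_smul_fderiv
                (huc.differentiable one_ne_zero) hK h0 (hv0 j) (hvK j hj)]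
        _ = _ := by rw [← Finset.sum_mul, hsum, one_mul]
    · intro j _
      exact (((hcont (v j)).continuousOn.integrableOn_compact
        (isCompact_closedBall 0 R)).mono_set ball_subset_closedBall).const_mul _
  simp only [hzero, integral_zero] at hint
  have hpos : 0 < volume.real (ball (0 : E) R) :=
    ENNReal.toReal_pos (measure_ball_pos volume 0 hR).ne' measure_ball_lt_top.ne
  exact hpos.ne hint

end

section

variable {E : Type*} [NormedAddCommGroup E] [InnerProductSpace ℝ E] [FiniteDimensional ℝ E]

lemma zero_notMem_convexHull_of_card_lt {ι : Type*} [Fintype ι] (w : ι → E) :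
    (0 : E) ∉ convexHull ℝ {v | (Module.finrank ℝ E + 1) * Fintype.card {i // inner ℝ (w i) v ≤ 0}
      < Fintype.card ι} := by
  classical
  intro h0
  rw [convexHull_eq_union] at h0
  simp only [Set.mem_iUnion, exists_prop] at h0
  obtain ⟨T, hT, hind, hmem⟩ := h0
  have hcard : T.card ≤ Module.finrank ℝ E + 1 := by
    simpa using hind.card_le_finrank_succ.trans
      (Nat.succ_le_succ (Submodule.finrank_le _))
  have hTne : T.Nonempty := by
    rw [← Finset.coe_nonempty, ← convexHull_nonempty_iff (𝕜 := ℝ)]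
    exact ⟨0, hmem⟩
  obtain ⟨i, hi⟩ : ∃ i, ∀ v ∈ T, 0 < inner ℝ (w i) v := by
    by_contra! hbad
    have hcover : (Finset.univ : Finset ι) ⊆
        T.biUnion fun v => Finset.univ.filter fun i => inner ℝ (w i) v ≤ 0 := by
      intro i _
      obtain ⟨v, hv, hle⟩ := hbad i
      simp only [Finset.mem_biUnion, Finset.mem_filter, Finset.mem_univ, true_and]
      exact ⟨v, hv, hle⟩
    have h1 := (Finset.card_le_card hcover).trans Finset.card_biUnion_le
    have h2 : ∑ v ∈ T, (Module.finrank ℝ E + 1) *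
        (Finset.univ.filter fun i => inner ℝ (w i) v ≤ 0).card
        < ∑ _v ∈ T, Fintype.card ι := by
      refine Finset.sum_lt_sum_of_nonempty hTne fun v hv => ?_
      have := hT hv
      rwa [Set.mem_ofPred_eq, Fintype.card_subtype] at this
    rw [← Finset.mul_sum, Finset.sum_const, smul_eq_mul] at h2
    rw [Finset.card_univ] at h1
    have h3 := Nat.mul_le_mul_left (Module.finrank ℝ E + 1) h1
    have h4 := Nat.mul_le_mul_right (Fintype.card ι) hcard
    omega
  have hconv : Convex ℝ {v : E | 0 < inner ℝ (w i) v} :=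
    convex_halfSpace_gt (innerSL ℝ (w i)).isLinear 0
  have : 0 < inner ℝ (w i) (0 : E) := convexHull_min (fun v hv => hi v hv) hconv hmem
  simp at this

/-- A finite family of continuous vector fields pointing into a ball has a common centerpoint:
a point at which the origin has large Tukey depth with respect to the values of the fields. -/
theorem exists_deep_point_of_inward {ι : Type*} [Fintype ι] (w : ι → E → E)
    (hw : ∀ i, Continuous (w i)) {R : ℝ} (hR : 0 < R)
    (hin : ∀ i x, ‖x‖ = R → inner ℝ (w i x) x < 0) :
    ∃ p, ∀ v, Fintype.card ι ≤
      (Module.finrank ℝ E + 1) * Fintype.card {i // inner ℝ (w i p) v ≤ 0} := by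
  classical
  by_contra! hcon
  set Φ : E → Set E := fun p => {v | (Module.finrank ℝ E + 1) *
    Fintype.card {i // inner ℝ (w i p) v ≤ 0} < Fintype.card ι} with hΦ
  have hpos : 0 < Fintype.card ι := by
    obtain ⟨v, hv⟩ := hcon 0
    omega
  have hconst : ∀ p v, v ∈ Φ p → ∀ᶠ q in nhds p, v ∈ Φ q := by
    intro p v hv
    have : ∀ᶠ q in nhds p, ∀ i, 0 < inner ℝ (w i p) v → 0 < inner ℝ (w i q) v := by
      refine Filter.eventually_all.2 fun i => ?_
      by_cases hi : 0 < inner ℝ (w i p) v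
      · have hc : Continuous fun q => inner ℝ (w i q) v := (hw i).inner continuous_const
        filter_upwards [hc.continuousAt.eventually (lt_mem_nhds hi)] with q hq _ using hq
      · exact Filter.Eventually.of_forall fun q h => absurd h hi
    filter_upwards [this] with q hq
    refine lt_of_le_of_lt (Nat.mul_le_mul_left _ ?_) hv
    refine Fintype.card_subtype_mono _ _ fun i hi => ?_
    exact not_lt.1 fun h => (not_lt.2 hi) (hq i h)
  have hneg : ∀ p, ‖p‖ = R → ∀ᶠ q in nhds p, -q ∈ Φ q := by
    intro p hp
    have : ∀ᶠ q in nhds p, ∀ i, inner ℝ (w i q) q < 0 := by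
      refine Filter.eventually_all.2 fun i => ?_
      have hc : Continuous fun q => inner ℝ (w i q) q := (hw i).inner continuous_id
      exact hc.continuousAt.eventually (gt_mem_nhds (hin i p hp))
    filter_upwards [this] with q hq
    have : Fintype.card {i // inner ℝ (w i q) (-q) ≤ 0} = 0 := by
      rw [Fintype.card_eq_zero_iff]
      refine ⟨fun i => ?_⟩
      have h1 := i.2
      rw [inner_neg_right] at h1
      linarith [hq i]
    rwa [hΦ, Set.mem_ofPred_eq, this, mul_zero]
  obtain ⟨V, hV⟩ := exists_contMDiffMap_forall_mem_convex_of_local (n := 1)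
    (modelWithCornersSelf ℝ E) (t := fun p => {v | v ∈ convexHull ℝ (Φ p) ∧ (‖p‖ = R → v = -p)})
    (fun p => (convex_convexHull ℝ (Φ p)).inter (by
      intro a ha b hb s t _ _ hst hp
      rw [ha hp, hb hp, ← add_smul, hst, one_smul])) (by
    intro p
    by_cases hp : ‖p‖ = R
    · exact ⟨_, hneg p hp, fun q => -q, contDiff_neg.contMDiff.contMDiffOn,
        fun q hq => ⟨subset_convexHull ℝ _ hq, fun _ => rfl⟩⟩
    · obtain ⟨v, hv⟩ := hcon p
      have hne : ∀ᶠ q in nhds p, ‖q‖ ≠ R := continuous_norm.continuousAt.eventually_ne hp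
      exact ⟨_, (hconst p v hv).and hne, fun _ => v, contMDiffOn_const,
        fun q hq => ⟨subset_convexHull ℝ _ hq.1, fun h => absurd h hq.2⟩⟩)
  have hV0 : ∀ p, V p ≠ 0 := fun p h0 => by
    have := (hV p).1
    rw [h0] at this
    exact zero_notMem_convexHull_of_card_lt (fun i => w i p) this
  have hVc : ContDiff ℝ 1 V := V.contMDiff.contDiff
  let _ : MeasurableSpace E := borel E
  have : BorelSpace E := ⟨rfl⟩
  refine no_contDiff_retraction hR (r := fun p => (-(R / ‖V p‖)) • V p) ?_ ?_ ?_
  · exact ((contDiff_const.div (hVc.norm ℝ hV0) fun p => norm_ne_zero_iff.2 (hV0 p)).neg).smul hVc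
  · intro p
    have := norm_ne_zero_iff.2 (hV0 p)
    rw [norm_smul, norm_neg, norm_div, norm_norm, Real.norm_eq_abs, abs_of_pos hR]
    field_simp
  · intro p hp
    rw [(hV p).2 hp, norm_neg, hp, div_self hR.ne']
    simp

/-- A regularized least-squares centerpoint: the fields are the negated gradients of
`‖L i p - y i‖² / 2 + ε ‖p‖² / 2`. -/
lemma exists_deep_regularized {V ι : Type*} [NormedAddCommGroup V] [InnerProductSpace ℝ V]
    [FiniteDimensional ℝ V] [Fintype ι] (L : ι → E →L[ℝ] V) (y : ι → V) {ε : ℝ} (hε : 0 < ε) :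
    ∃ p, ∀ v, Fintype.card ι ≤ (Module.finrank ℝ E + 1) *
      Nat.card {i // inner ℝ (y i - L i p) (L i v) ≤ ε * inner ℝ p v} := by
  classical
  have : CompleteSpace E := FiniteDimensional.complete ℝ E
  have : CompleteSpace V := FiniteDimensional.complete ℝ V
  let w : ι → E → E := fun i p => ContinuousLinearMap.adjoint (L i) (y i - L i p) - ε • p
  have hw : ∀ i p v, inner ℝ (w i p) v = inner ℝ (y i - L i p) (L i v) - ε * inner ℝ p v := by
    intro i p v
    rw [inner_sub_left, ContinuousLinearMap.adjoint_inner_left, real_inner_smul_left]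
  set S : ℝ := ∑ i, ‖y i‖ ^ 2 with hS
  have hS0 : 0 ≤ S := by positivity
  obtain ⟨p, hp⟩ := exists_deep_point_of_inward w (fun i => by fun_prop)
    (R := Real.sqrt ((S + 1) / ε)) (by positivity) (by
      intro i x hx
      have hx2 : ε * inner ℝ x x = S + 1 := by
        rw [real_inner_self_eq_norm_sq, hx, Real.sq_sqrt (by positivity)]
        field_simp
      have hyi : ‖y i‖ ^ 2 ≤ S :=
        Finset.single_le_sum (f := fun i => ‖y i‖ ^ 2) (fun i _ => by positivity)
          (Finset.mem_univ i)
      rw [hw, hx2, inner_sub_left, real_inner_self_eq_norm_sq]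
      nlinarith [real_inner_le_norm (y i) (L i x), sq_nonneg (‖y i‖ - 2 * ‖L i x‖),
        sq_nonneg ‖y i‖])
  refine ⟨p, fun v => ?_⟩
  simpa only [hw, sub_nonpos, Nat.card_eq_fintype_card] using hp v

end

lemma exists_deep_regularized_line {V ι : Type*} [NormedAddCommGroup V] [InnerProductSpace ℝ V]
    [FiniteDimensional ℝ V] [Fintype ι] (t : ι → ℝ) (y : ι → V) {ε : ℝ} (hε : 0 < ε) :
    ∃ a b : V, ∀ α β : V, Fintype.card ι ≤ (2 * Module.finrank ℝ V + 1) *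
      Nat.card {i // inner ℝ (y i - (a + t i • b)) (α + t i • β)
        ≤ ε * (inner ℝ a α + inner ℝ b β)} := by
  obtain ⟨p, hp⟩ := exists_deep_regularized (E := WithLp 2 (V × V))
    (fun i => WithLp.fstL 2 ℝ V V + t i • WithLp.sndL 2 ℝ V V) y hε
  refine ⟨p.fst, p.snd, fun α β => ?_⟩
  have := hp (WithLp.toLp 2 (α, β))
  have hdim : Module.finrank ℝ (WithLp 2 (V × V)) = 2 * Module.finrank ℝ V := by
    rw [(WithLp.linearEquiv 2 ℝ (V × V)).finrank_eq, Module.finrank_prod, two_mul]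
  rw [hdim] at this
  simpa [WithLp.prod_inner_apply] using this

lemma Ultrafilter.exists_tendsto_or_tendsto_norm_atTop {α V : Type*} [NormedAddCommGroup V]
    [ProperSpace V] (U : Ultrafilter α) (x : α → V) :
    (∃ l, Tendsto x U (𝓝 l)) ∨ Tendsto (fun k => ‖x k‖) U atTop := by
  by_cases h : ∃ C, ∀ᶠ k in (U : Filter α), ‖x k‖ ≤ C
  · obtain ⟨C, hC⟩ := h
    left
    obtain ⟨l, -, hl⟩ := (isCompact_closedBall (0 : V) C).ultrafilter_le_nhds (U.map x)
      (by
        refine le_principal_iff.2 (mem_map.2 (mem_of_superset hC fun k hk => ?_))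
        simpa using hk)
    exact ⟨l, hl⟩
  · push Not at h
    right
    refine tendsto_atTop.2 fun C => ?_
    filter_upwards [h C] with k hk using hk.le

lemma eventually_pos_of_quadratic {α V : Type*} [NormedAddCommGroup V] [InnerProductSpace ℝ V]
    {l : Filter α} {A : α → ℝ} {z b : α → V} {A₀ κ : ℝ} {z₀ : V} (hA : Tendsto A l (𝓝 A₀))
    (hz : Tendsto z l (𝓝 z₀)) (hb : Tendsto (fun k => ‖b k‖) l atTop) (hκ : 0 < κ) :
    ∀ᶠ k in l, 0 < A k + inner ℝ (b k) (z k) + κ * ‖b k‖ ^ 2 := by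
  have h1 : ∀ᶠ k in l, A₀ - 1 < A k := hA.eventually (lt_mem_nhds (by linarith))
  have h2 : ∀ᶠ k in l, ‖z k‖ < ‖z₀‖ + 1 := hz.norm.eventually (gt_mem_nhds (by linarith))
  filter_upwards [h1, h2, hb.eventually_ge_atTop 1,
    hb.eventually_ge_atTop ((‖z₀‖ + 1 + |A₀ - 1|) / κ)] with k hk1 hk2 hk3 hk4
  rw [div_le_iff₀ hκ] at hk4
  have h3 := neg_le_of_abs_le (abs_real_inner_le_norm (b k) (z k))
  nlinarith [neg_abs_le (A₀ - 1), mul_le_mul_of_nonneg_left hk2.le (norm_nonneg (b k)),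
    mul_le_mul_of_nonneg_right hk4 (norm_nonneg (b k)),
    mul_le_mul_of_nonneg_left hk3 (abs_nonneg (A₀ - 1))]

/-- Every finite family of points `(t i, y i)` admits a line `t ↦ a + t • b` such that every
affine motion of the line fails to improve the fit at a large proportion of the points. -/
theorem exists_deep_line_param {V ι : Type*} [NormedAddCommGroup V] [InnerProductSpace ℝ V]
    [FiniteDimensional ℝ V] [Fintype ι] (t : ι → ℝ) (y : ι → V) :
    ∃ a b : V, ∀ α β : V, Fintype.card ι ≤ (2 * Module.finrank ℝ V + 1) *
      Nat.card {i // inner ℝ (y i - (a + t i • b)) (α + t i • β) ≤ 0} := by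
  have : ProperSpace V := FiniteDimensional.proper ℝ V
  have hεpos : ∀ k : ℕ, (0 : ℝ) < 1 / ((k : ℝ) + 1) := fun k => by positivity
  choose a b hab using fun k : ℕ => exists_deep_regularized_line t y (hεpos k)
  set ε : ℕ → ℝ := fun k => 1 / ((k : ℝ) + 1) with hε
  let U : Ultrafilter ℕ := hyperfilter ℕ
  have hε0 : Tendsto ε U (𝓝 0) :=
    tendsto_one_div_add_atTop_nhds_zero_nat.mono_left Nat.hyperfilter_le_atTop
  have key : ∀ (B : ι → Prop) (α β : ℕ → V), (∀ i, ¬ B i → ∀ᶠ k in (U : Filter ℕ),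
      ε k * (inner ℝ (a k) (α k) + inner ℝ (b k) (β k))
        < inner ℝ (y i - (a k + t i • b k)) (α k + t i • β k)) →
      Fintype.card ι ≤ (2 * Module.finrank ℝ V + 1) * Nat.card {i // B i} := by
    intro B α β h
    have hall : ∀ᶠ k in (U : Filter ℕ), ∀ i, ¬ B i →
        ε k * (inner ℝ (a k) (α k) + inner ℝ (b k) (β k))
          < inner ℝ (y i - (a k + t i • b k)) (α k + t i • β k) :=
      eventually_all.2 fun i => by
        by_cases hi : B i
        · exact Eventually.of_forall fun k h => absurd hi h
        · exact (h i hi).mono fun k hk _ => hk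
    obtain ⟨k, hk⟩ := hall.exists
    refine (hab k (α k) (β k)).trans (Nat.mul_le_mul_left _ ?_)
    refine Nat.card_mono (Set.toFinite {i | B i}) fun i hi => ?_
    by_contra hB
    exact (hk i hB).not_ge hi
  by_cases hconv : ∃ (s : ℝ) (c : V), Tendsto (fun k => a k + s • b k) U (𝓝 c)
  · obtain ⟨s, c, hc⟩ := hconv
    rcases U.exists_tendsto_or_tendsto_norm_atTop b with ⟨b₀, hb⟩ | hb
    · have ha : Tendsto a U (𝓝 (c - s • b₀)) := by
        simpa using hc.sub (hb.const_smul s)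
      refine ⟨c - s • b₀, b₀, fun α β => key _ (fun _ => α) (fun _ => β) fun i hi => ?_⟩
      have h1 : Tendsto (fun k => inner ℝ (y i - (a k + t i • b k)) (α + t i • β)) U
          (𝓝 (inner ℝ (y i - (c - s • b₀ + t i • b₀)) (α + t i • β))) :=
        (tendsto_const_nhds.sub (ha.add (hb.const_smul (t i)))).inner tendsto_const_nhds
      have h2 := hε0.mul ((ha.inner (tendsto_const_nhds (x := α))).add
        (hb.inner (tendsto_const_nhds (x := β))))
      rw [zero_mul] at h2
      exact h2.eventually_lt h1 (not_le.1 hi)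
    · refine ⟨c, 0, fun α β => ?_⟩
      set γ := α + s • β with hγ
      refine key _ (fun k => γ + s • b k) (fun k => -b k) fun i hi => ?_
      have hreg : ∀ᶠ k in (U : Filter ℕ),
          ε k * (inner ℝ (a k) (γ + s • b k) + inner ℝ (b k) (-b k)) ≤ 0 := by
        filter_upwards [eventually_pos_of_quadratic
          ((hc.inner (tendsto_const_nhds (x := γ))).neg)
          ((tendsto_const_nhds (x := γ)).sub hc |>.const_smul s) hb
          (show (0 : ℝ) < s ^ 2 + 1 by positivity)] with k hk
        refine mul_nonpos_of_nonneg_of_nonpos (hεpos k).le ?_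
        have e : inner ℝ (a k) (γ + s • b k) + inner ℝ (b k) (-b k)
            = -(-inner ℝ (a k + s • b k) γ + inner ℝ (b k) (s • (γ - (a k + s • b k)))
              + (s ^ 2 + 1) * ‖b k‖ ^ 2) := by
          rw [← real_inner_self_eq_norm_sq]
          simp only [inner_add_left, inner_add_right, inner_sub_right, inner_neg_right,
            real_inner_smul_left, real_inner_smul_right, real_inner_comm (b k) (a k)]
          ring
        rw [e]
        linarith
      have hfit : ∀ᶠ k in (U : Filter ℕ),
          0 < inner ℝ (y i - (a k + t i • b k)) (γ + s • b k + t i • -b k) := by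
        by_cases hts : t i = s
        · have hlim : Tendsto (fun k => inner ℝ (y i - (a k + s • b k)) γ) U
              (𝓝 (inner ℝ (y i - c) γ)) :=
            (tendsto_const_nhds.sub hc).inner tendsto_const_nhds
          have hpos : 0 < inner ℝ (y i - c) γ := by
            simpa [hts, hγ] using hi
          filter_upwards [hlim.eventually (lt_mem_nhds hpos)] with k hk
          simpa [hts] using hk
        · have hτ : 0 < (t i - s) ^ 2 := by
            have := sub_ne_zero.2 hts
            positivity
          filter_upwards [eventually_pos_of_quadratic
            (((tendsto_const_nhds (x := y i)).sub hc).inner (tendsto_const_nhds (x := γ)))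
            (((tendsto_const_nhds (x := γ + y i)).sub hc).const_smul (-(t i - s))) hb hτ]
            with k hk
          convert hk using 1
          rw [← real_inner_self_eq_norm_sq]
          simp only [inner_add_left, inner_add_right, inner_sub_left, inner_sub_right,
            inner_neg_right, real_inner_smul_left, real_inner_smul_right,
            real_inner_comm (b k) (a k), real_inner_comm (b k) (y i)]
          ring
      filter_upwards [hreg, hfit] with k h1 h2 using h1.trans_lt h2
  · push Not at hconv
    have hcard : Fintype.card ι ≤ (2 * Module.finrank ℝ V + 1) * Nat.card {_i : ι // False} := by
      refine key _ (fun k => -a k) (fun k => -b k) fun i _ => ?_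
      have hinf := (U.exists_tendsto_or_tendsto_norm_atTop
        (fun k => a k + t i • b k)).resolve_left fun ⟨c, hc⟩ => hconv _ c hc
      filter_upwards [eventually_pos_of_quadratic (tendsto_const_nhds (x := (0 : ℝ)))
        (tendsto_const_nhds (x := -y i)) hinf one_pos] with k hk
      have h1 : ε k * (inner ℝ (a k) (-a k) + inner ℝ (b k) (-b k)) ≤ 0 := by
        refine mul_nonpos_of_nonneg_of_nonpos (hεpos k).le ?_
        rw [inner_neg_right, inner_neg_right, real_inner_self_eq_norm_sq,
          real_inner_self_eq_norm_sq]
        nlinarith [sq_nonneg ‖a k‖, sq_nonneg ‖b k‖]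
      refine h1.trans_lt ?_
      rw [show -a k + t i • -b k = -(a k + t i • b k) by rw [smul_neg]; abel]
      rw [zero_add, one_mul, ← real_inner_self_eq_norm_sq, inner_neg_right, real_inner_comm] at hk
      rw [inner_neg_right, inner_sub_left]
      linarith
    have h0 : Fintype.card ι = 0 := by simpa using hcard
    exact ⟨0, 0, fun α β => by rw [h0]; exact Nat.zero_le _⟩

/-- The line `{(t, a + t b)}` over the one-dimensional space of independent variables. -/
def graphLine {m : ℕ} (a b : Fin m → ℝ) : AffineSubspace ℝ ((Fin 1 → ℝ) × (Fin m → ℝ)) :=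
  AffineSubspace.mk' (0, a) (ℝ ∙ ((1, b) : (Fin 1 → ℝ) × (Fin m → ℝ)))

lemma mem_graphLine {m : ℕ} {a b : Fin m → ℝ} {x : (Fin 1 → ℝ) × (Fin m → ℝ)} :
    x ∈ graphLine a b ↔ x.2 = a + x.1 0 • b := by
  rw [graphLine, AffineSubspace.mem_mk', Submodule.mem_span_singleton]
  constructor
  · rintro ⟨s, hs⟩
    obtain ⟨h1, h2⟩ := Prod.ext_iff.1 hs
    have h3 : s = x.1 0 := by simpa using congrFun h1 0
    have h4 : s • b = x.2 - a := by simpa using h2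
    rw [← h3, h4]
    abel
  · intro h
    refine ⟨x.1 0, Prod.ext ?_ ?_⟩
    · ext j
      simp [Subsingleton.elim j 0]
    · simp [h]

lemma isFlatOfDim_graphLine {m : ℕ} (a b : Fin m → ℝ) : IsFlatOfDim 1 (graphLine a b) := by
  refine ⟨⟨(0, a), by simp [mem_graphLine]⟩, ?_⟩
  rw [graphLine, AffineSubspace.direction_mk']
  refine finrank_span_singleton fun h => ?_
  simpa using congrFun (Prod.ext_iff.1 h).1 0

lemma exists_inner_eq_of_vanishing_on_graphLine {m : ℕ} {a b : Fin m → ℝ}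
    {f : ((Fin 1 → ℝ) × (Fin m → ℝ)) →ᵃ[ℝ] ℝ} (hf : ∀ x ∈ graphLine a b, f x = 0) :
    ∃ c : EuclideanSpace ℝ (Fin m), ∀ x,
      f x = inner ℝ (WithLp.toLp 2 (x.2 - (a + x.1 0 • b))) c := by
  refine ⟨WithLp.toLp 2 fun j => f.linear (0, fun i => if j = i then 1 else 0), fun x => ?_⟩
  have h0 : f (x.1, a + x.1 0 • b) = 0 := hf _ (by simp [mem_graphLine])
  have h1 := f.linearMap_vsub x (x.1, a + x.1 0 • b)
  set r := x.2 - (a + x.1 0 • b) with hr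
  have h2 : x -ᵥ (x.1, a + x.1 0 • b) = ((0, r) : (Fin 1 → ℝ) × (Fin m → ℝ)) := by
    ext <;> simp [hr]
  rw [h2, h0, vsub_eq_sub, sub_zero] at h1
  rw [← h1]
  change (f.linear ∘ₗ LinearMap.inr ℝ (Fin 1 → ℝ) (Fin m → ℝ)) r = _
  rw [LinearMap.pi_apply_eq_sum_univ]
  simp only [PiLp.inner_apply]
  refine Finset.sum_congr rfl fun j _ => ?_
  simp [mul_comm]

lemma AffineMap.apply_eq_linear_one_mul_add (h : (Fin 1 → ℝ) →ᵃ[ℝ] ℝ) (u : Fin 1 → ℝ) :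
    h u = u 0 * h.linear 1 + h 0 := by
  have h1 : h u = h.linear u + h 0 := congrFun h.decomp u
  have h2 : u = u 0 • (1 : Fin 1 → ℝ) := by
    ext j
    simp [Subsingleton.elim j 0]
  rw [h1]
  nth_rewrite 1 [h2]
  rw [map_smul, smul_eq_mul]

/-- Deep lines exist, with `R(d,1) ≤ 2d − 1`: for `d ≥ 2`, every finite set `X` of
`n` points in ℝ^d = ℝ × ℝ^(d−1) admits a line (1-dimensional affine subspace) of
regression depth at least `n / (2d − 1)`. -/
theorem deep_line_exists (d : ℕ) (hd : 2 ≤ d)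
    (X : Finset ((Fin 1 → ℝ) × (Fin (d - 1) → ℝ))) :
    ∃ F : AffineSubspace ℝ ((Fin 1 → ℝ) × (Fin (d - 1) → ℝ)),
      IsFlatOfDim 1 F ∧ (X.card : ℝ) / (2 * d - 1) ≤ (regDepth F X : ℝ) := by
  obtain ⟨a, b, hab⟩ := exists_deep_line_param (ι := X)
    (V := EuclideanSpace ℝ (Fin (d - 1))) (fun x => x.1.1 0) (fun x => WithLp.toLp 2 x.1.2)
  refine ⟨graphLine a.ofLp b.ofLp, isFlatOfDim_graphLine _ _, ?_⟩
  have hne : { n : ℕ | ∃ f : ((Fin 1 → ℝ) × (Fin (d - 1) → ℝ)) →ᵃ[ℝ] ℝ, f.linear ≠ 0 ∧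
      (∀ x ∈ graphLine a.ofLp b.ofLp, f x = 0) ∧
      ∃ h : (Fin 1 → ℝ) →ᵃ[ℝ] ℝ, h.linear ≠ 0 ∧
        n = {x ∈ (X : Set ((Fin 1 → ℝ) × (Fin (d - 1) → ℝ))) |
          f x * h x.1 ≤ 0}.ncard }.Nonempty := by
    let j : Fin (d - 1) := ⟨0, by omega⟩
    let t : (Fin 1 → ℝ) →ₗ[ℝ] ℝ := LinearMap.proj 0
    let y : (Fin (d - 1) → ℝ) →ₗ[ℝ] ℝ := LinearMap.proj j
    let g : ((Fin 1 → ℝ) × (Fin (d - 1) → ℝ)) →ₗ[ℝ] ℝ :=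
      y ∘ₗ LinearMap.snd ℝ _ _ - b j • (t ∘ₗ LinearMap.fst ℝ _ _)
    refine ⟨_, g.toAffineMap + AffineMap.const ℝ _ (-a j), ?_, ?_, t.toAffineMap, ?_, rfl⟩
    · intro h
      have := congrArg (fun L => L ((0, Pi.single j 1) : (Fin 1 → ℝ) × (Fin (d - 1) → ℝ))) h
      simp [g, t, y] at this
    · intro x hx
      have := congrFun (mem_graphLine.1 hx) j
      simp only [Pi.add_apply, Pi.smul_apply, smul_eq_mul] at this
      simp [g, t, y, this]
      ring
    · intro h
      have := congrArg (fun L => L (1 : Fin 1 → ℝ)) h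
      simp [t] at this
  obtain ⟨f, -, hf, h, -, hn⟩ := Nat.sInf_mem hne
  obtain ⟨c, hc⟩ := exists_inner_eq_of_vanishing_on_graphLine hf
  have hdepth := hab (h 0 • c) (h.linear 1 • c)
  have hcount : Nat.card {x : X // inner ℝ (WithLp.toLp 2 x.1.2 - (a + x.1.1 0 • b))
      (h 0 • c + x.1.1 0 • h.linear 1 • c) ≤ 0} = regDepth (graphLine a.ofLp b.ofLp) X := by
    rw [regDepth, hn, ← Nat.card_coe_set_eq]
    refine Nat.card_congr ((Equiv.subtypeSubtypeEquivSubtypeInter (· ∈ X) (fun x =>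
      inner ℝ (WithLp.toLp 2 x.2 - (a + x.1 0 • b))
        (h 0 • c + x.1 0 • h.linear 1 • c) ≤ 0)).trans (Equiv.subtypeEquivRight fun x => ?_))
    have e : inner ℝ (WithLp.toLp 2 x.2 - (a + x.1 0 • b))
        (h 0 • c + x.1 0 • h.linear 1 • c) = f x * h x.1 := by
      rw [hc, h.apply_eq_linear_one_mul_add x.1, smul_smul, ← add_smul, real_inner_smul_right,
        mul_comm, add_comm (h 0)]
      rfl
    rw [e]
    rfl
  rw [hcount, finrank_euclideanSpace_fin, Fintype.card_coe] at hdepth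
  have hd1 : (1 : ℝ) ≤ 2 * d - 1 := by
    have : (2 : ℝ) ≤ d := by exact_mod_cast hd
    linarith
  rw [div_le_iff₀ (by linarith)]
  have hcast : (X.card : ℝ) ≤ (2 * ((d - 1 : ℕ) : ℝ) + 1)
      * regDepth (graphLine a.ofLp b.ofLp) X := by exact_mod_cast hdepth
  rw [Nat.cast_sub (by omega)] at hcast
  push_cast at hcast
  linarith
end
end

section
/- (Center Transversal Theorem) Let 0 ≤ k < d be integers and let S₁, …, S_{k+1} be finite point sets in ℝ^d, each containing at least m points. Then there exists a k-dimensional affine subspace F of ℝ^d such that every closed halfspace of ℝ^d containing F contains at least ⌈m/(d−k+1)⌉ points from each set S_i. -/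
noncomputable section

namespace CenterTransversal

section

open Finset Equiv

/-- The `j`-th coface map on `ℕ`: the increasing map that skips `j`. -/
def skip (j t : ℕ) : ℕ := if t < j then t else t + 1

/-- The cup product of the coboundaries of the functions `s 0, …, s (M - 1)`, evaluated on the
simplex with vertices `y 0, …, y M`. -/
def cup {X : Type*} (s : ℕ → X → ZMod 2) (M : ℕ) (y : ℕ → X) : ZMod 2 :=
  ∏ i ∈ range M, (s i (y i) + s i (y (i + 1)))

theorem cup_succ {X : Type*} (s : ℕ → X → ZMod 2) (M : ℕ) (y : ℕ → X) :
    cup s (M + 1) y =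
      (s 0 (y 0) + s 0 (y 1)) * cup (fun i => s (i + 1)) M (fun t => y (t + 1)) := by
  simp only [cup, prod_range_succ', zero_add]
  rw [mul_comm]

theorem cup_congr {X : Type*} {s : ℕ → X → ZMod 2} {M : ℕ} {y y' : ℕ → X}
    (h : ∀ t ≤ M, y t = y' t) : cup s M y = cup s M y' := by
  refine prod_congr rfl fun i hi => ?_
  rw [mem_range] at hi
  rw [h i hi.le, h (i + 1) hi]

/-- A cup product of coboundaries is a cocycle. -/
theorem sum_cup_skip {X : Type*} (M : ℕ) (s : ℕ → X → ZMod 2) (y : ℕ → X) :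
    ∑ j ∈ range (M + 2), cup s M (fun t => y (skip j t)) = 0 := by
  induction M generalizing s y with
  | zero => simp [cup]; decide
  | succ M ih =>
    have key := ih (fun i => s (i + 1)) (fun t => y (t + 1))
    rw [sum_range_succ'] at key
    rw [sum_range_succ', sum_range_succ']
    have e2 : ∀ j, cup s (M + 1) (fun t => y (skip (j + 1 + 1) t)) =
        (s 0 (y 0) + s 0 (y 1)) *
          cup (fun i => s (i + 1)) M (fun t => y (skip (j + 1) t + 1)) := by
      intro j
      rw [cup_succ]
      congr 1
      refine cup_congr fun t _ => ?_
      congr 1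
      simp only [skip]; split_ifs <;> omega
    have e1 : cup s (M + 1) (fun t => y (skip (0 + 1) t)) =
        (s 0 (y 0) + s 0 (y 2)) *
          cup (fun i => s (i + 1)) M (fun t => y (skip 0 t + 1)) := by
      rw [cup_succ]; rfl
    have e0 : cup s (M + 1) (fun t => y (skip 0 t)) =
        (s 0 (y 1) + s 0 (y 2)) *
          cup (fun i => s (i + 1)) M (fun t => y (skip 0 t + 1)) := by
      rw [cup_succ]; rfl
    simp only [e2, e1, e0, ← mul_sum]
    have h2 : (2 : ZMod 2) = 0 := rfl
    linear_combination (s 0 (y 0) + s 0 (y 1)) * key +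
      s 0 (y 2) * cup (fun i => s (i + 1)) M (fun t => y (skip 0 t + 1)) * h2

/-- Negation of the coordinates in the block `j`. -/
def flip {R ι J : Type*} [Neg R] [DecidableEq J] (b : ι → J) (j : J) (x : ι → R) : ι → R :=
  fun c => if b c = j then -x c else x c

/-- A `ZMod 2`-valued function on the integer points of the cube `[-L, L]^ι` is equivariant with
character `χ` when negating a block, some coordinate of which is extremal, changes it by the value
of `χ` at that block. -/
def Equivariant {ι J : Type*} [DecidableEq J] (b : ι → J) (L : ℤ) (χ : J → ZMod 2)
    (s : (ι → ℤ) → ZMod 2) : Prop :=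
  ∀ x : ι → ℤ, (∀ c, |x c| ≤ L) → ∀ c, |x c| = L → s (flip b (b c) x) = s x + χ (b c)

/-- The pairs of neighbouring integers in `[-L, L]` whose first member is even. -/
def edges (L : ℤ) : Finset (ℤ × ℤ) :=
  (Icc (-L) L ×ˢ Icc (-L) L).filter fun e => Even e.1 ∧ |e.1 - e.2| = 1

theorem mem_edges {L : ℤ} {e : ℤ × ℤ} :
    e ∈ edges L ↔ (|e.1| ≤ L ∧ |e.2| ≤ L) ∧ Even e.1 ∧ |e.1 - e.2| = 1 := by
  simp [edges, abs_le]

/-- The vertices of the maximal simplex of the symmetric triangulation of the grid in which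
coordinate `c` moves from `(w c).2` to `(w c).1` at time `π c`. -/
def vert {N : ℕ} (π : Perm (Fin N)) (w : Fin N → ℤ × ℤ) (t : ℕ) : Fin N → ℤ :=
  fun c => if (π c : ℕ) < t then (w c).1 else (w c).2

theorem abs_vert_le {N : ℕ} {L : ℤ} {π : Perm (Fin N)} {w : Fin N → ℤ × ℤ}
    (hw : w ∈ Fintype.piFinset fun _ => edges L) (t : ℕ) (c : Fin N) : |vert π w t c| ≤ L := by
  have := (mem_edges.1 (Fintype.mem_piFinset.1 hw c)).1
  unfold vert; split_ifs
  exacts [this.1, this.2]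

/-- Interior faces lie in two simplices which differ by exchanging two consecutive moves. -/
theorem sum_interior_face {N : ℕ} (j : ℕ) (hj : j + 1 < N) (w : Fin N → ℤ × ℤ)
    (c : (ℕ → Fin N → ℤ) → ZMod 2) :
    ∑ π : Perm (Fin N), c (fun t => vert π w (skip (j + 1) t)) = 0 := by
  set τ : Perm (Fin N) := swap ⟨j, by omega⟩ ⟨j + 1, hj⟩ with hτ
  have hττ : τ * τ = 1 := swap_mul_self _ _
  refine sum_involution (fun π _ => τ * π) ?_ ?_ (fun _ _ => mem_univ _) ?_
  · intro π _
    have : (fun t => vert (τ * π) w (skip (j + 1) t)) = fun t => vert π w (skip (j + 1) t) := by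
      funext t c
      have hs : skip (j + 1) t ≠ j + 1 := by unfold skip; split_ifs <;> omega
      generalize skip (j + 1) t = r at hs
      have : ((τ * π) c : ℕ) < r ↔ (π c : ℕ) < r := by
        rw [Perm.mul_apply, hτ, swap_apply_def]
        split_ifs with h1 h2
        · rw [h1]; simp only; omega
        · rw [h2]; simp only; omega
        · rfl
      simp only [vert, this]
    rw [this]; exact CharTwo.add_self_eq_zero _
  · intro π _ _ h
    have h1 : τ = 1 := mul_eq_right.1 h
    have := congrArg (fun f : Perm (Fin N) => (f ⟨j, by omega⟩ : ℕ)) h1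
    simp [hτ] at this
  · intro π _
    rw [← mul_assoc, hττ, one_mul]

theorem edges_reflect_fst {L : ℤ} (hL : Even L) {e : ℤ × ℤ} (he : e ∈ edges L) :
    (2 * e.2 - e.1, e.2) ∈ edges L := by
  rw [mem_edges] at he ⊢
  obtain ⟨⟨h1, h2⟩, h3, h4⟩ := he
  obtain ⟨l, rfl⟩ := hL
  obtain ⟨p, hp⟩ := h3
  simp only [abs_le] at h1 h2 ⊢
  rcases (abs_eq zero_le_one).1 h4 with h | h
  · refine ⟨⟨by omega, by omega⟩, ⟨p - 1, by omega⟩, ?_⟩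
    rw [show 2 * e.2 - e.1 - e.2 = -1 by omega]; rfl
  · refine ⟨⟨by omega, by omega⟩, ⟨p + 1, by omega⟩, ?_⟩
    rw [show 2 * e.2 - e.1 - e.2 = 1 by omega]; rfl

theorem edges_reflect_snd {L : ℤ} {e : ℤ × ℤ} (he : e ∈ edges L) (h : |e.1| ≠ L) :
    (e.1, 2 * e.1 - e.2) ∈ edges L := by
  rw [mem_edges] at he ⊢
  obtain ⟨⟨h1, h2⟩, h3, h4⟩ := he
  have h5 := lt_of_le_of_ne h1 h
  rw [abs_lt] at h5
  refine ⟨⟨h1, ?_⟩, h3, ?_⟩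
  · rw [abs_le]
    rcases (abs_eq zero_le_one).1 h4 with h | h <;> constructor <;> simp only <;> omega
  · rw [← h4, ← abs_neg]; congr 1; simp only; ring

theorem edges_neg {L : ℤ} {e : ℤ × ℤ} (he : e ∈ edges L) : -e ∈ edges L := by
  rw [mem_edges] at he ⊢
  obtain ⟨⟨h1, h2⟩, h3, h4⟩ := he
  refine ⟨⟨by simpa using h1, by simpa using h2⟩, by simpa using h3, ?_⟩
  rw [← h4, ← abs_neg]; congr 1; simp; ring

theorem edges_snd_ne_fst {L : ℤ} {e : ℤ × ℤ} (he : e ∈ edges L) : e.1 ≠ e.2 := by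
  intro h
  have := (mem_edges.1 he).2.2
  simp [h] at this

theorem edges_snd_ne_zero {L : ℤ} {e : ℤ × ℤ} (he : e ∈ edges L) : e.2 ≠ 0 := by
  intro h
  obtain ⟨_, ⟨p, hp⟩, h4⟩ := mem_edges.1 he
  rcases (abs_eq zero_le_one).1 h4 with h' | h' <;> omega

/-- The face opposite to the last vertex lies in two simplices. -/
theorem sum_last_face {M : ℕ} {L : ℤ} (hL : Even L) (π : Perm (Fin (M + 1)))
    (c : (ℕ → Fin (M + 1) → ℤ) → ZMod 2)
    (hc : ∀ y y', (∀ t ≤ M, y t = y' t) → c y = c y') :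
    ∑ w ∈ Fintype.piFinset fun _ : Fin (M + 1) => edges L,
      c (fun t => vert π w (skip (M + 1) t)) = 0 := by
  set a := π.symm (Fin.last M) with ha
  have hπa : (π a : ℕ) = M := by simp [ha]
  refine sum_involution
    (fun w _ => Function.update w a (2 * (w a).2 - (w a).1, (w a).2)) ?_ ?_ ?_ ?_
  · intro w hw
    rw [hc (fun t => vert π w (skip (M + 1) t))]
    · exact CharTwo.add_self_eq_zero _
    intro t ht
    funext e
    have hs : skip (M + 1) t = t := if_pos (by omega)
    simp only [hs, vert]
    by_cases he : e = a
    · subst he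
      rw [if_neg (by omega), if_neg (by omega)]; simp
    · simp [Function.update_of_ne he]
  · intro w hw _ h
    have h1 := congrArg Prod.fst (congrFun h a)
    simp only [Function.update_self] at h1
    have := edges_snd_ne_fst (Fintype.mem_piFinset.1 hw a)
    omega
  · intro w hw
    rw [Fintype.mem_piFinset] at hw ⊢
    intro e
    by_cases he : e = a
    · subst he; simpa using edges_reflect_fst hL (hw a)
    · simpa [Function.update_of_ne he] using hw e
  · intro w hw
    simp

theorem flip_flip {R ι J : Type*} [InvolutiveNeg R] [DecidableEq J] (b : ι → J) (j : J)
    (x : ι → R) : flip b j (flip b j x) = x := by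
  funext c; unfold flip; split_ifs <;> simp

theorem vert_flip {N : ℕ} {J : Type*} [DecidableEq J] (b : Fin N → J) (j : J)
    (π : Perm (Fin N)) (w : Fin N → ℤ × ℤ) (t : ℕ) :
    vert π (flip b j w) t = flip b j (vert π w t) := by
  funext c; unfold vert flip; split_ifs <;> simp [*]

/-- The face opposite to the first vertex lies in two simplices, or is identified with the face
obtained by negating a block. -/
theorem sum_first_face {M : ℕ} {J : Type*} [DecidableEq J] (b : Fin (M + 1) → J) {L : ℤ}
    (π : Perm (Fin (M + 1))) (c : (ℕ → Fin (M + 1) → ℤ) → ZMod 2)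
    (hc : ∀ y : ℕ → Fin (M + 1) → ℤ, (∀ t e, |y t e| ≤ L) → ∀ e, (∀ t, |y t e| = L) →
      c (fun t => flip b (b e) (y t)) = c y) :
    ∑ w ∈ Fintype.piFinset fun _ : Fin (M + 1) => edges L,
      c (fun t => vert π w (skip 0 t)) = 0 := by
  set a := π.symm 0 with ha
  have hπa : (π a : ℕ) = 0 := by simp [ha]
  refine sum_involution
    (fun w _ => if |(w a).1| = L then flip b (b a) w
      else Function.update w a ((w a).1, 2 * (w a).1 - (w a).2)) ?_ ?_ ?_ ?_
  · intro w hw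
    split_ifs with hwa
    · simp only [vert_flip]
      rw [hc _ (fun t e => abs_vert_le hw _ e) a]
      · exact CharTwo.add_self_eq_zero _
      · intro t
        simp [vert, hπa, skip, hwa]
    · have : (fun t => vert π (Function.update w a ((w a).1, 2 * (w a).1 - (w a).2)) (skip 0 t))
          = fun t => vert π w (skip 0 t) := by
        funext t e
        by_cases he : e = a
        · subst he
          simp [vert, hπa, skip]
        · simp [vert, Function.update_of_ne he]
      rw [this]; exact CharTwo.add_self_eq_zero _
  · intro w hw _ h
    have hwa := Fintype.mem_piFinset.1 hw a
    have h1 := congrArg Prod.snd (congrFun h a)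
    have := edges_snd_ne_fst hwa
    have := edges_snd_ne_zero hwa
    split_ifs at h1 with h2
    · simp [flip] at h1; omega
    · simp only [Function.update_self] at h1; omega
  · intro w hw
    rw [Fintype.mem_piFinset] at hw ⊢
    intro e
    split_ifs with h
    · unfold flip; split_ifs
      exacts [edges_neg (hw e), hw e]
    · by_cases he : e = a
      · subst he; simpa using edges_reflect_snd (hw a) h
      · simpa [Function.update_of_ne he] using hw e
  · intro w hw
    by_cases h : |(w a).1| = L
    · have : |(flip b (b a) w a).1| = L := by simpa [flip] using h
      rw [if_pos h, if_pos this, flip_flip]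
    · simp [h]

/-- The sum of a cup product over all maximal simplices of the cube `[-L, L]^N`. -/
def cupSum (N : ℕ) (L : ℤ) (s : ℕ → (Fin N → ℤ) → ZMod 2) : ZMod 2 :=
  ∑ π : Perm (Fin N), ∑ w ∈ Fintype.piFinset fun _ : Fin N => edges L, cup s N (vert π w)

theorem sum_coboundary_mul_cup {M : ℕ} {J : Type*} [DecidableEq J] (b : Fin (M + 1) → J) {L : ℤ}
    (hL : Even L) (h : (Fin (M + 1) → ℤ) → ZMod 2) (hh : Equivariant b L 0 h)
    (χ : ℕ → J → ZMod 2) (s : ℕ → (Fin (M + 1) → ℤ) → ZMod 2)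
    (hs : ∀ i < M, Equivariant b L (χ i) (s i)) :
    ∑ π : Perm (Fin (M + 1)), ∑ w ∈ Fintype.piFinset fun _ : Fin (M + 1) => edges L,
      (h (vert π w 0) + h (vert π w 1)) * cup s M (fun t => vert π w (t + 1)) = 0 := by
  set c : (ℕ → Fin (M + 1) → ℤ) → ZMod 2 := fun y => h (y 0) * cup s M y with hc
  have e : ∀ y : ℕ → Fin (M + 1) → ℤ, (h (y 0) + h (y 1)) * cup s M (fun t => y (t + 1)) =
      ∑ j ∈ range (M + 2), c (fun t => y (skip j t)) := by
    intro y
    have key := sum_cup_skip M s y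
    rw [sum_range_succ'] at key ⊢
    have : ∀ j, c (fun t => y (skip (j + 1) t)) =
        h (y 0) * cup s M (fun t => y (skip (j + 1) t)) := by
      intro j; simp [hc, skip]
    simp only [this, ← mul_sum]
    have h0 : c (fun t => y (skip 0 t)) = h (y 1) * cup s M (fun t => y (t + 1)) := by
      simp [hc, skip]
    have h1 : (fun t => y (skip 0 t)) = fun t => y (t + 1) := by simp [skip]
    rw [h1] at key
    have h2 : (2 : ZMod 2) = 0 := rfl
    rw [h0]
    linear_combination -(h (y 0)) * key + h (y 0) * cup s M (fun t => y (t + 1)) * h2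
  simp only [e]
  simp_rw [sum_comm (t := range (M + 2))]
  refine sum_eq_zero fun j hj => ?_
  rcases j with _ | j
  · refine sum_eq_zero fun π _ => sum_first_face b π c ?_
    intro y hy a ha
    have hh' : ∀ t, h (flip b (b a) (y t)) = h (y t) := fun t => by
      simpa using hh (y t) (hy t) a (ha t)
    simp only [hc, hh']
    congr 1
    refine prod_congr rfl fun i hi => ?_
    rw [mem_range] at hi
    rw [hs i hi _ (hy _) a (ha _), hs i hi _ (hy _) a (ha _)]
    have h2 : (2 : ZMod 2) = 0 := rfl
    linear_combination χ i (b a) * h2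
  · by_cases hjM : j = M
    · subst hjM
      refine sum_eq_zero fun π _ => sum_last_face hL π c ?_
      intro y y' hy
      simp only [hc]
      rw [hy 0 (Nat.zero_le _), cup_congr hy]
    · rw [sum_comm]
      rw [mem_range] at hj
      exact sum_eq_zero fun w _ => sum_interior_face j (by omega) w c

/-- The sign of `r`, with ties resolved by `t`. -/
def signOr {R : Type*} [Zero R] [LinearOrder R] (r : R) (t : ZMod 2) : ZMod 2 :=
  if 0 < r then 0 else if r < 0 then 1 else t

theorem signOr_of_ne_zero {R : Type*} [Zero R] [LinearOrder R] {r : R} (h : r ≠ 0)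
    (t t' : ZMod 2) : signOr r t = signOr r t' := by
  unfold signOr
  split_ifs with h1 h2
  · rfl
  · rfl
  · exact absurd (le_antisymm (not_lt.1 h1) (not_lt.1 h2)) h

theorem signOr_neg {R : Type*} [AddCommGroup R] [LinearOrder R] [IsOrderedAddMonoid R] (r : R)
    (t : ZMod 2) : signOr (-r) (t + 1) = signOr r t + 1 := by
  unfold signOr
  rcases lt_trichotomy r 0 with h | h | h
  · rw [if_pos (by simpa using h), if_neg h.le.not_gt, if_pos h]; rfl
  · simp [h]
  · rw [if_neg (by simpa using h.le), if_pos (by simpa using h), if_pos h]; rfl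

/-- The sign, as an element of `ZMod 2`, of the first nonzero coordinate in the block `j`. -/
def blockSign {N : ℕ} {J : Type*} [DecidableEq J] (b : Fin N → J) (j : J) (x : Fin N → ℤ) :
    ZMod 2 :=
  signOr (toLex fun c => if b c = j then x c else 0) 0

theorem blockSign_flip_self {N : ℕ} {J : Type*} [DecidableEq J] (b : Fin N → J)
    (x : Fin N → ℤ) (c : Fin N) (hc : x c ≠ 0) :
    blockSign b (b c) (flip b (b c) x) = blockSign b (b c) x + 1 := by
  set y : Lex (Fin N → ℤ) := toLex (fun e => if b e = b c then x e else 0) with hy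
  have h1 : toLex (fun e => if b e = b c then flip b (b c) x e else 0) = -y := by
    apply toLex.symm.injective
    funext e
    change (if b e = b c then flip b (b c) x e else 0) = -(if b e = b c then x e else 0)
    unfold flip
    split_ifs <;> simp
  have h2 : y ≠ 0 := by
    intro h
    have := congrFun (congrArg ofLex h) c
    simp [hy] at this
    exact hc this
  unfold blockSign
  rw [h1, ← hy]
  rw [← signOr_neg]
  exact signOr_of_ne_zero (neg_ne_zero.2 h2) _ _

theorem blockSign_flip_of_ne {N : ℕ} {J : Type*} [DecidableEq J] (b : Fin N → J)
    {i j : J} (h : i ≠ j) (x : Fin N → ℤ) :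
    blockSign b i (flip b j x) = blockSign b i x := by
  have : (fun e => if b e = i then flip b j x e else 0) = fun e => if b e = i then x e else 0 := by
    funext e
    unfold flip
    split_ifs with h1 h2
    · exact absurd (h1.symm.trans h2) h
    · rfl
    · rfl
  unfold blockSign
  rw [this]

/-- An equivariant function with a prescribed character. -/
def charSign {N : ℕ} {J : Type*} [Fintype J] [DecidableEq J] (b : Fin N → J) (χ : J → ZMod 2)
    (x : Fin N → ℤ) : ZMod 2 :=
  ∑ j, χ j * blockSign b j x

theorem charSign_equivariant {N : ℕ} {J : Type*} [Fintype J] [DecidableEq J] (b : Fin N → J)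
    {L : ℤ} (hL : 0 < L) (χ : J → ZMod 2) : Equivariant b L χ (charSign b χ) := by
  intro x _ c hc
  have hc0 : x c ≠ 0 := by rintro h; rw [h, abs_zero] at hc; omega
  have : ∀ j, χ j * blockSign b j (flip b (b c) x) =
      χ j * blockSign b j x + if j = b c then χ j else 0 := by
    intro j
    split_ifs with h
    · rw [h, blockSign_flip_self b x c hc0]; ring
    · rw [blockSign_flip_of_ne b h, add_zero]
  simp [charSign, this, sum_add_distrib]

theorem sum_edges_signOr {L : ℤ} (hL : 0 < L) (hL2 : Even L) (f g : ℤ → ZMod 2) :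
    ∑ e ∈ edges L, (signOr e.2 (f e.2) + signOr e.1 (f e.1)) * g e.1 = g 0 := by
  have h2L : 1 < L := by obtain ⟨l, rfl⟩ := hL2; omega
  have hsub : ({((0 : ℤ), (1 : ℤ)), (0, -1)} : Finset (ℤ × ℤ)) ⊆ edges L := by
    intro e he
    rw [mem_edges]
    simp only [mem_insert, mem_singleton] at he
    rcases he with rfl | rfl <;> simp <;> omega
  rw [← sum_subset hsub]
  · rw [sum_pair (by simp)]
    simp only [signOr]
    norm_num
    have h2 : (2 : ZMod 2) = 0 := rfl
    linear_combination f 0 * g 0 * h2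
  · intro e he hne
    obtain ⟨_, ⟨p, hp⟩, h4⟩ := mem_edges.1 he
    have : e.1 ≠ 0 := by
      intro h0
      apply hne
      rw [mem_insert, mem_singleton, Prod.ext_iff, Prod.ext_iff]
      simp only
      rcases (abs_eq zero_le_one).1 h4 with h | h <;> omega
    have : signOr e.2 (f e.2) + signOr e.1 (f e.1) = 0 := by
      unfold signOr
      rcases (abs_eq zero_le_one).1 h4 with h | h <;> split_ifs <;>
        first | rfl | (exfalso; omega)
    rw [this, zero_mul]

theorem vert_decomposeFin_zero {M : ℕ} (e : Perm (Fin M)) (u : ℤ × ℤ) (w : Fin M → ℤ × ℤ) (t : ℕ) :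
    vert (Perm.decomposeFin.symm (0, e)) (Fin.cons u w : Fin (M + 1) → ℤ × ℤ) (t + 1) =
      Fin.cons u.1 (vert e w t) := by
  funext c
  refine Fin.cases ?_ (fun c => ?_) c
  · simp [vert]
  · simp [vert, Perm.decomposeFin_symm_apply_succ]

/-- Slicing by the hyperplane on which the zeroth coordinate vanishes. -/
theorem cupSum_slice {M : ℕ} {L : ℤ} (hL : 0 < L) (hL2 : Even L)
    (s : ℕ → (Fin (M + 1) → ℤ) → ZMod 2) (t : (Fin (M + 1) → ℤ) → ZMod 2)
    (h0 : ∀ x, s 0 x = signOr (x 0) (t x)) :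
    cupSum (M + 1) L s = cupSum M L (fun i z => s (i + 1) (Fin.cons 0 z)) := by
  unfold cupSum
  rw [← Equiv.sum_comp (Perm.decomposeFin (n := M)).symm, Fintype.sum_prod_type,
    Fintype.sum_eq_single 0]
  · refine sum_congr rfl fun e _ => ?_
    have : ∑ w ∈ Fintype.piFinset fun _ : Fin (M + 1) => edges L,
        cup s (M + 1) (vert (Perm.decomposeFin.symm (0, e)) w) =
        ∑ q ∈ edges L ×ˢ Fintype.piFinset fun _ : Fin M => edges L,
          cup s (M + 1) (vert (Perm.decomposeFin.symm (0, e))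
            (Fin.cons q.1 q.2 : Fin (M + 1) → ℤ × ℤ)) := by
      refine sum_nbij' (fun w => (w 0, Fin.tail w)) (fun q => Fin.cons q.1 q.2) ?_ ?_ ?_ ?_ ?_
      · intro w hw
        rw [Fintype.mem_piFinset] at hw
        rw [mem_product, Fintype.mem_piFinset]
        exact ⟨hw 0, fun c => hw c.succ⟩
      · intro q hq
        rw [mem_product, Fintype.mem_piFinset] at hq
        rw [Fintype.mem_piFinset]
        intro c
        refine Fin.cases ?_ (fun c => ?_) c
        · exact hq.1
        · exact hq.2 c
      · intro w _; simp
      · intro q _; simp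
      · intro w _; simp
    rw [this, sum_product, sum_comm]
    refine sum_congr rfl fun w hw => ?_
    refine Eq.trans ?_ (sum_edges_signOr hL hL2 (fun r => t (Fin.cons r (vert e w 0)))
      (fun r => cup (fun i => s (i + 1)) M (fun t => Fin.cons r (vert e w t))))
    refine sum_congr rfl fun u _ => ?_
    rw [cup_succ]
    simp only [vert_decomposeFin_zero]
    congr 1
    have hv0 : vert (Perm.decomposeFin.symm (0, e)) (Fin.cons u w : Fin (M + 1) → ℤ × ℤ) 0 =
        Fin.cons u.2 (vert e w 0) := by
      funext c
      refine Fin.cases ?_ (fun c => ?_) c <;> simp [vert]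
    rw [hv0, h0, h0]
    simp
  · intro a ha
    refine sum_eq_zero fun e _ => sum_eq_zero fun w hw => ?_
    have hne := edges_snd_ne_zero (Fintype.mem_piFinset.1 hw 0)
    have ha' : (a : ℕ) ≠ 0 := fun h => ha (Fin.ext h)
    rw [cup_succ, h0, h0]
    have e0 : vert (Perm.decomposeFin.symm (a, e)) w 0 0 = (w 0).2 := by simp [vert]
    have e1 : vert (Perm.decomposeFin.symm (a, e)) w 1 0 = (w 0).2 := by
      simp [vert, ha']
    rw [e0, e1, signOr_of_ne_zero hne _ (t (vert (Perm.decomposeFin.symm (a, e)) w 1)),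
      CharTwo.add_self_eq_zero, zero_mul]

theorem flip_cons_zero {M : ℕ} {J : Type*} [DecidableEq J] (b : Fin (M + 1) → J) (j : J)
    (z : Fin M → ℤ) :
    flip b j (Fin.cons 0 z) = Fin.cons 0 (flip (fun c => b c.succ) j z) := by
  funext c
  refine Fin.cases ?_ (fun c => ?_) c <;> simp [flip]

/-- A Borsuk–Ulam theorem for products of projective spaces, in the form of a parity count over a
symmetric triangulation. -/
theorem cupSum_eq_one {J : Type*} [Fintype J] [DecidableEq J] {L : ℤ} (hL : 0 < L)
    (hL2 : Even L) (N : ℕ) (b : Fin N → J) (χ : ℕ → J → ZMod 2)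
    (hχ : ∀ i c : Fin N, i ≤ c → χ i (b c) = if b c = b i then 1 else 0)
    (s : ℕ → (Fin N → ℤ) → ZMod 2) (hs : ∀ i < N, Equivariant b L (χ i) (s i)) :
    cupSum N L s = 1 := by
  induction N generalizing χ with
  | zero => simp [cupSum, cup]
  | succ M ih =>
    set f : (Fin (M + 1) → ℤ) → ZMod 2 := fun x => signOr (x 0) (charSign b (χ 0) x) with hf
    have hfe : Equivariant b L (χ 0) f := by
      intro x hx c hc
      have ht := charSign_equivariant b hL (χ 0) x hx c hc
      have hχ0 : χ 0 (b c) = if b c = b 0 then 1 else 0 := hχ 0 c (Fin.zero_le c)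
      simp only [hf]
      rw [ht, hχ0]
      split_ifs with h
      · rw [← signOr_neg]; simp [flip, h]
      · simp [flip, Ne.symm h]
    set s' : ℕ → (Fin (M + 1) → ℤ) → ZMod 2 := fun i => if i = 0 then f else s i with hs'
    have hdiff : cupSum (M + 1) L s - cupSum (M + 1) L s' = 0 := by
      rw [← sum_coboundary_mul_cup b hL2 (fun x => s 0 x + f x) ?_ (fun i => χ (i + 1))
        (fun i => s (i + 1)) (fun i hi => hs (i + 1) (by omega))]
      · unfold cupSum
        rw [← sum_sub_distrib]
        refine sum_congr rfl fun π _ => ?_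
        rw [← sum_sub_distrib]
        refine sum_congr rfl fun w _ => ?_
        rw [cup_succ, cup_succ]
        simp only [hs', if_true, Nat.add_eq_zero_iff, one_ne_zero, and_false, if_false,
          CharTwo.sub_eq_add]
        ring
      · intro x hx c hc
        simp only
        rw [hs 0 (by omega) x hx c hc, hfe x hx c hc]
        have h2 : (2 : ZMod 2) = 0 := rfl
        simp only [Pi.zero_apply]
        linear_combination χ 0 (b c) * h2
    rw [sub_eq_zero.1 hdiff, cupSum_slice hL hL2 s' (charSign b (χ 0)) (fun x => rfl)]
    refine ih (fun c => b c.succ) (fun i => χ (i + 1)) ?_ _ ?_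
    · intro i c hic
      simpa using hχ i.succ c.succ (Fin.succ_le_succ_iff.2 hic)
    · intro i hi z hz c hc
      have := hs (i + 1) (by omega) (Fin.cons 0 z) ?_ c.succ (by simpa using hc)
      · simpa [hs', flip_cons_zero] using this
      · intro e
        refine Fin.cases ?_ (fun e => ?_) e
        · simpa using hL.le
        · simpa using hz e

/-- A Tucker-type lemma: equivariant labellings with a triangular system of characters are all
nonconstant on some small cell of the grid. -/
theorem exists_nonconstant_cell {J : Type*} [Fintype J] [DecidableEq J] {L : ℤ} (hL : 0 < L)
    (hL2 : Even L) {N : ℕ} (b : Fin N → J) (χ : Fin N → J → ZMod 2)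
    (hχ : ∀ i c : Fin N, i ≤ c → χ i (b c) = if b c = b i then 1 else 0)
    (s : Fin N → (Fin N → ℤ) → ZMod 2) (hs : ∀ i, Equivariant b L (χ i) (s i)) :
    ∃ z : Fin N → ℤ, (∀ c, |z c| ≤ L) ∧ ∀ i, ∃ x y : Fin N → ℤ,
      (∀ c, |x c| ≤ L) ∧ (∀ c, |y c| ≤ L) ∧ (∀ c, |x c - z c| ≤ 1) ∧ (∀ c, |y c - z c| ≤ 1) ∧
      s i x ≠ s i y := by
  have h := cupSum_eq_one hL hL2 N b
    (fun i => if h : i < N then χ ⟨i, h⟩ else 0) (by simpa using hχ)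
    (fun i => if h : i < N then s ⟨i, h⟩ else 0) (by
      intro i hi
      simpa [hi] using hs ⟨i, hi⟩)
  have h1 : cupSum N L (fun i => if h : i < N then s ⟨i, h⟩ else 0) ≠ 0 := by
    rw [h]; exact one_ne_zero
  obtain ⟨π, _, h2⟩ := exists_ne_zero_of_sum_ne_zero h1
  obtain ⟨w, hw, h3⟩ := exists_ne_zero_of_sum_ne_zero h2
  refine ⟨vert π w 0, abs_vert_le hw 0, fun i => ⟨vert π w i, vert π w (i + 1),
    abs_vert_le hw _, abs_vert_le hw _, ?_, ?_, ?_⟩⟩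
  iterate 2
    intro c
    have hc := (mem_edges.1 (Fintype.mem_piFinset.1 hw c)).2.2
    simp only [vert, not_lt_zero, if_false]
    split_ifs
    · exact hc.le
    · simp
  · intro heq
    have := prod_ne_zero_iff.1 h3 i (mem_range.2 i.2)
    apply this
    simp only [i.2, dif_pos]
    rw [heq]
    exact CharTwo.add_self_eq_zero _

end

section

open Finset Equiv Filter Topology

theorem signOr_ne {r r' : ℝ} {t t' : ZMod 2} (h : signOr r t ≠ signOr r' t') :
    (r ≤ 0 ∨ r' ≤ 0) ∧ (0 ≤ r ∨ 0 ≤ r') := by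
  constructor <;> by_contra! hr <;> apply h <;> unfold signOr
  · rw [if_pos hr.1, if_pos hr.2]
  · rw [if_neg hr.1.le.not_gt, if_pos hr.1, if_neg hr.2.le.not_gt, if_pos hr.2]

/-- Approximate version of `exists_common_zero` on the grid of mesh `L⁻¹`. -/
theorem exists_sign_change {J : Type*} [Fintype J] [DecidableEq J] {N : ℕ} (b : Fin N → J)
    (χ : Fin N → J → ZMod 2)
    (hχ : ∀ i c : Fin N, i ≤ c → χ i (b c) = if b c = b i then 1 else 0)
    (f : Fin N → (Fin N → ℝ) → ℝ)
    (hodd : ∀ i x, (∀ c, |x c| ≤ 1) → ∀ c, |x c| = 1 →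
      f i (flip b (b c) x) = if χ i (b c) = 0 then f i x else -f i x)
    {L : ℤ} (hL : 0 < L) (hL2 : Even L) :
    ∃ z : Fin N → ℝ, (∀ c, |z c| ≤ 1) ∧ ∀ i, ∃ x y : Fin N → ℝ,
      (∀ c, |x c - z c| ≤ (L : ℝ)⁻¹) ∧ (∀ c, |y c - z c| ≤ (L : ℝ)⁻¹) ∧ f i x ≤ 0 ∧ 0 ≤ f i y := by
  have hL' : (0 : ℝ) < L := by exact_mod_cast hL
  set sc : (Fin N → ℤ) → Fin N → ℝ := fun x c => (x c : ℝ) / L with hsc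
  have habs : ∀ a : ℤ, |(a : ℝ) / L| = (|a| : ℤ) / (L : ℝ) := by
    intro a; rw [abs_div, abs_of_pos hL', Int.cast_abs]
  have hbox : ∀ x : Fin N → ℤ, (∀ c, |x c| ≤ L) → ∀ c, |sc x c| ≤ 1 := by
    intro x hx c
    rw [hsc, habs, div_le_one hL']
    exact_mod_cast hx c
  have hdist : ∀ x z : Fin N → ℤ, (∀ c, |x c - z c| ≤ 1) →
      ∀ c, |sc x c - sc z c| ≤ (L : ℝ)⁻¹ := by
    intro x z h c
    have : sc x c - sc z c = ((x c - z c : ℤ) : ℝ) / L := by simp [hsc, sub_div]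
    rw [this, habs, inv_eq_one_div]
    gcongr
    exact_mod_cast h c
  obtain ⟨z, hz, h⟩ := exists_nonconstant_cell hL hL2 b χ hχ
    (fun i x => signOr (f i (sc x)) (charSign b (χ i) x)) (by
      intro i x hx c hc
      have h1 : |sc x c| = 1 := by rw [hsc, habs, hc, div_self hL'.ne']
      have h2 : sc (flip b (b c) x) = flip b (b c) (sc x) := by
        funext e; simp only [hsc, flip]; split_ifs <;> simp [neg_div]
      simp only
      rw [charSign_equivariant b hL (χ i) x hx c hc, h2, hodd i _ (hbox x hx) c h1]
      have h01 : ∀ a : ZMod 2, a = 0 ∨ a = 1 := by decide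
      rcases h01 (χ i (b c)) with h0 | h0
      · simp [h0]
      · rw [h0, if_neg one_ne_zero, signOr_neg])
  refine ⟨sc z, hbox z hz, fun i => ?_⟩
  obtain ⟨x, y, -, -, hxz, hyz, hne⟩ := h i
  obtain ⟨h1, h2⟩ := signOr_ne hne
  rcases h1 with h1 | h1 <;> rcases h2 with h2 | h2
  · exact ⟨sc x, sc x, hdist x z hxz, hdist x z hxz, h1, h2⟩
  · exact ⟨sc x, sc y, hdist x z hxz, hdist y z hyz, h1, h2⟩
  · exact ⟨sc y, sc x, hdist y z hyz, hdist x z hxz, h1, h2⟩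
  · exact ⟨sc y, sc y, hdist y z hyz, hdist y z hyz, h1, h2⟩

/-- A Borsuk–Ulam theorem on a product of balls, the antipodal points of whose boundaries are
identified. -/
theorem exists_common_zero {J : Type*} [Fintype J] [DecidableEq J] {N : ℕ} (b : Fin N → J)
    (χ : Fin N → J → ZMod 2)
    (hχ : ∀ i c : Fin N, i ≤ c → χ i (b c) = if b c = b i then 1 else 0)
    (f : Fin N → (Fin N → ℝ) → ℝ) (hf : ∀ i, Continuous (f i))
    (hodd : ∀ i x, (∀ c, |x c| ≤ 1) → ∀ c, |x c| = 1 →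
      f i (flip b (b c) x) = if χ i (b c) = 0 then f i x else -f i x) :
    ∃ x : Fin N → ℝ, (∀ c, |x c| ≤ 1) ∧ ∀ i, f i x = 0 := by
  have key : ∀ n : ℕ, ∃ z : Fin N → ℝ, (∀ c, |z c| ≤ 1) ∧ ∀ i, ∃ x y : Fin N → ℝ,
      (∀ c, |x c - z c| ≤ 1 / ((n : ℝ) + 1)) ∧ (∀ c, |y c - z c| ≤ 1 / ((n : ℝ) + 1)) ∧
      f i x ≤ 0 ∧ 0 ≤ f i y := by
    intro n
    obtain ⟨z, hz, h⟩ := exists_sign_change b χ hχ f hodd (L := 2 * (n + 1)) (by positivity)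
      (even_two_mul _)
    have hle : (((2 * (n + 1) : ℤ) : ℝ))⁻¹ ≤ 1 / ((n : ℝ) + 1) := by
      rw [inv_eq_one_div]
      push_cast
      gcongr
      linarith [(Nat.cast_nonneg n : (0 : ℝ) ≤ n)]
    refine ⟨z, hz, fun i => ?_⟩
    obtain ⟨x, y, hx, hy, h⟩ := h i
    exact ⟨x, y, fun c => (hx c).trans hle, fun c => (hy c).trans hle, h⟩
  choose z hz x y hx hy hfx hfy using key
  have hcpt : IsCompact (Set.Icc (fun _ => -1 : Fin N → ℝ) (fun _ => 1)) := isCompact_Icc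
  obtain ⟨a, ha, φ, hφ, hlim⟩ := hcpt.tendsto_subseq (x := z) (fun n =>
    ⟨fun c => (abs_le.1 (hz n c)).1, fun c => (abs_le.1 (hz n c)).2⟩)
  have hnear : ∀ u : ℕ → Fin N → ℝ, (∀ n c, |u n c - z n c| ≤ 1 / ((n : ℝ) + 1)) →
      Tendsto (fun n => u (φ n)) atTop (𝓝 a) := by
    intro u hu
    rw [tendsto_pi_nhds] at hlim ⊢
    intro c
    have h1 : Tendsto (fun n => u (φ n) c - z (φ n) c) atTop (𝓝 0) := by
      refine squeeze_zero_norm (fun n => by simpa using hu (φ n) c) ?_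
      simpa [Function.comp_def] using
        (tendsto_one_div_add_atTop_nhds_zero_nat (𝕜 := ℝ)).comp hφ.tendsto_atTop
    have h2 := h1.add (hlim c)
    simpa using h2
  refine ⟨a, fun c => abs_le.2 ⟨ha.1 c, ha.2 c⟩, fun i => le_antisymm ?_ ?_⟩
  · exact le_of_tendsto' (((hf i).tendsto a).comp (hnear (fun n => x n i) fun n => hx n i))
      fun n => hfx (φ n) i
  · exact ge_of_tendsto' (((hf i).tendsto a).comp (hnear (fun n => y n i) fun n => hy n i))
      fun n => hfy (φ n) i

theorem exists_common_zero_prod {n m : ℕ} (χ : Fin n → Fin m → Fin n → ZMod 2)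
    (hχ : ∀ j l j', j ≤ j' → χ j l j' = if j' = j then 1 else 0)
    (f : Fin n → Fin m → (Fin n → Fin m → ℝ) → ℝ) (hf : ∀ j l, Continuous (f j l))
    (hodd : ∀ j l x, (∀ a e, |x a e| ≤ 1) → ∀ a e, |x a e| = 1 →
      f j l (Function.update x a (-x a)) = if χ j l a = 0 then f j l x else -f j l x) :
    ∃ x : Fin n → Fin m → ℝ, (∀ a e, |x a e| ≤ 1) ∧ ∀ j l, f j l x = 0 := by
  set p : Fin (n * m) ≃ Fin n × Fin m := finProdFinEquiv.symm with hp
  set cur : (Fin (n * m) → ℝ) → Fin n → Fin m → ℝ := fun x a e => x (p.symm (a, e)) with hcur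
  have hcurc : Continuous cur := by fun_prop
  obtain ⟨x, hx, h⟩ := exists_common_zero (fun i => (p i).1) (fun i => χ (p i).1 (p i).2) (by
      intro i c hic
      apply hχ
      have hdiv : ∀ i, (p i).1 = i.divNat := fun i => rfl
      rw [hdiv, hdiv, Fin.le_def, Fin.coe_divNat, Fin.coe_divNat]
      exact Nat.div_le_div_right hic)
    (fun i x => f (p i).1 (p i).2 (cur x)) (fun i => (hf _ _).comp hcurc) (by
      intro i x hx c hc
      rw [← hodd _ _ (cur x) (fun a e => hx _) (p c).1 (p c).2 (by simpa [hcur] using hc)]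
      congr 1
      funext a e
      by_cases ha : a = (p c).1
      · subst ha; simp [hcur, flip]
      · simp [hcur, flip, ha])
  refine ⟨cur x, fun a e => hx _, fun j l => ?_⟩
  simpa using h (p.symm (j, l))

/-- The ball of the sup norm wrapped around the sphere. -/
def wrap {m : ℕ} (v : Fin m → ℝ) : Fin (m + 1) → ℝ := Fin.cons (1 - ‖v‖) v

theorem continuous_wrap {m : ℕ} : Continuous (wrap (m := m)) := by
  refine continuous_pi fun c => ?_
  refine Fin.cases ?_ (fun c => ?_) c
  · simp only [wrap, Fin.cons_zero]; fun_prop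
  · simp only [wrap, Fin.cons_succ]; fun_prop

theorem wrap_ne_zero {m : ℕ} (v : Fin m → ℝ) : wrap v ≠ 0 := by
  intro h
  have h0 := congrFun h 0
  have h1 : v = 0 := by funext c; simpa [wrap] using congrFun h c.succ
  simp [wrap, h1] at h0

theorem wrap_neg {m : ℕ} {v : Fin m → ℝ} (hv : ‖v‖ = 1) : wrap (-v) = -wrap v := by
  funext c
  refine Fin.cases ?_ (fun c => ?_) c <;> simp [wrap, hv]

/-- The vectors `wrap v` with `v` in the unit cube. -/
def shell (m : ℕ) : Set (Fin (m + 1) → ℝ) := wrap '' Set.Icc (fun _ => -1) (fun _ => 1)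

theorem isCompact_shell (m : ℕ) : IsCompact (shell m) := isCompact_Icc.image continuous_wrap

theorem ne_zero_of_mem_shell {m : ℕ} {v : Fin (m + 1) → ℝ} (hv : v ∈ shell m) : v ≠ 0 := by
  obtain ⟨x, -, rfl⟩ := hv
  exact wrap_ne_zero x

/-- Any `k` continuous equivariant functions on `n`-frames in `ℝ^(n + k)`, with values in `ℝ^n`,
vanish simultaneously on some orthogonal frame. -/
theorem exists_orthogonal_common_zero {n k m : ℕ} (hnk : n + k = m + 1)
    (g : Fin n → Fin k → (Fin n → Fin (m + 1) → ℝ) → ℝ) (hg : ∀ j l, Continuous (g j l))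
    (hodd : ∀ j l u a, g j l (Function.update u a (-u a)) =
      if a = j then -g j l u else g j l u) :
    ∃ u : Fin n → Fin (m + 1) → ℝ, (∀ j, u j ∈ shell m) ∧
      (∀ i j, i ≠ j → u i ⬝ᵥ u j = 0) ∧ ∀ j l, g j l u = 0 := by
  set U : (Fin n → Fin m → ℝ) → Fin n → Fin (m + 1) → ℝ := fun x j => wrap (x j) with hU
  have hUc : Continuous U := continuous_pi fun j => continuous_wrap.comp (continuous_apply j)
  have hUc' : ∀ j e, Continuous fun x => U x j e := fun j e => by fun_prop
  set f : Fin n → Fin m → (Fin n → Fin m → ℝ) → ℝ := fun j l x =>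
    if h : (l : ℕ) < k then g j ⟨l, h⟩ (U x)
    else if h : (l : ℕ) - k < j then U x j ⬝ᵥ U x ⟨l - k, h.trans j.2⟩ else 0 with hf
  set χ : Fin n → Fin m → Fin n → ZMod 2 := fun j l a =>
    if a = j ∨ (¬ (l : ℕ) < k ∧ (l : ℕ) - k < j ∧ (a : ℕ) = l - k) then 1 else 0 with hχ
  obtain ⟨x, hx, h⟩ := exists_common_zero_prod χ (by
      intro j l a hja
      have : ¬ (¬ (l : ℕ) < k ∧ (l : ℕ) - k < j ∧ (a : ℕ) = l - k) := by
        rw [Fin.le_def] at hja; omega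
      simp only [hχ, this, or_false]) f (by
      intro j l
      simp only [hf]
      split_ifs
      · exact (hg _ _).comp hUc
      · unfold dotProduct
        exact continuous_finsetSum _ fun e _ => (hUc' _ _).mul (hUc' _ _)
      · exact continuous_const) (by
      intro j l x hx a e hae
      have hnorm : ‖x a‖ = 1 := by
        refine le_antisymm ((pi_norm_le_iff_of_nonneg zero_le_one).2 fun c => hx a c) ?_
        rw [← hae]; exact norm_le_pi_norm (x a) e
      have hUx : U (Function.update x a (-x a)) = Function.update (U x) a (-U x a) := by
        funext c
        by_cases hc : c = a
        · subst hc; simp [hU, wrap_neg hnorm]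
        · simp [hU, Function.update_of_ne hc]
      simp only [hf, hUx, hodd]
      by_cases hl : (l : ℕ) < k
      · by_cases haj : a = j <;> simp [hχ, hl, haj]
      · simp only [hl, dif_neg, not_false_eq_true]
        by_cases hlj : (l : ℕ) - k < j
        · simp only [hlj, dif_pos]
          by_cases haj : a = j
          · subst haj
            have : (⟨l - k, hlj.trans a.2⟩ : Fin n) ≠ a := by
              intro h; have := congrArg Fin.val h; simp only at this; omega
            simp [hχ, Function.update_of_ne this]
          · by_cases hal : (a : ℕ) = l - k
            · have h1 : (⟨l - k, hlj.trans j.2⟩ : Fin n) = a := Fin.ext hal.symm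
              have h2 : χ j l a ≠ 0 := by simp [hχ, hl, hlj, hal]
              rw [if_neg h2, h1, Function.update_of_ne (Ne.symm haj)]
              simp
            · have h1 : (⟨l - k, hlj.trans j.2⟩ : Fin n) ≠ a := fun h => hal (by rw [← h])
              have h2 : χ j l a = 0 := by simp [hχ, haj, hal]
              rw [if_pos h2, Function.update_of_ne (Ne.symm haj), Function.update_of_ne h1]
        · simp [hlj])
  have horth : ∀ i j : Fin n, i < j → U x j ⬝ᵥ U x i = 0 := by
    intro i j hij
    rw [Fin.lt_def] at hij
    have := h j ⟨k + i, by omega⟩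
    simpa [hf, hij] using this
  refine ⟨U x, fun j => ⟨x j, ⟨fun c => (abs_le.1 (hx j c)).1, fun c => (abs_le.1 (hx j c)).2⟩,
    rfl⟩, ?_, ?_⟩
  · intro i j hij
    rcases lt_or_gt_of_ne hij with hlt | hlt
    · rw [dotProduct_comm]; exact horth i j hlt
    · exact horth j i hlt
  · intro j l
    have hj := j.2
    have := h j ⟨l, by omega⟩
    simpa [hf] using this

end

section

open Finset Filter Topology

/-- The minimizer of a strictly convex function over a compact convex set depends continuously on
parameters. -/
theorem exists_continuous_minimizer {X E : Type*} [TopologicalSpace X] [AddCommGroup E]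
    [Module ℝ E] [TopologicalSpace E] {K : Set E} (hK : IsCompact K)
    (hne : K.Nonempty) (q : X → E → ℝ) (hq : Continuous (Function.uncurry q))
    (hconv : ∀ x, StrictConvexOn ℝ K (q x)) :
    ∃ σ : X → E, Continuous σ ∧ ∀ x, σ x ∈ K ∧ IsMinOn (q x) K (σ x) := by
  have hex : ∀ x, ∃ y ∈ K, IsMinOn (q x) K y := fun x =>
    hK.exists_isMinOn hne (hq.comp (Continuous.prodMk_right x)).continuousOn
  choose σ hσK hσ using hex
  refine ⟨σ, continuous_iff_continuousAt.2 fun x => ?_, fun x => ⟨hσK x, hσ x⟩⟩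
  refine hK.tendsto_nhds_of_unique_mapClusterPt (Eventually.of_forall hσK) fun y hy hcl => ?_
  refine (hconv x).eq_of_isMinOn ?_ (hσ x) hy (hσK x)
  intro z hz
  by_contra hlt
  rw [Set.mem_ofPred_eq, not_le] at hlt
  have hopen : IsOpen {p : X × E | q p.1 z < q p.1 p.2} :=
    isOpen_lt (hq.comp (continuous_fst.prodMk continuous_const)) hq
  have hnhds : {p : X × E | q p.1 z < q p.1 p.2} ∈ 𝓝 (x, y) := hopen.mem_nhds hlt
  rw [nhds_prod_eq, mem_prod_iff] at hnhds
  obtain ⟨V, hV, W, hW, hVW⟩ := hnhds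
  obtain ⟨x', hx'W, hx'V⟩ := ((mapClusterPt_iff_frequently.1 hcl W hW).and_eventually hV).exists
  have h1 : q x' z < q x' (σ x') := hVW (Set.mk_mem_prod hx'V hx'W)
  exact absurd (hσ x' hz) (not_le.2 h1)

section Defect

variable {A ι κ : Type*} [Fintype A] [Fintype ι] [Fintype κ]

/-- How far the points `z a` and `z (β a)` are from having the same image under the functionals
`u j`. -/
def defect (β : A → A) (u : ι → κ → ℝ) (z : A → κ → ℝ) : ℝ :=
  ∑ a, ∑ j, (u j ⬝ᵥ (z a - z (β a))) ^ 2

/-- The squared Euclidean norm of a family of points. -/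
def normSq (z : A → κ → ℝ) : ℝ := ∑ a, ∑ c, z a c ^ 2

theorem defect_nonneg (β : A → A) (u : ι → κ → ℝ) (z : A → κ → ℝ) : 0 ≤ defect β u z :=
  sum_nonneg fun _ _ => sum_nonneg fun _ _ => sq_nonneg _

theorem defect_eq_zero {β : A → A} {u : ι → κ → ℝ} {z : A → κ → ℝ} :
    defect β u z = 0 ↔ ∀ a j, u j ⬝ᵥ z a = u j ⬝ᵥ z (β a) := by
  unfold defect
  rw [sum_eq_zero_iff_of_nonneg fun _ _ => sum_nonneg fun _ _ => sq_nonneg _]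
  simp only [mem_univ, true_imp_iff]
  refine forall_congr' fun a => ?_
  rw [sum_eq_zero_iff_of_nonneg fun _ _ => sq_nonneg _]
  simp [dotProduct_sub, sub_eq_zero]

theorem defect_update_neg [DecidableEq ι] (β : A → A) (u : ι → κ → ℝ) (z : A → κ → ℝ) (i : ι) :
    defect β (Function.update u i (-u i)) z = defect β u z := by
  refine sum_congr rfl fun a _ => sum_congr rfl fun j _ => ?_
  by_cases h : j = i
  · subst h; rw [Function.update_self, neg_dotProduct, neg_sq]
  · rw [Function.update_of_ne h]

theorem continuous_defect (β : A → A) :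
    Continuous fun p : (ι → κ → ℝ) × (A → κ → ℝ) => defect β p.1 p.2 := by
  unfold defect dotProduct
  simp only [Pi.sub_apply]
  fun_prop

theorem continuous_normSq : Continuous (normSq : (A → κ → ℝ) → ℝ) := by
  unfold normSq
  fun_prop

theorem sq_combination {s t : ℝ} (h : s + t = 1) (x y : ℝ) :
    (s * x + t * y) ^ 2 = s * x ^ 2 + t * y ^ 2 - s * t * (x - y) ^ 2 := by
  obtain rfl : t = 1 - s := by linarith
  ring

theorem defect_combination (β : A → A) (u : ι → κ → ℝ) (x y : A → κ → ℝ) {s t : ℝ}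
    (h : s + t = 1) :
    defect β u (s • x + t • y) =
      s * defect β u x + t * defect β u y - s * t * defect β u (x - y) := by
  simp only [defect, mul_sum, ← sum_add_distrib, ← sum_sub_distrib]
  refine sum_congr rfl fun a _ => sum_congr rfl fun j _ => ?_
  have h1 : u j ⬝ᵥ ((s • x + t • y) a - (s • x + t • y) (β a)) =
      s * (u j ⬝ᵥ (x a - x (β a))) + t * (u j ⬝ᵥ (y a - y (β a))) := by
    simp only [Pi.add_apply, Pi.smul_apply, dotProduct_sub, dotProduct_add, dotProduct_smul,
      smul_eq_mul]
    ring
  have h2 : u j ⬝ᵥ ((x - y) a - (x - y) (β a)) =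
      u j ⬝ᵥ (x a - x (β a)) - u j ⬝ᵥ (y a - y (β a)) := by
    simp only [Pi.sub_apply, dotProduct_sub]
    ring
  rw [h1, h2, sq_combination h]

theorem normSq_combination (x y : A → κ → ℝ) {s t : ℝ} (h : s + t = 1) :
    normSq (s • x + t • y) = s * normSq x + t * normSq y - s * t * normSq (x - y) := by
  simp only [normSq, mul_sum, ← sum_add_distrib, ← sum_sub_distrib]
  refine sum_congr rfl fun a _ => sum_congr rfl fun c _ => ?_
  simp [sq_combination h]

theorem normSq_pos {z : A → κ → ℝ} (hz : z ≠ 0) : 0 < normSq z := by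
  refine lt_of_le_of_ne (sum_nonneg fun _ _ => sum_nonneg fun _ _ => sq_nonneg _) fun h => hz ?_
  funext a c
  have h1 := (sum_eq_zero_iff_of_nonneg
    fun _ _ => sum_nonneg fun _ _ => sq_nonneg _).1 h.symm a (mem_univ a)
  have h2 := (sum_eq_zero_iff_of_nonneg fun _ _ => sq_nonneg _).1 h1 c (mem_univ c)
  simpa using h2

theorem strictConvexOn_defect_add_normSq (β : A → A) (u : ι → κ → ℝ) {ε : ℝ} (hε : 0 < ε)
    {K : Set (A → κ → ℝ)} (hK : Convex ℝ K) :
    StrictConvexOn ℝ K fun z => defect β u z + ε * normSq z := by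
  refine ⟨hK, fun x _ y _ hxy s t hs ht hst => ?_⟩
  simp only [smul_eq_mul]
  rw [defect_combination β u x y hst, normSq_combination x y hst]
  have h1 := defect_nonneg β u (x - y)
  have h2 := normSq_pos (sub_ne_zero.2 hxy)
  have h3 : 0 ≤ s * t * defect β u (x - y) := by positivity
  have h4 : 0 < ε * (s * t * normSq (x - y)) := by positivity
  nlinarith

end Defect

/-- Compact convex sets, grouped into `k + 1` families each of which has a common point in every
projection to `ℝ^n`, all have a common point in some orthogonal projection to `ℝ^n`, provided that
they live in `ℝ^(n + k)`. -/
theorem exists_common_projection {n k m : ℕ} (hnk : n + k = m + 1) {A : Type*} [Fintype A]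
    (K : A → Set (Fin (m + 1) → ℝ)) (hcpt : ∀ a, IsCompact (K a)) (hconv : ∀ a, Convex ℝ (K a))
    (β : A → A) (p : Fin (k + 1) → A)
    (hproj : ∀ u : Fin n → Fin (m + 1) → ℝ, ∃ z : A → Fin (m + 1) → ℝ, (∀ a, z a ∈ K a) ∧
      ∀ a j, u j ⬝ᵥ z a = u j ⬝ᵥ z (β a)) :
    ∃ u : Fin n → Fin (m + 1) → ℝ, (∀ j, u j ≠ 0) ∧ (∀ i j, i ≠ j → u i ⬝ᵥ u j = 0) ∧
      ∃ z : A → Fin (m + 1) → ℝ, (∀ a, z a ∈ K a) ∧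
        (∀ a j, u j ⬝ᵥ z a = u j ⬝ᵥ z (β a)) ∧
        ∀ l j, u j ⬝ᵥ z (p l) = u j ⬝ᵥ z (p 0) := by
  set KK : Set (A → Fin (m + 1) → ℝ) := Set.univ.pi K
  have hKKc : IsCompact KK := isCompact_univ_pi hcpt
  have hKKv : Convex ℝ KK := convex_pi fun a _ => hconv a
  have hKKn : KK.Nonempty := by
    obtain ⟨z, hz, -⟩ := hproj 0
    exact ⟨z, fun a _ => hz a⟩
  obtain ⟨B, hB⟩ := (hKKc.image continuous_normSq).bddAbove
  have hB' : ∀ z ∈ KK, normSq z ≤ B := fun z hz => hB (Set.mem_image_of_mem _ hz)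
  have approx : ∀ N : ℕ, ∃ u : Fin n → Fin (m + 1) → ℝ, (∀ j, u j ∈ shell m) ∧
      (∀ i j, i ≠ j → u i ⬝ᵥ u j = 0) ∧ ∃ z ∈ KK,
        defect β u z ≤ 1 / ((N : ℝ) + 1) * B ∧
        ∀ (l : Fin k) j, u j ⬝ᵥ z (p l.succ) = u j ⬝ᵥ z (p 0) := by
    intro N
    have hε : (0 : ℝ) < 1 / ((N : ℝ) + 1) := by positivity
    set ε : ℝ := 1 / ((N : ℝ) + 1)
    obtain ⟨σ, hσc, hσ⟩ := exists_continuous_minimizer hKKc hKKn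
      (fun (u : Fin n → Fin (m + 1) → ℝ) z => defect β u z + ε * normSq z)
      ((continuous_defect β).add (continuous_const.mul (continuous_normSq.comp continuous_snd)))
      (fun u => strictConvexOn_defect_add_normSq β u hε hKKv)
    have hσe : ∀ u a, σ (Function.update u a (-u a)) = σ u := by
      intro u a
      refine (strictConvexOn_defect_add_normSq β u hε hKKv).eq_of_isMinOn ?_ (hσ u).2
        (hσ _).1 (hσ u).1
      simpa only [defect_update_neg] using (hσ (Function.update u a (-u a))).2
    obtain ⟨u, hu, horth, hg⟩ := exists_orthogonal_common_zero hnk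
      (fun j l u => u j ⬝ᵥ (σ u (p l.succ) - σ u (p 0))) (by
        intro j l
        unfold dotProduct
        simp only [Pi.sub_apply]
        fun_prop) (by
        intro j l u a
        simp only [hσe]
        split_ifs with h
        · subst h; rw [Function.update_self, neg_dotProduct]
        · rw [Function.update_of_ne (Ne.symm h)])
    refine ⟨u, hu, horth, σ u, (hσ u).1, ?_, fun l j => ?_⟩
    · obtain ⟨z, hz, hzu⟩ := hproj u
      have hzK : z ∈ KK := fun a _ => hz a
      have h1 : defect β u (σ u) + ε * normSq (σ u) ≤ defect β u z + ε * normSq z :=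
        (hσ u).2 hzK
      rw [defect_eq_zero.2 hzu, zero_add] at h1
      have h2 : 0 ≤ normSq (σ u) := sum_nonneg fun _ _ => sum_nonneg fun _ _ => sq_nonneg _
      have h3 : ε * normSq z ≤ ε * B := mul_le_mul_of_nonneg_left (hB' z hzK) hε.le
      have h4 : 0 ≤ ε * normSq (σ u) := by positivity
      linarith
    · have := hg j l
      rwa [dotProduct_sub, sub_eq_zero] at this
  choose u hu horth z hz hdef hgz using approx
  have hcomp : IsCompact ((Set.univ.pi fun _ : Fin n => shell m) ×ˢ KK) :=
    (isCompact_univ_pi fun _ => isCompact_shell m).prod hKKc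
  obtain ⟨⟨u₀, z₀⟩, hmem, φ, hφ, hlim⟩ := hcomp.tendsto_subseq (x := fun N => (u N, z N))
    (fun N => ⟨fun j _ => hu N j, hz N⟩)
  have hdot : ∀ j a, Tendsto (fun N => u (φ N) j ⬝ᵥ z (φ N) a) atTop (𝓝 (u₀ j ⬝ᵥ z₀ a)) := by
    intro j a
    have : Continuous fun q : (Fin n → Fin (m + 1) → ℝ) × (A → Fin (m + 1) → ℝ) =>
        q.1 j ⬝ᵥ q.2 a := by unfold dotProduct; fun_prop
    exact (this.tendsto (u₀, z₀)).comp hlim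
  refine ⟨u₀, fun j => ne_zero_of_mem_shell (hmem.1 j trivial), fun i j hij => ?_, z₀,
    fun a => hmem.2 a trivial, defect_eq_zero.1 (le_antisymm ?_ (defect_nonneg _ _ _)), ?_⟩
  · have hc : Continuous fun q : (Fin n → Fin (m + 1) → ℝ) × (A → Fin (m + 1) → ℝ) =>
        q.1 i ⬝ᵥ q.1 j := by unfold dotProduct; fun_prop
    refine tendsto_nhds_unique ((hc.tendsto (u₀, z₀)).comp hlim) ?_
    refine tendsto_const_nhds.congr fun N => (horth (φ N) i j hij).symm
  · have h1 := ((continuous_defect (ι := Fin n) β).tendsto (u₀, z₀)).comp hlim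
    have h2 : Tendsto (fun N => 1 / ((φ N : ℝ) + 1) * B) atTop (𝓝 (0 * B)) :=
      ((tendsto_one_div_add_atTop_nhds_zero_nat (𝕜 := ℝ)).comp hφ.tendsto_atTop).mul_const B
    rw [zero_mul] at h2
    exact le_of_tendsto_of_tendsto' h1 h2 fun N => hdef (φ N)
  · intro l j
    refine Fin.cases rfl (fun l => ?_) l
    exact tendsto_nhds_unique (hdot j (p l.succ))
      ((hdot j (p 0)).congr fun N => (hgz (φ N) l j).symm)

/-- **Centerpoint theorem**: the images under a linear map to `ℝ^n` of the convex hulls of all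
subsets of `S` missing fewer than `r` points have a common point. -/
theorem exists_centerpoint {n : ℕ} {E : Type*} [AddCommGroup E] [Module ℝ E]
    (S : Finset E) {r : ℕ} (hr : (n + 1) * (r - 1) < #S)
    (g : E →ₗ[ℝ] Fin n → ℝ) :
    ∃ y : Fin n → ℝ, ∀ T ⊆ S, #S < #T + r → ∃ x ∈ convexHull ℝ (T : Set E), g x = y := by
  classical
  have h := Convex.helly_theorem' (𝕜 := ℝ) (F := fun T : Finset E => g '' convexHull ℝ (T : Set E))
    (s := S.powerset.filter fun T => #S < #T + r)
    (fun T _ => (convex_convexHull ℝ _).linear_image g) (by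
      intro I hI hcard
      rw [Module.finrank_fin_fun] at hcard
      have hbad : #(I.biUnion fun T => S \ T) < #S := by
        refine lt_of_le_of_lt (card_biUnion_le_card_mul I _ (r - 1) fun T hT => ?_)
          ((Nat.mul_le_mul_right _ hcard).trans_lt hr)
        obtain ⟨h1, h2⟩ := mem_filter.1 (hI hT)
        rw [card_sdiff_of_subset (mem_powerset.1 h1)]
        omega
      obtain ⟨x, hxS, hx⟩ := exists_mem_notMem_of_card_lt_card hbad
      refine ⟨g x, Set.mem_iInter₂.2 fun T hT => Set.mem_image_of_mem _ (subset_convexHull ℝ _ ?_)⟩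
      by_contra hxT
      exact hx (mem_biUnion.2 ⟨T, hT, mem_sdiff.2 ⟨hxS, hxT⟩⟩))
  obtain ⟨y, hy⟩ := h
  refine ⟨y, fun T hT hc => ?_⟩
  exact Set.mem_iInter₂.1 hy T (mem_filter.2 ⟨mem_powerset.2 hT, hc⟩)

/-- Some `k`-dimensional affine subspace of `ℝ^(n + k)` meets the convex hull of every subset of
any of the given sets that misses fewer than `r` of its points. -/
theorem exists_transversal {n k m : ℕ} (hnk : n + k = m + 1) {r : ℕ} (hr : 0 < r)
    (S : Fin (k + 1) → Finset (Fin (m + 1) → ℝ)) (hS : ∀ i, (n + 1) * (r - 1) < #(S i)) :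
    ∃ F : AffineSubspace ℝ (Fin (m + 1) → ℝ),
      (F : Set (Fin (m + 1) → ℝ)).Nonempty ∧ Module.finrank ℝ F.direction = k ∧
      ∀ i, ∀ T ⊆ S i, #(S i) < #T + r →
        ∃ x ∈ convexHull ℝ (T : Set (Fin (m + 1) → ℝ)), x ∈ F := by
  classical
  let A := Σ i : Fin (k + 1), {T // T ∈ (S i).powerset.filter fun T => #(S i) < #T + r}
  have hmem : ∀ i, S i ∈ (S i).powerset.filter fun T => #(S i) < #T + r := fun i =>
    mem_filter.2 ⟨mem_powerset_self _, by omega⟩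
  let p : Fin (k + 1) → A := fun i => ⟨i, S i, hmem i⟩
  obtain ⟨u, hu0, horth, z, hzK, hzβ, hzp⟩ := exists_common_projection hnk
    (fun a : A => convexHull ℝ (a.2.1 : Set (Fin (m + 1) → ℝ)))
    (fun a => a.2.1.finite_toSet.isCompact_convexHull ℝ) (fun a => convex_convexHull ℝ _)
    (fun a => p a.1) p (by
      intro u
      have hc := fun i => exists_centerpoint (S i) (hS i) (Matrix.mulVecLin (Matrix.of u))
      choose y hy using hc
      have hy' : ∀ a : A, ∃ x ∈ convexHull ℝ (a.2.1 : Set (Fin (m + 1) → ℝ)),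
          Matrix.mulVecLin (Matrix.of u) x = y a.1 := fun a =>
        hy a.1 a.2.1 (mem_powerset.1 (mem_filter.1 a.2.2).1) (mem_filter.1 a.2.2).2
      choose z hz hzy using hy'
      refine ⟨z, hz, fun a j => ?_⟩
      exact congrFun ((hzy a).trans (hzy (p a.1)).symm) j)
  set g : (Fin (m + 1) → ℝ) →ₗ[ℝ] Fin n → ℝ := Matrix.mulVecLin (Matrix.of u) with hg
  have hind : LinearIndependent ℝ u := by
    rw [Fintype.linearIndependent_iff]
    intro c hc j
    have h1 : (∑ i, c i • u i) ⬝ᵥ u j = 0 := by rw [hc, zero_dotProduct]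
    rw [sum_dotProduct, Fintype.sum_eq_single j fun i hij => by
      rw [smul_dotProduct, horth i j hij, smul_zero], smul_dotProduct, smul_eq_mul] at h1
    exact (mul_eq_zero.1 h1).resolve_right fun h => hu0 j (dotProduct_self_eq_zero.1 h)
  have hrank : Module.finrank ℝ (LinearMap.range g) = n := by
    have := LinearIndependent.rank_matrix (M := Matrix.of u) hind
    rwa [Fintype.card_fin] at this
  have hker := g.finrank_range_add_finrank_ker
  rw [hrank, Module.finrank_fin_fun] at hker
  refine ⟨AffineSubspace.mk' (z (p 0)) (LinearMap.ker g), ⟨_, AffineSubspace.self_mem_mk' _ _⟩,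
    ?_, ?_⟩
  · rw [AffineSubspace.direction_mk']; omega
  · intro i T hT hTc
    let a : A := ⟨i, T, mem_filter.2 ⟨mem_powerset.2 hT, hTc⟩⟩
    refine ⟨z a, hzK a, ?_⟩
    rw [AffineSubspace.mem_mk', vsub_eq_sub, LinearMap.mem_ker, map_sub, sub_eq_zero]
    funext j
    exact (hzβ a j).trans (hzp i j)

end

end CenterTransversal

/-- The Center Transversal Theorem: given `k + 1` finite point sets in ℝ^d
(`0 ≤ k < d`), each of at least `m` points, there is a `k`-dimensional affine
subspace `F` such that every closed halfspace containing `F` contains at least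
`⌈m / (d − k + 1)⌉` points of each set. -/
theorem center_transversal (d k : ℕ) (hk : k < d) (m : ℕ)
    (S : Fin (k + 1) → Finset (Fin d → ℝ)) (hS : ∀ i, m ≤ (S i).card) :
    ∃ F : AffineSubspace ℝ (Fin d → ℝ),
      (F : Set (Fin d → ℝ)).Nonempty ∧ Module.finrank ℝ F.direction = k ∧
      ∀ f : (Fin d → ℝ) →ᵃ[ℝ] ℝ, f.linear ≠ 0 →
        (∀ x ∈ F, 0 ≤ f x) →
        ∀ i, (m + (d - k)) / (d - k + 1) ≤
          {x ∈ (S i : Set (Fin d → ℝ)) | 0 ≤ f x}.ncard := by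
  classical
  obtain ⟨d, rfl⟩ : ∃ d', d = d' + 1 := ⟨d - 1, by omega⟩
  set n := d + 1 - k with hn
  rcases Nat.eq_zero_or_pos m with rfl | hm
  · obtain ⟨F, hF, hFk, -⟩ :=
      CenterTransversal.exists_transversal (n := n) (k := k) (m := d) (by omega) one_pos
      (fun _ => {0}) (by simp)
    refine ⟨F, hF, hFk, fun f _ _ i => ?_⟩
    rw [zero_add, Nat.div_eq_of_lt (Nat.lt_succ_self n)]
    exact Nat.zero_le _
  set r := (m + n) / (n + 1) with hr
  have hr0 : 0 < r := Nat.div_pos (by omega) (by omega)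
  have hrm : (n + 1) * (r - 1) < m := by
    have h1 : (n + 1) * r ≤ m + n := Nat.mul_div_le _ _
    rw [Nat.mul_sub, mul_one]
    omega
  obtain ⟨F, hF, hFk, hFT⟩ :=
      CenterTransversal.exists_transversal (n := n) (k := k) (m := d) (by omega) hr0 S
    (fun i => hrm.trans_le (hS i))
  refine ⟨F, hF, hFk, fun f _ hf i => ?_⟩
  have hset : {x ∈ (S i : Set (Fin (d + 1) → ℝ)) | 0 ≤ f x} =
      ((S i).filter fun x => 0 ≤ f x : Finset (Fin (d + 1) → ℝ)) := by ext; simp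
  rw [hset, Set.ncard_coe_finset]
  by_contra! hlt
  obtain ⟨x, hxT, hxF⟩ := hFT i ((S i).filter fun x => ¬ 0 ≤ f x) (Finset.filter_subset _ _) (by
    have := Finset.card_filter_add_card_filter_not (s := S i) fun x => 0 ≤ f x
    omega)
  have hsub : convexHull ℝ (((S i).filter fun x => ¬ 0 ≤ f x : Finset (Fin (d + 1) → ℝ)) :
      Set (Fin (d + 1) → ℝ)) ⊆ f ⁻¹' Set.Iio 0 := by
    refine convexHull_min (fun y hy => ?_) ((convex_Iio 0).affine_preimage f)
    simpa using (Finset.mem_filter.1 (Finset.mem_coe.1 hy)).2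
  exact absurd (hf x hxF) (not_le.2 (hsub hxT))
end
end

section
/- Let 0 ≤ k < d be integers, let X be a finite set of n points in ℝ^d, let ε > 0, and let S ⊆ X be an ε-approximation of X for the range space of closed double wedges with one vertical boundary. Then for every k-dimensional affine subspace F of ℝ^d, | depth_S(F)/|S| − depth_X(F)/n | ≤ ε, where depth_Y(F) denotes the regression depth of F with respect to Y. -/
noncomputable section

/-- Families of natural numbers that are pointwise `ε`-close after normalization have
`ε`-close normalized minima. -/
lemma abs_iInf_div_sub_iInf_div_le {ι : Type*} (a b : ι → ℕ) {s t ε : ℝ}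
    (hs : 0 ≤ s) (ht : 0 ≤ t) (hε : 0 ≤ ε)
    (hab : ∀ i, |(a i : ℝ) / s - (b i : ℝ) / t| ≤ ε) :
    |((⨅ i, a i : ℕ) : ℝ) / s - ((⨅ i, b i : ℕ) : ℝ) / t| ≤ ε := by
  rcases isEmpty_or_nonempty ι with hι | hι
  · simpa [Nat.iInf_of_empty] using hε
  · obtain ⟨i, hi⟩ : ∃ i, a i = ⨅ i, a i := Nat.sInf_mem (Set.range_nonempty a)
    obtain ⟨j, hj⟩ : ∃ j, b j = ⨅ j, b j := Nat.sInf_mem (Set.range_nonempty b)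
    have hbi : ((⨅ j, b j : ℕ) : ℝ) / t ≤ b i / t := by
      gcongr
      exact Nat.sInf_le (Set.mem_range_self i)
    have haj : ((⨅ i, a i : ℕ) : ℝ) / s ≤ a j / s := by
      gcongr
      exact Nat.sInf_le (Set.mem_range_self j)
    have hi' := abs_le.1 (hab i)
    have hj' := abs_le.1 (hab j)
    rw [hi] at hi'
    rw [hj] at hj'
    exact abs_le.2 ⟨by linarith, by linarith⟩

/-- Regression depth as an infimum over the pairs of functionals bounding a double wedge. -/
lemma regDepth_eq_iInf {k m : ℕ} (F : AffineSubspace ℝ ((Fin k → ℝ) × (Fin m → ℝ)))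
    (X : Finset ((Fin k → ℝ) × (Fin m → ℝ))) :
    regDepth F X =
      ⨅ p : {p : (((Fin k → ℝ) × (Fin m → ℝ)) →ᵃ[ℝ] ℝ) × ((Fin k → ℝ) →ᵃ[ℝ] ℝ) //
          p.1.linear ≠ 0 ∧ (∀ x ∈ F, p.1 x = 0) ∧ p.2.linear ≠ 0},
        {x ∈ (X : Set ((Fin k → ℝ) × (Fin m → ℝ))) | p.1.1 x * p.1.2 x.1 ≤ 0}.ncard := by
  unfold regDepth iInf
  congr 1
  ext n
  constructor
  · rintro ⟨f, hf, hfF, h, hh, rfl⟩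
    exact ⟨⟨(f, h), hf, hfF, hh⟩, rfl⟩
  · rintro ⟨⟨⟨f, h⟩, hf, hfF, hh⟩, rfl⟩
    exact ⟨f, hf, hfF, h, hh, rfl⟩

/-- If `S ⊆ X` is an ε-approximation of `X` for the range space of closed double
wedges with one vertical boundary, then for every `k`-dimensional affine subspace
`F` the normalized regression depths of `F` in `S` and in `X` differ by at most ε. -/
theorem depth_eps_approximation (d k : ℕ) (hk : k < d)
    (X S : Finset ((Fin k → ℝ) × (Fin (d - k) → ℝ))) (hSX : S ⊆ X)
    (ε : ℝ) (hε : 0 < ε)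
    (happrox : ∀ f : ((Fin k → ℝ) × (Fin (d - k) → ℝ)) →ᵃ[ℝ] ℝ, f.linear ≠ 0 →
      ∀ h : (Fin k → ℝ) →ᵃ[ℝ] ℝ, h.linear ≠ 0 →
        |({x ∈ (S : Set ((Fin k → ℝ) × (Fin (d - k) → ℝ))) | f x * h x.1 ≤ 0}.ncard : ℝ)
            / S.card -
          ({x ∈ (X : Set ((Fin k → ℝ) × (Fin (d - k) → ℝ))) | f x * h x.1 ≤ 0}.ncard : ℝ)
            / X.card| ≤ ε) :
    ∀ F : AffineSubspace ℝ ((Fin k → ℝ) × (Fin (d - k) → ℝ)), IsFlatOfDim k F →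
      |(regDepth F S : ℝ) / S.card - (regDepth F X : ℝ) / X.card| ≤ ε := by
  intro F _
  rw [regDepth_eq_iInf, regDepth_eq_iInf]
  exact abs_iInf_div_sub_iInf_div_le _ _ (Nat.cast_nonneg _) (Nat.cast_nonneg _) hε.le
    fun p => happrox p.1.1 p.2.1 p.1.2 p.2.2.2
end
end

section
/- Let 0 ≤ k < d be integers, let X be a finite set of n points in ℝ^d, let ε > 0, and let S ⊆ X be an ε-approximation of X for the range space of closed double wedges with one vertical boundary. Suppose some k-dimensional affine subspace F* of ℝ^d has regression depth c·n with respect to X, and let F be a k-dimensional affine subspace maximizing regression depth with respect to S. Then the regression depth of F with respect to X is at least (c − 2ε)·n. -/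
noncomputable section

/-- A flat of dimension less than `k + m` lies in a hyperplane. -/
lemma IsFlatOfDim.exists_vanishing {k m j : ℕ} (hj : j < k + m)
    {F : AffineSubspace ℝ ((Fin k → ℝ) × (Fin m → ℝ))} (hF : IsFlatOfDim j F) :
    ∃ f : ((Fin k → ℝ) × (Fin m → ℝ)) →ᵃ[ℝ] ℝ, f.linear ≠ 0 ∧ ∀ x ∈ F, f x = 0 := by
  obtain ⟨⟨p, hp⟩, hdim⟩ := hF
  have hlt : F.direction < ⊤ := by
    rw [lt_top_iff_ne_top]
    intro htop
    rw [htop, finrank_top, Module.finrank_prod] at hdim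
    simp only [Module.finrank_fin_fun] at hdim
    omega
  obtain ⟨φ, hφ, hker⟩ := Submodule.exists_le_ker_of_lt_top _ hlt
  refine ⟨φ.toAffineMap - AffineMap.const ℝ _ (φ p), by simpa using hφ, fun x hx => ?_⟩
  have hmem : φ (x - p) = 0 := hker (AffineSubspace.vsub_mem_direction hx hp)
  simpa using hmem

/-- The depth is at most the number of points in any admissible double wedge. -/
lemma regDepth_le_ncard {k m : ℕ} {F : AffineSubspace ℝ ((Fin k → ℝ) × (Fin m → ℝ))}
    (X : Finset ((Fin k → ℝ) × (Fin m → ℝ)))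
    {f : ((Fin k → ℝ) × (Fin m → ℝ)) →ᵃ[ℝ] ℝ} (hf : f.linear ≠ 0) (hfF : ∀ x ∈ F, f x = 0)
    {h : (Fin k → ℝ) →ᵃ[ℝ] ℝ} (hh : h.linear ≠ 0) :
    regDepth F X ≤
      {x ∈ (X : Set ((Fin k → ℝ) × (Fin m → ℝ))) | f x * h x.1 ≤ 0}.ncard :=
  Nat.sInf_le ⟨f, hf, hfF, h, hh, rfl⟩

/-- The depth is attained as soon as there is an admissible double wedge. -/
lemma exists_ncard_eq_regDepth {k m : ℕ} {F : AffineSubspace ℝ ((Fin k → ℝ) × (Fin m → ℝ))}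
    (X : Finset ((Fin k → ℝ) × (Fin m → ℝ)))
    (hF : ∃ f : ((Fin k → ℝ) × (Fin m → ℝ)) →ᵃ[ℝ] ℝ, f.linear ≠ 0 ∧ ∀ x ∈ F, f x = 0)
    (hvert : ∃ h : (Fin k → ℝ) →ᵃ[ℝ] ℝ, h.linear ≠ 0) :
    ∃ f : ((Fin k → ℝ) × (Fin m → ℝ)) →ᵃ[ℝ] ℝ, f.linear ≠ 0 ∧ (∀ x ∈ F, f x = 0) ∧
      ∃ h : (Fin k → ℝ) →ᵃ[ℝ] ℝ, h.linear ≠ 0 ∧ regDepth F X =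
        {x ∈ (X : Set ((Fin k → ℝ) × (Fin m → ℝ))) | f x * h x.1 ≤ 0}.ncard := by
  obtain ⟨f, hf, hfF⟩ := hF
  obtain ⟨h, hh⟩ := hvert
  exact Nat.sInf_mem (s := { n : ℕ | ∃ f : ((Fin k → ℝ) × (Fin m → ℝ)) →ᵃ[ℝ] ℝ, f.linear ≠ 0 ∧
    (∀ x ∈ F, f x = 0) ∧ ∃ h : (Fin k → ℝ) →ᵃ[ℝ] ℝ, h.linear ≠ 0 ∧
      n = {x ∈ (X : Set ((Fin k → ℝ) × (Fin m → ℝ))) | f x * h x.1 ≤ 0}.ncard })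
    ⟨_, f, hf, hfF, h, hh, rfl⟩

/-- Without vertical functionals the depth is zero. -/
lemma regDepth_eq_zero_of_not_exists {k m : ℕ}
    (F : AffineSubspace ℝ ((Fin k → ℝ) × (Fin m → ℝ)))
    (X : Finset ((Fin k → ℝ) × (Fin m → ℝ)))
    (hvert : ¬ ∃ h : (Fin k → ℝ) →ᵃ[ℝ] ℝ, h.linear ≠ 0) : regDepth F X = 0 :=
  Nat.sInf_eq_zero.mpr <| Or.inr <| Set.eq_empty_of_forall_notMem
    fun _ ⟨_, _, _, h, hh, _⟩ => hvert ⟨h, hh⟩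

/-- If `S ⊆ X` is an ε-approximation of `X` for closed double wedges with one
vertical boundary, some `k`-flat `F*` has regression depth `c·n` with respect to
`X` (where `n = |X|`), and `F` is a `k`-flat maximizing regression depth with
respect to `S`, then `F` has regression depth at least `(c − 2ε)·n` w.r.t. `X`. -/
theorem approx_deepest_flat (d k : ℕ) (hk : k < d)
    (X S : Finset ((Fin k → ℝ) × (Fin (d - k) → ℝ))) (hSX : S ⊆ X)
    (ε : ℝ) (hε : 0 < ε)
    (happrox : ∀ f : ((Fin k → ℝ) × (Fin (d - k) → ℝ)) →ᵃ[ℝ] ℝ, f.linear ≠ 0 →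
      ∀ h : (Fin k → ℝ) →ᵃ[ℝ] ℝ, h.linear ≠ 0 →
        |({x ∈ (S : Set ((Fin k → ℝ) × (Fin (d - k) → ℝ))) | f x * h x.1 ≤ 0}.ncard : ℝ)
            / S.card -
          ({x ∈ (X : Set ((Fin k → ℝ) × (Fin (d - k) → ℝ))) | f x * h x.1 ≤ 0}.ncard : ℝ)
            / X.card| ≤ ε)
    (c : ℝ) (Fstar : AffineSubspace ℝ ((Fin k → ℝ) × (Fin (d - k) → ℝ)))
    (hFstar : IsFlatOfDim k Fstar) (hFstarDepth : (regDepth Fstar X : ℝ) = c * X.card)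
    (F : AffineSubspace ℝ ((Fin k → ℝ) × (Fin (d - k) → ℝ))) (hF : IsFlatOfDim k F)
    (hFmax : ∀ F' : AffineSubspace ℝ ((Fin k → ℝ) × (Fin (d - k) → ℝ)),
      IsFlatOfDim k F' → regDepth F' S ≤ regDepth F S) :
    (c - 2 * ε) * X.card ≤ (regDepth F X : ℝ) := by
  have hdim : k < k + (d - k) := by omega
  have hn : (0 : ℝ) ≤ X.card := Nat.cast_nonneg _
  by_cases hvert : ∃ h : (Fin k → ℝ) →ᵃ[ℝ] ℝ, h.linear ≠ 0
  · obtain ⟨f, hf, hfF, h, hh, hFX⟩ :=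
      exists_ncard_eq_regDepth X (hF.exists_vanishing hdim) hvert
    obtain ⟨f', hf', hfF', h', hh', hFS⟩ :=
      exists_ncard_eq_regDepth S (hFstar.exists_vanishing hdim) hvert
    have hupper := (abs_le.mp (happrox f hf h hh)).2
    have hlower := (abs_le.mp (happrox f' hf' h' hh')).1
    rw [← hFX] at hupper
    rw [← hFS] at hlower
    have hS : (regDepth Fstar S : ℝ) / S.card ≤
        ({x ∈ (S : Set ((Fin k → ℝ) × (Fin (d - k) → ℝ))) | f x * h x.1 ≤ 0}.ncard : ℝ)
          / S.card := by
      gcongr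
      exact (hFmax Fstar hFstar).trans (regDepth_le_ncard S hf hfF hh)
    have hX : (regDepth Fstar X : ℝ) / X.card ≤
        ({x ∈ (X : Set ((Fin k → ℝ) × (Fin (d - k) → ℝ))) | f' x * h' x.1 ≤ 0}.ncard : ℝ)
          / X.card := by
      gcongr
      exact regDepth_le_ncard X hf' hfF' hh'
    rcases hn.eq_or_lt with hzero | hpos
    · simp [← hzero]
    · rw [hFstarDepth, mul_div_cancel_right₀ _ hpos.ne'] at hX
      rw [← le_div_iff₀ hpos]
      linarith
  · rw [regDepth_eq_zero_of_not_exists _ _ hvert, Nat.cast_zero] at hFstarDepth ⊢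
    nlinarith [mul_nonneg hε.le hn]
end
end
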